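/- Let d ≥ 1 and let u : [0,∞) × ℝ^d → ℝ^d be smooth, ℤ^d-periodic in x, bounded on [0,T] × ℝ^d for every T > 0, and divergence-free in x. Suppose u is relaxation enhancing in the following sense: there is a function τ : (0,∞) → (0,∞) with ν·τ(ν) → 0 as ν → 0⁺ such that for every ν > 0, every s ≥ 0, and every smooth, ℤ^d-periodic-in-x, mean-zero solution θ of ∂_t θ − νΔθ + u·∇θ = 0 on [s,∞) × ℝ^d, one has ‖θ(s+τ(ν),·)‖_{L²} ≤ (1/2)‖θ(s,·)‖_{L²}. Assume moreover that the function f(a) := sup_{0 < b ≤ a} b·τ(b) is a strictly increasing continuous bijection from (0,∞) onto (0,∞). Then the diffeomorphism σ in the total dissipation theorem can be chosen so that additionally, for all t ∈ [0,1), σ'(t) ≤ 2(|log₂(1−t)| + 1) / f⁻¹( (1−t) / (4(|log₂(1−t)| + 1)) ). -/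

import Mathlib

open Real MeasureTheory Filter

/-- Spatial partial derivative in the `i`-th coordinate direction. -/
noncomputable def pd (d : ℕ) (i : Fin d) (f : (Fin d → ℝ) → ℝ) (x : Fin d → ℝ) : ℝ :=
  fderiv ℝ f x (Pi.single i 1)

/-- Spatial Laplacian: sum of second partial derivatives. -/
noncomputable def lap (d : ℕ) (f : (Fin d → ℝ) → ℝ) (x : Fin d → ℝ) : ℝ :=
  ∑ i, pd d i (fun y => pd d i f y) x

/-- The `L²` norm on the unit cell `[0,1]^d` of a `ℤ^d`-periodic function. -/
noncomputable def L2norm (d : ℕ) (f : (Fin d → ℝ) → ℝ) : ℝ :=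
  Real.sqrt (∫ x in Set.Icc (0 : Fin d → ℝ) 1, (f x) ^ 2)

/-- `ℤ^d`-periodicity. -/
def PeriodicIn (d : ℕ) (f : (Fin d → ℝ) → ℝ) : Prop :=
  ∀ x : Fin d → ℝ, ∀ k : Fin d → ℤ, f (x + fun i => (k i : ℝ)) = f x

/-!
On the dyadic interval `[1 - 2⁻ⁿ, 1 - 2⁻ⁿ⁻¹]` let the clock `σ` first accelerate and then run at the
constant speed `cₙ = 2 (n + 1) / f⁻¹(2⁻ⁿ / (4 (n + 1)))`. While the speed is `cₙ`, slowing time down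
by `cₙ` turns the accelerated equation into the original one with viscosity `ν / cₙ`, whose
relaxation time takes only `τ(ν / cₙ) / cₙ` units of accelerated time. As soon as
`ν ≤ 2 (n + 1)`, the definition of `f` bounds this by `2⁻ⁿ / (4 ν (n + 1))`, a small fraction of the
plateau for large `n`, so the squared `L²` norm eventually decreases by a factor `4` across each
interval and tends to `0` as `t → 1⁻`.

Relaxation enhancement concerns solutions on a whole half-line, so a solution on a plateau has to be
extended forward in time. This is done on the Fourier side: the Duhamel iterates starting from
rapidly decaying coefficients decay rapidly, and their sum is a global smooth solution, which agrees
with the given one by the energy inequality.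

That `σ` is unbounded needs `τ` to be bounded below near `0`. The energy of the solution started
from a fixed cosine mode loses at most a fixed amount per unit of time, uniformly in the viscosity
`ν ≤ 1`, so it cannot be divided by `4` arbitrarily quickly.
-/

section Periodic
open Set
open scoped ContDiff

/-- The fundamental cell `[0,1]^d` of the lattice `ℤ^d`. -/
abbrev unitCell (d : ℕ) : Set (Fin d → ℝ) := Icc 0 1

/-- Squared `L²` norm on the fundamental cell. -/
noncomputable def energy (d : ℕ) (f : (Fin d → ℝ) → ℝ) : ℝ :=
  ∫ x in unitCell d, f x ^ 2

/-- The generator `ν Δ - w · ∇` of advection by a vector field `w` with viscosity `ν`. -/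
noncomputable def advectionDiffusion {d : ℕ} (ν : ℝ) (w : (Fin d → ℝ) → Fin d → ℝ)
    (f : (Fin d → ℝ) → ℝ) (x : Fin d → ℝ) : ℝ :=
  ν * lap d f x - ∑ i, w x i * pd d i f x

/-- Smooth, `ℤ^d`-periodic, divergence-free vector fields. -/
structure IsSolenoidal {d : ℕ} (w : (Fin d → ℝ) → Fin d → ℝ) : Prop where
  contDiff : ∀ i, ContDiff ℝ ∞ fun x => w x i
  periodicIn : ∀ i, PeriodicIn d fun x => w x i
  div_eq_zero : ∀ x, ∑ i, pd d i (fun y => w y i) x = 0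

theorem L2norm_eq_sqrt_energy (d : ℕ) (f : (Fin d → ℝ) → ℝ) : L2norm d f = √(energy d f) := rfl

variable {d : ℕ} {f g : (Fin d → ℝ) → ℝ} {w : (Fin d → ℝ) → Fin d → ℝ}

theorem energy_nonneg (f : (Fin d → ℝ) → ℝ) : 0 ≤ energy d f :=
  integral_nonneg fun _ => sq_nonneg _

theorem periodicIn_pd (hf : PeriodicIn d f) (i : Fin d) : PeriodicIn d (pd d i f) := by
  intro x k
  have shift_eq : (fun y => f (y + fun i => (k i : ℝ))) = f := funext fun y => hf y k
  unfold pd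
  conv_rhs => rw [← shift_eq]
  rw [fderiv_comp_add_right]

theorem contDiff_pd (hf : ContDiff ℝ ∞ f) (i : Fin d) : ContDiff ℝ ∞ (pd d i f) :=
  ((contDiff_infty_iff_fderiv.1 hf).2).clm_apply contDiff_const

theorem contDiff_lap (hf : ContDiff ℝ ∞ f) : ContDiff ℝ ∞ (lap d f) :=
  ContDiff.sum fun i _ => contDiff_pd (contDiff_pd hf i) i

theorem pd_mul {x : Fin d → ℝ} (hf : DifferentiableAt ℝ f x) (hg : DifferentiableAt ℝ g x)
    (i : Fin d) : pd d i (fun y => f y * g y) x = f x * pd d i g x + g x * pd d i f x := by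
  simp [pd, fderiv_fun_mul hf hg]

theorem pd_sub {x : Fin d → ℝ} (hf : DifferentiableAt ℝ f x) (hg : DifferentiableAt ℝ g x)
    (i : Fin d) : pd d i (fun y => f y - g y) x = pd d i f x - pd d i g x := by
  simp [pd, fderiv_fun_sub hf hg]

theorem lap_sub (hf : ContDiff ℝ ∞ f) (hg : ContDiff ℝ ∞ g) (x : Fin d → ℝ) :
    lap d (fun y => f y - g y) x = lap d f x - lap d g x := by
  have hpd (i : Fin d) : (fun y => pd d i (fun z => f z - g z) y) =
      fun y => pd d i f y - pd d i g y :=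
    funext fun y => pd_sub (hf.differentiable (by simp) y) (hg.differentiable (by simp) y) i
  simp only [lap, hpd, ← Finset.sum_sub_distrib]
  exact Finset.sum_congr rfl fun i _ =>
    pd_sub ((contDiff_pd hf i).differentiable (by simp) x)
      ((contDiff_pd hg i).differentiable (by simp) x) i

theorem advectionDiffusion_sub (ν : ℝ) (hf : ContDiff ℝ ∞ f) (hg : ContDiff ℝ ∞ g)
    (x : Fin d → ℝ) :
    advectionDiffusion ν w (fun y => f y - g y) x =
      advectionDiffusion ν w f x - advectionDiffusion ν w g x := by
  have hpd (i : Fin d) : pd d i (fun y => f y - g y) x = pd d i f x - pd d i g x :=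
    pd_sub (hf.differentiable (by simp) x) (hg.differentiable (by simp) x) i
  simp only [advectionDiffusion, lap_sub hf hg, hpd, mul_sub, Finset.sum_sub_distrib]
  ring

theorem advectionDiffusion_const_smul (c ν : ℝ) (f : (Fin d → ℝ) → ℝ) (x : Fin d → ℝ) :
    advectionDiffusion (c * ν) (fun y => c • w y) f x = c * advectionDiffusion ν w f x := by
  simp only [advectionDiffusion, Pi.smul_apply, smul_eq_mul, mul_sub, Finset.mul_sum, mul_assoc]

/-! ### Integration by parts on the fundamental cell -/

theorem integral_fderiv_single_eq_zero {E : Type*} [NormedAddCommGroup E] [NormedSpace ℝ E]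
    {F : (Fin d → ℝ) → E} (hF : ContDiff ℝ 1 F)
    (hper : ∀ x : Fin d → ℝ, ∀ k : Fin d → ℤ, F (x + fun i => (k i : ℝ)) = F x) (i : Fin d) :
    ∫ x in unitCell d, fderiv ℝ F x (Pi.single i 1) = 0 := by
  obtain ⟨n, rfl⟩ : ∃ n, d = n + 1 := ⟨d - 1, by have := i.2; omega⟩
  have sum_eq : (fun x => ∑ j, (Pi.single i (fderiv ℝ F) :
      Fin (n + 1) → (Fin (n + 1) → ℝ) → _) j x (Pi.single j (1 : ℝ))) =
      fun x => fderiv ℝ F x (Pi.single i 1) := by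
    funext x
    rw [Finset.sum_eq_single i (fun j _ hj => by simp [Pi.single_eq_of_ne hj]) (by simp),
      Pi.single_eq_same]
  have divergence := integral_divergence_of_hasFDerivAt_off_countable' (0 : Fin (n + 1) → ℝ) 1
    (fun _ => by simp) (Pi.single i F) (Pi.single i (fderiv ℝ F)) ∅ countable_empty
    (fun j => by
      rcases eq_or_ne j i with rfl | hj
      · simpa using hF.continuous.continuousOn
      · rw [Pi.single_eq_of_ne hj]
        exact continuousOn_const)
    (fun x _ j => by
      rcases eq_or_ne j i with rfl | hj
      · simpa using (hF.differentiable (by norm_num) x).hasFDerivAt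
      · rw [Pi.single_eq_of_ne hj, Pi.single_eq_of_ne hj]
        exact hasFDerivAt_const 0 x)
    (by
      rw [sum_eq]
      exact ((hF.continuous_fderiv (by norm_num)).clm_apply continuous_const).integrableOn_Icc)
  rw [sum_eq] at divergence
  rw [divergence]
  refine Finset.sum_eq_zero fun j _ => ?_
  rcases eq_or_ne j i with rfl | hj
  · simp only [Pi.single_eq_same, sub_eq_zero, Pi.zero_apply, Pi.one_apply]
    congr 1
    funext x
    rw [← hper (j.insertNth 0 x) (Pi.single j 1)]
    congr 1
    funext l
    refine Fin.succAboveCases j ?_ (fun m => ?_) l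
    · simp
    · simp [Fin.succAbove_ne]
  · simp [Pi.single_eq_of_ne hj]

theorem integral_mul_pd (hf : ContDiff ℝ ∞ f) (hg : ContDiff ℝ ∞ g) (pf : PeriodicIn d f)
    (pg : PeriodicIn d g) (i : Fin d) :
    ∫ x in unitCell d, f x * pd d i g x = -∫ x in unitCell d, g x * pd d i f x := by
  have integral_pd_mul : ∫ x in unitCell d, pd d i (fun y => f y * g y) x = 0 :=
    integral_fderiv_single_eq_zero ((hf.mul hg).of_le (by exact_mod_cast le_top))
      (fun x k => congrArg₂ (· * ·) (pf x k) (pg x k)) i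
  have product_rule (x : Fin d → ℝ) :=
    pd_mul (hf.differentiable (by simp) x) (hg.differentiable (by simp) x) i
  simp only [product_rule] at integral_pd_mul
  rw [integral_add (hf.continuous.fun_mul (contDiff_pd hg i).continuous).integrableOn_Icc
    (hg.continuous.fun_mul (contDiff_pd hf i).continuous).integrableOn_Icc] at integral_pd_mul
  exact eq_neg_of_add_eq_zero_left integral_pd_mul

theorem integral_mul_lap (hf : ContDiff ℝ ∞ f) (hg : ContDiff ℝ ∞ g) (pf : PeriodicIn d f)
    (pg : PeriodicIn d g) :
    ∫ x in unitCell d, f x * lap d g x = -∑ i, ∫ x in unitCell d, pd d i f x * pd d i g x := by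
  simp only [lap, Finset.mul_sum]
  rw [integral_finsetSum _ fun i _ => (hf.continuous.fun_mul
    (contDiff_pd (contDiff_pd hg i) i).continuous).integrableOn_Icc, ← Finset.sum_neg_distrib]
  refine Finset.sum_congr rfl fun i _ => ?_
  rw [integral_mul_pd hf (contDiff_pd hg i) pf (periodicIn_pd pg i)]
  simp only [mul_comm]

theorem integral_mul_lap_comm (hf : ContDiff ℝ ∞ f) (hg : ContDiff ℝ ∞ g) (pf : PeriodicIn d f)
    (pg : PeriodicIn d g) :
    ∫ x in unitCell d, f x * lap d g x = ∫ x in unitCell d, g x * lap d f x := by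
  simp only [integral_mul_lap hf hg pf pg, integral_mul_lap hg hf pg pf, mul_comm]

theorem integral_mul_lap_self_nonpos (hf : ContDiff ℝ ∞ f) (pf : PeriodicIn d f) :
    ∫ x in unitCell d, f x * lap d f x ≤ 0 := by
  rw [integral_mul_lap hf hf pf pf, neg_nonpos]
  exact Finset.sum_nonneg fun i _ => integral_nonneg fun x => mul_self_nonneg _

theorem IsSolenoidal.integral_mul_advection (hw : IsSolenoidal w) (hf : ContDiff ℝ ∞ f)
    (hg : ContDiff ℝ ∞ g) (pf : PeriodicIn d f) (pg : PeriodicIn d g) :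
    ∫ x in unitCell d, f x * ∑ i, w x i * pd d i g x =
      -∫ x in unitCell d, g x * ∑ i, w x i * pd d i f x := by
  have by_parts (i : Fin d) : ∫ x in unitCell d, f x * (w x i * pd d i g x) =
      -∫ x in unitCell d,
        (g x * (w x i * pd d i f x) + g x * f x * pd d i (fun y => w y i) x) := by
    have h := integral_mul_pd (hf.mul (hw.contDiff i)) hg
      (fun x k => congrArg₂ (· * ·) (pf x k) (hw.periodicIn i x k)) pg i
    have product_rule (x : Fin d → ℝ) := pd_mul (hf.differentiable (by simp) x)
      ((hw.contDiff i).differentiable (by simp) x) i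
    simp only [product_rule, mul_assoc] at h
    rw [h]
    congr 2
    funext x
    ring
  have gradient_integrable (φ ψ : (Fin d → ℝ) → ℝ) (hφ : ContDiff ℝ ∞ φ) (hψ : ContDiff ℝ ∞ ψ)
      (i : Fin d) : IntegrableOn (fun x => φ x * (w x i * pd d i ψ x)) (unitCell d) :=
    (hφ.continuous.mul ((hw.contDiff i).continuous.mul
      (contDiff_pd hψ i).continuous)).integrableOn_Icc
  have div_integrable (i : Fin d) :
      IntegrableOn (fun x => g x * f x * pd d i (fun y => w y i) x) (unitCell d) :=
    ((hg.continuous.mul hf.continuous).mul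
      (contDiff_pd (hw.contDiff i) i).continuous).integrableOn_Icc
  simp only [Finset.mul_sum]
  rw [integral_finsetSum _ fun i _ => gradient_integrable f g hf hg i]
  simp only [by_parts]
  rw [Finset.sum_neg_distrib, ← integral_finsetSum _ fun i _ =>
    (gradient_integrable g f hg hf i).fun_add (div_integrable i)]
  simp only [Finset.sum_add_distrib, ← Finset.mul_sum, hw.div_eq_zero, mul_zero, add_zero]

theorem IsSolenoidal.integral_mul_advectionDiffusion (hw : IsSolenoidal w) (ν : ℝ)
    (hf : ContDiff ℝ ∞ f) (hg : ContDiff ℝ ∞ g) (pf : PeriodicIn d f) (pg : PeriodicIn d g) :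
    ∫ x in unitCell d, f x * advectionDiffusion ν w g x =
      ∫ x in unitCell d, g x * advectionDiffusion ν (-w) f x := by
  have hsplit (φ ψ : (Fin d → ℝ) → ℝ) (hφ : ContDiff ℝ ∞ φ) (hψ : ContDiff ℝ ∞ ψ) (ε : ℝ) :
      ∫ x in unitCell d, (ν * (φ x * lap d ψ x) - ε * (φ x * ∑ i, w x i * pd d i ψ x)) =
        ν * (∫ x in unitCell d, φ x * lap d ψ x) -
          ε * ∫ x in unitCell d, φ x * ∑ i, w x i * pd d i ψ x := by
    rw [integral_sub, integral_const_mul, integral_const_mul]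
    · exact (continuous_const.mul
        (hφ.continuous.mul (contDiff_lap hψ).continuous)).integrableOn_Icc
    · exact (continuous_const.mul (hφ.continuous.mul (continuous_finsetSum _ fun i _ =>
        (hw.contDiff i).continuous.mul (contDiff_pd hψ i).continuous))).integrableOn_Icc
  calc ∫ x in unitCell d, f x * advectionDiffusion ν w g x
      = ν * (∫ x in unitCell d, f x * lap d g x) -
          1 * ∫ x in unitCell d, f x * ∑ i, w x i * pd d i g x := by
        rw [← hsplit f g hf hg]
        congr 1
        funext x
        rw [advectionDiffusion]
        ring
    _ = ν * (∫ x in unitCell d, g x * lap d f x) -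
          (-1) * ∫ x in unitCell d, g x * ∑ i, w x i * pd d i f x := by
        rw [integral_mul_lap_comm hf hg pf pg, hw.integral_mul_advection hf hg pf pg]
        ring
    _ = ∫ x in unitCell d, g x * advectionDiffusion ν (-w) f x := by
        rw [← hsplit g f hg hf]
        congr 1
        funext x
        simp only [advectionDiffusion, Pi.neg_apply, neg_mul, Finset.sum_neg_distrib]
        ring

theorem IsSolenoidal.integral_mul_advectionDiffusion_self_nonpos (hw : IsSolenoidal w) {ν : ℝ}
    (hν : 0 ≤ ν) (hf : ContDiff ℝ ∞ f) (pf : PeriodicIn d f) :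
    ∫ x in unitCell d, f x * advectionDiffusion ν w f x ≤ 0 := by
  have advection_eq_zero : ∫ x in unitCell d, f x * ∑ i, w x i * pd d i f x = 0 := by
    linarith [hw.integral_mul_advection hf hf pf pf]
  calc ∫ x in unitCell d, f x * advectionDiffusion ν w f x
      = ∫ x in unitCell d, (ν * (f x * lap d f x) - f x * ∑ i, w x i * pd d i f x) := by
        congr 1
        funext x
        rw [advectionDiffusion]
        ring
    _ = ν * ∫ x in unitCell d, f x * lap d f x := by
        rw [integral_sub, integral_const_mul, advection_eq_zero, sub_zero]
        · exact (continuous_const.mul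
            (hf.continuous.mul (contDiff_lap hf).continuous)).integrableOn_Icc
        · exact (hf.continuous.mul (continuous_finsetSum _ fun i _ =>
            (hw.contDiff i).continuous.mul (contDiff_pd hf i).continuous)).integrableOn_Icc
    _ ≤ 0 := mul_nonpos_of_nonneg_of_nonpos hν (integral_mul_lap_self_nonpos hf pf)

end Periodic

section Strip
open Set
open scoped ContDiff

/-- Joint smoothness on `I × ℝ^d` of a time-dependent function, given in curried form. -/
def SmoothOnStrip {d : ℕ} {E : Type*} [NormedAddCommGroup E] [NormedSpace ℝ E] (I : Set ℝ)
    (G : ℝ → (Fin d → ℝ) → E) : Prop :=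
  ContDiffOn ℝ ∞ (fun p : ℝ × (Fin d → ℝ) => G p.1 p.2) (I ×ˢ univ)

namespace SmoothOnStrip

variable {d : ℕ} {E : Type*} [NormedAddCommGroup E] [NormedSpace ℝ E] {I J : Set ℝ}
  {G H : ℝ → (Fin d → ℝ) → E} {t : ℝ}

theorem mono (h : SmoothOnStrip I G) (hJ : J ⊆ I) : SmoothOnStrip J G :=
  ContDiffOn.mono h (prod_mono hJ subset_rfl)

theorem congr (h : SmoothOnStrip I G) (hGH : ∀ t ∈ I, ∀ x, H t x = G t x) : SmoothOnStrip I H :=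
  ContDiffOn.congr h fun p hp => hGH p.1 hp.1 p.2

theorem contDiff_slice (h : SmoothOnStrip I G) (ht : t ∈ I) : ContDiff ℝ ∞ (G t) := by
  rw [← contDiffOn_univ]
  exact ContDiffOn.comp (g := fun p : ℝ × (Fin d → ℝ) => G p.1 p.2) h
    (contDiff_const.prodMk contDiff_id).contDiffOn fun x _ => ⟨ht, trivial⟩

theorem contDiffAt (h : SmoothOnStrip I G) (hI : IsOpen I) (ht : t ∈ I) (x : Fin d → ℝ) :
    ContDiffAt ℝ ∞ (fun p : ℝ × (Fin d → ℝ) => G p.1 p.2) (t, x) :=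
  ContDiffOn.contDiffAt h ((hI.prod isOpen_univ).mem_nhds (mk_mem_prod ht trivial))

theorem hasDerivAt_fderiv (h : SmoothOnStrip I G) (hI : IsOpen I) (ht : t ∈ I)
    (x : Fin d → ℝ) : HasDerivAt (fun r => G r x)
      (fderiv ℝ (fun p : ℝ × (Fin d → ℝ) => G p.1 p.2) (t, x) (1, 0)) t :=
  ((h.contDiffAt hI ht x).differentiableAt (by simp)).hasFDerivAt.comp_hasDerivAt
    (f := fun r : ℝ => (r, x)) t ((hasDerivAt_id t).prodMk (hasDerivAt_const t x))

theorem hasDerivAt (h : SmoothOnStrip I G) (hI : IsOpen I) (ht : t ∈ I) (x : Fin d → ℝ) :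
    HasDerivAt (fun r => G r x) (deriv (fun r => G r x) t) t :=
  (h.hasDerivAt_fderiv hI ht x).differentiableAt.hasDerivAt

theorem fderiv_slice_apply (h : SmoothOnStrip I G) (hI : IsOpen I) (ht : t ∈ I)
    (x v : Fin d → ℝ) :
    fderiv ℝ (G t) x v = fderiv ℝ (fun p : ℝ × (Fin d → ℝ) => G p.1 p.2) (t, x) (0, v) := by
  have slice_deriv : HasFDerivAt (G t) _ x :=
    ((h.contDiffAt hI ht x).differentiableAt (by simp)).hasFDerivAt.comp x
      (hasFDerivAt_prodMk_right t x)
  rw [slice_deriv.fderiv]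
  rfl

theorem fderiv_apply (h : SmoothOnStrip I G) (hI : IsOpen I) (v : ℝ × (Fin d → ℝ)) :
    SmoothOnStrip I fun t x => fderiv ℝ (fun p : ℝ × (Fin d → ℝ) => G p.1 p.2) (t, x) v :=
  ((contDiffOn_infty_iff_fderiv_of_isOpen (hI.prod isOpen_univ)).1 h).2.clm_apply contDiffOn_const

theorem deriv (h : SmoothOnStrip I G) (hI : IsOpen I) :
    SmoothOnStrip I fun t x => _root_.deriv (fun r => G r x) t :=
  (h.fderiv_apply hI (1, 0)).congr fun _ ht x => (h.hasDerivAt_fderiv hI ht x).deriv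

theorem hasDerivAt_integral (h : SmoothOnStrip I G) (hI : IsOpen I) (ht : t ∈ I) :
    HasDerivAt (fun r => ∫ x in unitCell d, G r x)
      (∫ x in unitCell d, _root_.deriv (fun r => G r x) t) t := by
  obtain ⟨ε, hε, hsub⟩ := Metric.nhds_basis_closedBall.mem_iff.1 (hI.mem_nhds ht)
  obtain ⟨C, hC⟩ := ((isCompact_closedBall t ε).prod isCompact_Icc).exists_bound_of_continuousOn
    ((h.deriv hI).continuousOn.mono (prod_mono hsub (subset_univ (unitCell d))))
  refine (hasDerivAt_integral_of_dominated_loc_of_deriv_le (bound := fun _ => C)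
    (F' := fun t x => _root_.deriv (fun r => G r x) t) (Metric.closedBall_mem_nhds t hε)
    ?_ ?_ ?_ ?_ ?_ ?_).2
  · filter_upwards [hI.mem_nhds ht] with r hr
    exact (h.contDiff_slice hr).continuous.aestronglyMeasurable
  · exact (h.contDiff_slice ht).continuous.integrableOn_Icc
  · exact ((h.deriv hI).contDiff_slice ht).continuous.aestronglyMeasurable
  · exact (ae_restrict_iff' measurableSet_Icc).2 (ae_of_all _ fun x hx r hr => hC (r, x) ⟨hr, hx⟩)
  · exact continuous_const.integrableOn_Icc
  · exact ae_of_all _ fun x r hr => h.hasDerivAt hI (hsub hr) x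

end SmoothOnStrip

variable {d : ℕ} {I J : Set ℝ} {a b ν : ℝ} {v : ℝ → (Fin d → ℝ) → Fin d → ℝ}
  {θ φ : ℝ → (Fin d → ℝ) → ℝ} {ψ : (Fin d → ℝ) → ℝ} {t : ℝ}

theorem continuousOn_integral_unitCell {E : Type*} [NormedAddCommGroup E] [NormedSpace ℝ E]
    {G : ℝ → (Fin d → ℝ) → E}
    (hG : ContinuousOn (fun p : ℝ × (Fin d → ℝ) => G p.1 p.2) (Icc a b ×ˢ univ)) :
    ContinuousOn (fun t => ∫ x in unitCell d, G t x) (Icc a b) := by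
  rw [continuousOn_iff_continuous_domRestrict]
  refine continuous_parametric_integral_of_continuous (f := fun (t : Icc a b) x => G t x) ?_
    isCompact_Icc
  exact hG.comp_continuous (f := fun p : Icc a b × (Fin d → ℝ) => ((p.1 : ℝ), p.2))
    (by fun_prop) fun p => ⟨p.1.2, trivial⟩

/-- Smooth periodic solutions `θ` of `∂ₜθ = νΔθ - v·∇θ` on `I × ℝ^d`; the equation uses the
two-sided time derivative, so `I` is meant to be open. -/
structure IsSolution (d : ℕ) (ν : ℝ) (v : ℝ → (Fin d → ℝ) → Fin d → ℝ) (I : Set ℝ)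
    (θ : ℝ → (Fin d → ℝ) → ℝ) : Prop where
  smoothOnStrip : SmoothOnStrip I θ
  periodicIn : ∀ t ∈ I, PeriodicIn d (θ t)
  deriv_eq : ∀ t ∈ I, ∀ x, deriv (fun r => θ r x) t = advectionDiffusion ν (v t) (θ t) x

namespace IsSolution

theorem mono (h : IsSolution d ν v I θ) (hJ : J ⊆ I) : IsSolution d ν v J θ :=
  ⟨h.smoothOnStrip.mono hJ, fun t ht => h.periodicIn t (hJ ht), fun t ht => h.deriv_eq t (hJ ht)⟩

theorem contDiff (h : IsSolution d ν v I θ) (ht : t ∈ I) : ContDiff ℝ ∞ (θ t) :=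
  h.smoothOnStrip.contDiff_slice ht

theorem hasDerivAt (h : IsSolution d ν v I θ) (hI : IsOpen I) (ht : t ∈ I) (x : Fin d → ℝ) :
    HasDerivAt (fun r => θ r x) (advectionDiffusion ν (v t) (θ t) x) t := by
  rw [← h.deriv_eq t ht x]
  exact h.smoothOnStrip.hasDerivAt hI ht x

theorem sub (h : IsSolution d ν v I θ) (h' : IsSolution d ν v I φ) (hI : IsOpen I) :
    IsSolution d ν v I fun t x => θ t x - φ t x where
  smoothOnStrip := ContDiffOn.sub h.smoothOnStrip h'.smoothOnStrip
  periodicIn t ht x k := congrArg₂ (· - ·) (h.periodicIn t ht x k) (h'.periodicIn t ht x k)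
  deriv_eq t ht x := by
    rw [((h.hasDerivAt hI ht x).fun_sub (h'.hasDerivAt hI ht x)).deriv,
      advectionDiffusion_sub ν (h.contDiff ht) (h'.contDiff ht)]

theorem hasDerivAt_integral_mul (h : IsSolution d ν v I θ) (hI : IsOpen I) (ht : t ∈ I)
    (hv : IsSolenoidal (v t)) (hψ : ContDiff ℝ ∞ ψ) (pψ : PeriodicIn d ψ) :
    HasDerivAt (fun r => ∫ x in unitCell d, ψ x * θ r x)
      (∫ x in unitCell d, θ t x * advectionDiffusion ν (-v t) ψ x) t := by
  have smooth : SmoothOnStrip I fun r x => ψ x * θ r x :=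
    ContDiffOn.mul (hψ.comp contDiff_snd).contDiffOn h.smoothOnStrip
  rw [← hv.integral_mul_advectionDiffusion ν hψ (h.contDiff ht) pψ (h.periodicIn t ht)]
  simpa only [((h.hasDerivAt hI ht _).const_mul (ψ _)).deriv] using smooth.hasDerivAt_integral hI ht

theorem hasDerivAt_energy (h : IsSolution d ν v I θ) (hI : IsOpen I) (ht : t ∈ I) :
    HasDerivAt (fun r => energy d (θ r))
      (2 * ∫ x in unitCell d, θ t x * advectionDiffusion ν (v t) (θ t) x) t := by
  have smooth : SmoothOnStrip I fun r x => θ r x ^ 2 := ContDiffOn.pow h.smoothOnStrip 2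
  rw [← integral_const_mul]
  simpa only [energy, ((h.hasDerivAt hI ht _).fun_pow 2).deriv, Nat.cast_ofNat, Nat.add_one_sub_one,
    pow_one, mul_assoc] using smooth.hasDerivAt_integral hI ht

theorem deriv_energy_nonpos (h : IsSolution d ν v I θ) (hI : IsOpen I) (ht : t ∈ I) (hν : 0 ≤ ν)
    (hv : IsSolenoidal (v t)) : deriv (fun r => energy d (θ r)) t ≤ 0 := by
  rw [(h.hasDerivAt_energy hI ht).deriv]
  exact mul_nonpos_of_nonneg_of_nonpos zero_le_two
    (hv.integral_mul_advectionDiffusion_self_nonpos hν (h.contDiff ht) (h.periodicIn t ht))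

theorem antitoneOn_energy (h : IsSolution d ν v (Ioo a b) θ)
    (hθ : ContinuousOn (fun p : ℝ × (Fin d → ℝ) => θ p.1 p.2) (Icc a b ×ˢ univ)) (hν : 0 ≤ ν)
    (hv : ∀ t ∈ Ioo a b, IsSolenoidal (v t)) : AntitoneOn (fun t => energy d (θ t)) (Icc a b) := by
  refine antitoneOn_of_deriv_nonpos (convex_Icc a b)
    (continuousOn_integral_unitCell (G := fun t x => θ t x ^ 2) (hθ.pow 2)) ?_ ?_ <;>
    rw [interior_Icc]
  · exact fun t ht =>
      (h.hasDerivAt_energy isOpen_Ioo ht).differentiableAt.differentiableWithinAt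
  · exact fun t ht => h.deriv_energy_nonpos isOpen_Ioo ht hν (hv t ht)

theorem mul_sub_le_integral_mul_sub (h : IsSolution d ν v (Ioo a b) θ)
    (hθ : ContinuousOn (fun p : ℝ × (Fin d → ℝ) => θ p.1 p.2) (Icc a b ×ˢ univ)) (hab : a ≤ b)
    (hv : ∀ t ∈ Ioo a b, IsSolenoidal (v t)) (hψ : ContDiff ℝ ∞ ψ) (pψ : PeriodicIn d ψ) {C : ℝ}
    (hC : ∀ t ∈ Ioo a b, C ≤ ∫ x in unitCell d, θ t x * advectionDiffusion ν (-v t) ψ x) :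
    C * (b - a) ≤ (∫ x in unitCell d, ψ x * θ b x) - ∫ x in unitCell d, ψ x * θ a x := by
  have weak (t : ℝ) (ht : t ∈ Ioo a b) :=
    h.hasDerivAt_integral_mul isOpen_Ioo ht (hv t ht) hψ pψ
  refine (convex_Icc a b).mul_sub_le_image_sub_of_le_deriv
    (f := fun t => ∫ x in unitCell d, ψ x * θ t x)
    (continuousOn_integral_unitCell ((hψ.continuous.comp continuous_snd).continuousOn.mul hθ))
    ?_ ?_ a (left_mem_Icc.2 hab) b (right_mem_Icc.2 hab) hab <;> rw [interior_Icc]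
  · exact fun t ht => (weak t ht).differentiableAt.differentiableWithinAt
  · exact fun t ht => (hC t ht).trans_eq (weak t ht).deriv.symm

theorem integral_eq (h : IsSolution d ν v (Ioo a b) θ)
    (hθ : ContinuousOn (fun p : ℝ × (Fin d → ℝ) => θ p.1 p.2) (Icc a b ×ˢ univ)) (hab : a ≤ b)
    (hv : ∀ t ∈ Ioo a b, IsSolenoidal (v t)) :
    ∫ x in unitCell d, θ b x = ∫ x in unitCell d, θ a x := by
  have generator_const (w : (Fin d → ℝ) → Fin d → ℝ) (c : ℝ) (x : Fin d → ℝ) :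
      advectionDiffusion ν w (fun _ => c) x = 0 := by
    simp [advectionDiffusion, lap, pd]
  have le_sub (c : ℝ) := h.mul_sub_le_integral_mul_sub hθ hab hv (ψ := fun _ => c) (C := 0)
    contDiff_const (fun _ _ => rfl) fun t _ => by simp [generator_const]
  have le_sub_one := le_sub 1
  have le_sub_neg_one := le_sub (-1)
  simp only [zero_mul, one_mul, neg_mul, integral_neg] at le_sub_one le_sub_neg_one
  linarith

theorem energy_eq_of_eq_left (h : IsSolution d ν v (Ioo a b) θ) (h' : IsSolution d ν v (Ioo a b) φ)
    (hθ : ContinuousOn (fun p : ℝ × (Fin d → ℝ) => θ p.1 p.2) (Icc a b ×ˢ univ))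
    (hφ : ContinuousOn (fun p : ℝ × (Fin d → ℝ) => φ p.1 p.2) (Icc a b ×ˢ univ))
    (hab : a ≤ b) (hν : 0 ≤ ν) (hv : ∀ t ∈ Ioo a b, IsSolenoidal (v t)) (heq : θ a = φ a) :
    energy d (θ b) = energy d (φ b) := by
  have continuous_end {χ : ℝ → (Fin d → ℝ) → ℝ}
      (hχ : ContinuousOn (fun p : ℝ × (Fin d → ℝ) => χ p.1 p.2) (Icc a b ×ˢ univ)) :
      Continuous (χ b) :=
    hχ.comp_continuous (f := fun x => (b, x)) (by fun_prop)
      fun x => ⟨right_mem_Icc.2 hab, trivial⟩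
  have energy_sub_eq_zero : energy d (fun x => θ b x - φ b x) = 0 := by
    refine le_antisymm ?_ (energy_nonneg _)
    calc energy d (fun x => θ b x - φ b x) ≤ energy d (fun x => θ a x - φ a x) :=
          (h.sub h' isOpen_Ioo).antitoneOn_energy (hθ.sub hφ) hν hv
            (left_mem_Icc.2 hab) (right_mem_Icc.2 hab) hab
      _ = 0 := by simp [energy, heq]
  have integrable : IntegrableOn (fun x => (θ b x - φ b x) ^ 2) (unitCell d) :=
    (((continuous_end hθ).sub (continuous_end hφ)).pow 2).integrableOn_Icc
  refine integral_congr_ae ?_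
  filter_upwards [(integral_eq_zero_iff_of_nonneg (fun x => sq_nonneg (θ b x - φ b x))
    integrable).1 energy_sub_eq_zero] with x hx
  rw [sub_eq_zero.1 (pow_eq_zero_iff two_ne_zero |>.1 hx)]

end IsSolution
end Strip

/-! ### Rapidly decaying families of Fourier coefficients -/

section FreqWeight

/-- The frequency weight `1 + |k|`, in terms of which decay of Fourier coefficients is measured. -/
noncomputable def freqWeight {d : ℕ} (k : Fin d → ℤ) : ℝ := 1 + ‖k‖

/-- The sum over the lattice of the inverse frequency weights to the power `d + 1`. -/
noncomputable def freqWeightSum (d : ℕ) : ℝ := ∑' k : Fin d → ℤ, (freqWeight k ^ (d + 1))⁻¹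

/-- Convolution of two families of Fourier coefficients; junk unless the sums converge. -/
noncomputable def coeffConv {d : ℕ} (a b : (Fin d → ℤ) → ℂ) (k : Fin d → ℤ) : ℂ :=
  ∑' j, a (k - j) * b j

variable {d : ℕ}

theorem one_le_freqWeight (k : Fin d → ℤ) : 1 ≤ freqWeight k :=
  le_add_of_nonneg_right (norm_nonneg k)

theorem freqWeight_pos (k : Fin d → ℤ) : 0 < freqWeight k :=
  one_pos.trans_le (one_le_freqWeight k)

theorem freqWeight_le_mul (k j : Fin d → ℤ) : freqWeight k ≤ freqWeight (k - j) * freqWeight j := by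
  have triangle : ‖k‖ ≤ ‖k - j‖ + ‖j‖ := norm_le_norm_sub_add k j
  unfold freqWeight
  nlinarith [norm_nonneg (k - j), norm_nonneg j]

theorem abs_coord_le_freqWeight (k : Fin d → ℤ) (i : Fin d) : |(k i : ℝ)| ≤ freqWeight k := by
  rw [← Int.norm_eq_abs]
  exact (norm_le_pi_norm k i).trans (le_add_of_nonneg_left zero_le_one)

theorem summable_norm_inv_pow_intPi (d : ℕ) :
    Summable fun k : Fin d → ℤ => ‖k‖⁻¹ ^ (d + 1) := by
  let basis := Pi.basisFun ℝ (Fin d)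
  let L := Submodule.span ℤ (Set.range basis)
  have finrank_L : Module.finrank ℤ L = d := by
    rw [ZLattice.rank ℝ L]
    simp
  let embed (k : Fin d → ℤ) : L := ⟨fun i => (k i : ℝ),
    (basis.mem_span_iff_repr_mem ℤ _).2 fun i => ⟨k i, by simp [basis]⟩⟩
  have embed_injective : Function.Injective embed := fun k l h => by
    funext i
    exact Int.cast_injective (α := ℝ) (congrFun (Subtype.ext_iff.1 h) i)
  have norm_embed (k : Fin d → ℤ) : ‖embed k‖ = ‖k‖ := by
    change ‖fun i => (k i : ℝ)‖ = ‖k‖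
    rfl
  simpa only [Function.comp_def, norm_embed] using
    (ZLattice.summable_norm_pow_inv L (d + 1) (by omega)).comp_injective embed_injective

theorem summable_inv_freqWeight_pow :
    Summable fun k : Fin d → ℤ => (freqWeight k ^ (d + 1))⁻¹ := by
  refine (summable_norm_inv_pow_intPi d).of_norm_bounded_eventually ?_
  filter_upwards [(Set.finite_singleton (0 : Fin d → ℤ)).compl_mem_cofinite] with k hk
  have := norm_pos_iff.2 hk
  rw [norm_inv, norm_pow, Real.norm_of_nonneg (freqWeight_pos k).le, inv_pow]
  gcongr
  exact le_add_of_nonneg_left zero_le_one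

theorem freqWeightSum_nonneg : 0 ≤ freqWeightSum d :=
  tsum_nonneg fun k => inv_nonneg.2 (pow_nonneg (freqWeight_pos k).le _)

theorem summable_inv_freqWeight_sub_pow (k : Fin d → ℤ) :
    Summable fun j => (freqWeight (k - j) ^ (d + 1))⁻¹ :=
  (Equiv.subLeft k).summable_iff.2 summable_inv_freqWeight_pow

theorem tsum_inv_freqWeight_sub_pow (k : Fin d → ℤ) :
    ∑' j, (freqWeight (k - j) ^ (d + 1))⁻¹ = freqWeightSum d :=
  (Equiv.subLeft k).tsum_eq fun k => (freqWeight k ^ (d + 1))⁻¹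

section Convolution

variable {a b : (Fin d → ℤ) → ℂ} {A B : ℝ} {m : ℕ}

theorem norm_coeffConv_term_mul_le (ha : ∀ k, ‖a k‖ * freqWeight k ^ (m + (d + 1)) ≤ A)
    (hb : ∀ k, ‖b k‖ * freqWeight k ^ m ≤ B) (k j : Fin d → ℤ) :
    ‖a (k - j) * b j‖ * freqWeight k ^ m ≤ A * B * (freqWeight (k - j) ^ (d + 1))⁻¹ := by
  have weight_sub_pos := freqWeight_pos (k - j)
  have weight_pos := freqWeight_pos j
  have ha_div : ‖a (k - j)‖ * freqWeight (k - j) ^ m ≤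
      A * (freqWeight (k - j) ^ (d + 1))⁻¹ := by
    rw [← div_eq_mul_inv, le_div_iff₀ (by positivity), mul_assoc, ← pow_add]
    exact ha _
  calc ‖a (k - j) * b j‖ * freqWeight k ^ m
      ≤ ‖a (k - j)‖ * ‖b j‖ * (freqWeight (k - j) * freqWeight j) ^ m := by
        rw [norm_mul]
        gcongr
        · exact (freqWeight_pos k).le
        · exact freqWeight_le_mul k j
    _ = (‖a (k - j)‖ * freqWeight (k - j) ^ m) * (‖b j‖ * freqWeight j ^ m) := by ring
    _ ≤ A * (freqWeight (k - j) ^ (d + 1))⁻¹ * B :=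
        mul_le_mul ha_div (hb j) (by positivity) ((by positivity : (0 : ℝ) ≤ _).trans ha_div)
    _ = A * B * (freqWeight (k - j) ^ (d + 1))⁻¹ := by ring

theorem norm_coeffConv_term_le (ha : ∀ k, ‖a k‖ * freqWeight k ^ (d + 1) ≤ A)
    (hb : ∀ k, ‖b k‖ ≤ B) (k j : Fin d → ℤ) :
    ‖a (k - j) * b j‖ ≤ A * B * (freqWeight (k - j) ^ (d + 1))⁻¹ := by
  simpa using norm_coeffConv_term_mul_le (m := 0) (by simpa using ha) (by simpa using hb) k j

theorem summable_coeffConv (ha : ∀ k, ‖a k‖ * freqWeight k ^ (d + 1) ≤ A)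
    (hb : ∀ k, ‖b k‖ ≤ B) (k : Fin d → ℤ) : Summable fun j => a (k - j) * b j :=
  .of_norm_bounded ((summable_inv_freqWeight_sub_pow k).mul_left (A * B))
    (norm_coeffConv_term_le ha hb k)

theorem norm_coeffConv_mul_le (ha : ∀ k, ‖a k‖ * freqWeight k ^ (m + (d + 1)) ≤ A)
    (hb : ∀ k, ‖b k‖ * freqWeight k ^ m ≤ B) (k : Fin d → ℤ) :
    ‖coeffConv a b k‖ * freqWeight k ^ m ≤ A * B * freqWeightSum d := by
  have weight_pos := pow_pos (freqWeight_pos k) m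
  have terms (j : Fin d → ℤ) : ‖a (k - j) * b j‖ ≤
      A * B / freqWeight k ^ m * (freqWeight (k - j) ^ (d + 1))⁻¹ := by
    rw [div_mul_eq_mul_div, le_div_iff₀ weight_pos]
    exact norm_coeffConv_term_mul_le ha hb k j
  rw [← le_div_iff₀ weight_pos, ← tsum_inv_freqWeight_sub_pow k, ← div_mul_eq_mul_div,
    ← tsum_mul_left]
  exact tsum_of_norm_bounded ((summable_inv_freqWeight_sub_pow k).mul_left _).hasSum terms

theorem hasSum_coeffConv {ι : Type*} {f : ι → (Fin d → ℤ) → ℂ} {F : ι → ℝ}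
    (ha : ∀ k, ‖a k‖ * freqWeight k ^ (d + 1) ≤ A) (hF : Summable F)
    (hf : ∀ n k, ‖f n k‖ ≤ F n) (hb : ∀ k, HasSum (fun n => f n k) (b k)) (k : Fin d → ℤ) :
    HasSum (fun n => coeffConv a (f n) k) (coeffConv a b k) := by
  have hF0 (n : ι) : 0 ≤ F n := (norm_nonneg _).trans (hf n 0)
  have hA : 0 ≤ A := (mul_nonneg (norm_nonneg _) (pow_pos (freqWeight_pos 0) _).le).trans (ha 0)
  have summable_pair : Summable fun p : ι × (Fin d → ℤ) => a (k - p.2) * f p.1 p.2 := by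
    refine .of_norm_bounded (hF.mul_of_nonneg
      ((summable_inv_freqWeight_sub_pow k).mul_left A) hF0 fun j =>
        mul_nonneg hA (inv_nonneg.2 (pow_pos (freqWeight_pos _) _).le)) fun p => ?_
    rw [mul_left_comm, ← mul_assoc]
    exact norm_coeffConv_term_le ha (hf p.1) k p.2
  have sum_over_freq : HasSum (fun n => coeffConv a (f n) k) _ :=
    summable_pair.hasSum.prod_fiberwise fun n => (summable_pair.prod_factor n).hasSum
  have sum_over_index : HasSum (fun j => a (k - j) * b j) _ :=
    ((Equiv.prodComm _ _).hasSum_iff.2 summable_pair.hasSum).prod_fiberwise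
      fun j => (hb j).mul_left (a (k - j))
  rwa [← sum_over_index.tsum_eq] at sum_over_freq

end Convolution

end FreqWeight

section RapidDecay

/-- Time-dependent Fourier coefficients, continuous in time and decaying faster than every power
of the frequency, uniformly for times in `I`. -/
structure RapidlyDecayingOn {d : ℕ} (I : Set ℝ) (c : ℝ → (Fin d → ℤ) → ℂ) : Prop where
  continuousOn : ∀ k, ContinuousOn (fun t => c t k) I
  decay : ∀ m : ℕ, ∃ C : ℝ, 0 ≤ C ∧ ∀ t ∈ I, ∀ k, ‖c t k‖ * freqWeight k ^ m ≤ C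

/-- Rapidly decaying Fourier coefficients that are differentiable in time `n` times, with rapidly
decaying derivatives. -/
def RapidlyDecayingOfOrder {d : ℕ} : ℕ → Set ℝ → (ℝ → (Fin d → ℤ) → ℂ) → Prop
  | 0, I, c => RapidlyDecayingOn I c
  | n + 1, I, c => RapidlyDecayingOn I c ∧ ∃ c' : ℝ → (Fin d → ℤ) → ℂ,
      (∀ t ∈ I, ∀ k, HasDerivAt (fun r => c r k) (c' t k) t) ∧ RapidlyDecayingOfOrder n I c'

variable {d : ℕ} {I J : Set ℝ} {a b c : ℝ → (Fin d → ℤ) → ℂ} {t : ℝ}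

namespace RapidlyDecayingOn

theorem mono (h : RapidlyDecayingOn I c) (hJ : J ⊆ I) : RapidlyDecayingOn J c where
  continuousOn k := (h.continuousOn k).mono hJ
  decay m := (h.decay m).imp fun _ hC => ⟨hC.1, fun t ht => hC.2 t (hJ ht)⟩

theorem exists_norm_le (h : RapidlyDecayingOn I c) :
    ∃ C : ℝ, 0 ≤ C ∧ ∀ t ∈ I, ∀ k, ‖c t k‖ ≤ C := by
  simpa only [pow_zero, mul_one] using h.decay 0

theorem exists_norm_le_mul_inv (h : RapidlyDecayingOn I c) :
    ∃ C : ℝ, ∀ t ∈ I, ∀ k, ‖c t k‖ ≤ C * (freqWeight k ^ (d + 1))⁻¹ := by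
  obtain ⟨C, -, hC⟩ := h.decay (d + 1)
  refine ⟨C, fun t ht k => ?_⟩
  rw [← div_eq_mul_inv, le_div_iff₀ (pow_pos (freqWeight_pos k) _)]
  exact hC t ht k

theorem summable_norm (h : RapidlyDecayingOn I c) (ht : t ∈ I) : Summable fun k => ‖c t k‖ := by
  obtain ⟨C, hC⟩ := h.exists_norm_le_mul_inv
  exact .of_nonneg_of_le (fun _ => norm_nonneg _) (hC t ht)
    (summable_inv_freqWeight_pow.mul_left C)

theorem zero : RapidlyDecayingOn I fun (_ : ℝ) (_ : Fin d → ℤ) => (0 : ℂ) where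
  continuousOn _ := continuousOn_const
  decay _ := ⟨0, le_rfl, fun t _ k => by simp⟩

theorem add (ha : RapidlyDecayingOn I a) (hb : RapidlyDecayingOn I b) :
    RapidlyDecayingOn I fun t k => a t k + b t k where
  continuousOn k := (ha.continuousOn k).add (hb.continuousOn k)
  decay m := by
    obtain ⟨A, hA0, hA⟩ := ha.decay m
    obtain ⟨B, hB0, hB⟩ := hb.decay m
    refine ⟨A + B, by positivity, fun t ht k => ?_⟩
    have weight_pos := pow_pos (freqWeight_pos k) m
    calc ‖a t k + b t k‖ * freqWeight k ^ m ≤ (‖a t k‖ + ‖b t k‖) * freqWeight k ^ m := by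
          gcongr
          exact norm_add_le _ _
      _ = ‖a t k‖ * freqWeight k ^ m + ‖b t k‖ * freqWeight k ^ m := add_mul ..
      _ ≤ A + B := add_le_add (hA t ht k) (hB t ht k)

theorem mul_symbol (h : RapidlyDecayingOn I c) {p : (Fin d → ℤ) → ℂ} {C : ℝ} {q : ℕ}
    (hp : ∀ k, ‖p k‖ ≤ C * freqWeight k ^ q) : RapidlyDecayingOn I fun t k => p k * c t k where
  continuousOn k := continuousOn_const.mul (h.continuousOn k)
  decay m := by
    obtain ⟨A, hA0, hA⟩ := h.decay (m + q)
    have hC : 0 ≤ C := nonneg_of_mul_nonneg_left ((norm_nonneg _).trans (hp 0))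
      (pow_pos (freqWeight_pos _) _)
    refine ⟨C * A, by positivity, fun t ht k => ?_⟩
    have weight_pos := freqWeight_pos k
    calc ‖p k * c t k‖ * freqWeight k ^ m
        ≤ C * freqWeight k ^ q * ‖c t k‖ * freqWeight k ^ m := by
          rw [norm_mul]
          gcongr
          exact hp k
      _ = C * (‖c t k‖ * freqWeight k ^ (m + q)) := by ring
      _ ≤ C * A := by
          gcongr
          exact hA t ht k

theorem coeffConv (ha : RapidlyDecayingOn I a) (hb : RapidlyDecayingOn I b) :
    RapidlyDecayingOn I fun t => coeffConv (a t) (b t) where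
  continuousOn k := by
    obtain ⟨A, -, hA⟩ := ha.decay (d + 1)
    obtain ⟨B, -, hB⟩ := hb.exists_norm_le
    exact continuousOn_tsum (fun j => (ha.continuousOn (k - j)).mul (hb.continuousOn j))
      ((summable_inv_freqWeight_sub_pow k).mul_left (A * B))
      fun j t ht => norm_coeffConv_term_le (hA t ht) (hB t ht) k j
  decay m := by
    obtain ⟨A, hA0, hA⟩ := ha.decay (m + (d + 1))
    obtain ⟨B, hB0, hB⟩ := hb.decay m
    exact ⟨A * B * freqWeightSum d, mul_nonneg (by positivity) freqWeightSum_nonneg,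
      fun t ht k => norm_coeffConv_mul_le (hA t ht) (hB t ht) k⟩

end RapidlyDecayingOn

theorem hasDerivAt_coeffConv {a' b' : ℝ → (Fin d → ℤ) → ℂ} (hI : IsOpen I)
    (hI' : IsPreconnected I) (ha : RapidlyDecayingOn I a) (hb : RapidlyDecayingOn I b)
    (ha' : RapidlyDecayingOn I a') (hb' : RapidlyDecayingOn I b')
    (hda : ∀ t ∈ I, ∀ k, HasDerivAt (fun r => a r k) (a' t k) t)
    (hdb : ∀ t ∈ I, ∀ k, HasDerivAt (fun r => b r k) (b' t k) t) (ht : t ∈ I) (k : Fin d → ℤ) :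
    HasDerivAt (fun r => coeffConv (a r) (b r) k)
      (coeffConv (a' t) (b t) k + coeffConv (a t) (b' t) k) t := by
  obtain ⟨A, -, hA⟩ := ha.decay (d + 1)
  obtain ⟨B, -, hB⟩ := hb.exists_norm_le
  obtain ⟨A', -, hA'⟩ := ha'.decay (d + 1)
  obtain ⟨B', -, hB'⟩ := hb'.exists_norm_le
  have termwise := hasDerivAt_tsum_of_isPreconnected
    (g := fun j r => a r (k - j) * b r j)
    (g' := fun j r => a' r (k - j) * b r j + a r (k - j) * b' r j)
    (((summable_inv_freqWeight_sub_pow k).mul_left (A' * B)).add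
      ((summable_inv_freqWeight_sub_pow k).mul_left (A * B'))) hI hI'
    (fun j r hr => (hda r hr (k - j)).mul (hdb r hr j))
    (fun j r hr => (norm_add_le _ _).trans (add_le_add
      (norm_coeffConv_term_le (hA' r hr) (hB r hr) k j)
      (norm_coeffConv_term_le (hA r hr) (hB' r hr) k j)))
    ht (summable_coeffConv (hA t ht) (hB t ht) k) ht
  rwa [(summable_coeffConv (hA' t ht) (hB t ht) k).tsum_add
    (summable_coeffConv (hA t ht) (hB' t ht) k)] at termwise

namespace RapidlyDecayingOfOrder

variable {n : ℕ}

theorem rapidlyDecayingOn (h : RapidlyDecayingOfOrder n I c) : RapidlyDecayingOn I c := by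
  cases n with
  | zero => exact h
  | succ n => exact h.1

theorem mono (h : RapidlyDecayingOfOrder n I c) (hJ : J ⊆ I) : RapidlyDecayingOfOrder n J c := by
  induction n generalizing c with
  | zero => exact RapidlyDecayingOn.mono h hJ
  | succ n ih =>
    obtain ⟨hc, c', hderiv, hc'⟩ := h
    exact ⟨hc.mono hJ, c', fun t ht => hderiv t (hJ ht), ih hc'⟩

theorem of_succ (h : RapidlyDecayingOfOrder (n + 1) I c) : RapidlyDecayingOfOrder n I c := by
  induction n generalizing c with
  | zero => exact h.1
  | succ n ih =>
    obtain ⟨hc, c', hderiv, hc'⟩ := h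
    exact ⟨hc, c', hderiv, ih hc'⟩

theorem zero : RapidlyDecayingOfOrder n I fun (_ : ℝ) (_ : Fin d → ℤ) => (0 : ℂ) := by
  induction n with
  | zero => exact RapidlyDecayingOn.zero
  | succ n ih => exact ⟨.zero, _, fun t _ _ => hasDerivAt_const t 0, ih⟩

theorem add (ha : RapidlyDecayingOfOrder n I a) (hb : RapidlyDecayingOfOrder n I b) :
    RapidlyDecayingOfOrder n I fun t k => a t k + b t k := by
  induction n generalizing a b with
  | zero => exact RapidlyDecayingOn.add ha hb
  | succ n ih =>
    obtain ⟨ha, a', hda, ha'⟩ := ha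
    obtain ⟨hb, b', hdb, hb'⟩ := hb
    exact ⟨ha.add hb, _, fun t ht k => (hda t ht k).add (hdb t ht k), ih ha' hb'⟩

theorem sum {ι : Type*} {s : Finset ι} {f : ι → ℝ → (Fin d → ℤ) → ℂ}
    (h : ∀ i ∈ s, RapidlyDecayingOfOrder n I (f i)) :
    RapidlyDecayingOfOrder n I fun t k => ∑ i ∈ s, f i t k := by
  induction s using Finset.cons_induction with
  | empty => simpa only [Finset.sum_empty] using zero
  | cons i s hi ih =>
    simp only [Finset.sum_cons]
    exact (h i (Finset.mem_cons_self i s)).add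
      (ih fun j hj => h j (Finset.mem_cons_of_mem hj))

theorem mul_symbol (h : RapidlyDecayingOfOrder n I c) {p : (Fin d → ℤ) → ℂ} {C : ℝ} {q : ℕ}
    (hp : ∀ k, ‖p k‖ ≤ C * freqWeight k ^ q) :
    RapidlyDecayingOfOrder n I fun t k => p k * c t k := by
  induction n generalizing c with
  | zero => exact RapidlyDecayingOn.mul_symbol h hp
  | succ n ih =>
    obtain ⟨hc, c', hderiv, hc'⟩ := h
    exact ⟨hc.mul_symbol hp, _, fun t ht k => (hderiv t ht k).const_mul (p k), ih hc'⟩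

theorem coeffConv (hI : IsOpen I) (hI' : IsPreconnected I) (ha : RapidlyDecayingOfOrder n I a)
    (hb : RapidlyDecayingOfOrder n I b) :
    RapidlyDecayingOfOrder n I fun t => coeffConv (a t) (b t) := by
  induction n generalizing a b with
  | zero => exact RapidlyDecayingOn.coeffConv ha hb
  | succ n ih =>
    have ha_n := ha.of_succ
    have hb_n := hb.of_succ
    obtain ⟨ha, a', hda, ha'⟩ := ha
    obtain ⟨hb, b', hdb, hb'⟩ := hb
    exact ⟨ha.coeffConv hb, _, fun t ht k => hasDerivAt_coeffConv hI hI' ha hb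
      ha'.rapidlyDecayingOn hb'.rapidlyDecayingOn hda hdb ht k, (ih ha' hb_n).add (ih ha_n hb')⟩

end RapidlyDecayingOfOrder

theorem RapidlyDecayingOn.sum {ι : Type*} {s : Finset ι} {f : ι → ℝ → (Fin d → ℤ) → ℂ}
    (h : ∀ i ∈ s, RapidlyDecayingOn I (f i)) :
    RapidlyDecayingOn I fun t k => ∑ i ∈ s, f i t k :=
  RapidlyDecayingOfOrder.sum (n := 0) h

end RapidDecay

/-! ### Fourier series on the unit cell -/

section PlaneWave
open scoped ContDiff

/-- The projection of `ℝ^d` onto the unit torus. -/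
def toTorus {d : ℕ} (x : Fin d → ℝ) : UnitAddTorus (Fin d) := fun i => (x i : UnitAddCircle)

/-- The Fourier monomial `exp (2πi k·x)` of frequency `k`, as a periodic function on `ℝ^d`. -/
noncomputable def planeWave {d : ℕ} (k : Fin d → ℤ) (x : Fin d → ℝ) : ℂ :=
  UnitAddTorus.mFourier k (toTorus x)

/-- The Fourier symbol of the partial derivative in direction `i`. -/
noncomputable def derivSymbol {d : ℕ} (i : Fin d) (k : Fin d → ℤ) : ℂ := 2 * π * Complex.I * k i

variable {d : ℕ}

theorem toTorus_add_int (x : Fin d → ℝ) (l : Fin d → ℤ) :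
    toTorus (x + fun i => (l i : ℝ)) = toTorus x := by
  funext i
  have int_eq_zero : ((l i : ℝ) : UnitAddCircle) = 0 :=
    (AddCircle.coe_eq_zero_iff 1).2 ⟨l i, by simp⟩
  simp only [toTorus, Pi.add_apply, AddCircle.coe_add, int_eq_zero, add_zero]

theorem planeWave_add_int (k : Fin d → ℤ) (x : Fin d → ℝ) (l : Fin d → ℤ) :
    planeWave k (x + fun i => (l i : ℝ)) = planeWave k x :=
  congrArg (UnitAddTorus.mFourier k) (toTorus_add_int x l)

theorem planeWave_add (k j : Fin d → ℤ) (x : Fin d → ℝ) :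
    planeWave (k + j) x = planeWave k x * planeWave j x :=
  UnitAddTorus.mFourier_add

theorem planeWave_eq_exp (k : Fin d → ℤ) (x : Fin d → ℝ) :
    planeWave k x = Complex.exp (∑ i, derivSymbol i k * x i) := by
  simp only [planeWave, UnitAddTorus.mFourier, ContinuousMap.coe_mk, Complex.exp_sum, toTorus]
  refine Finset.prod_congr rfl fun i _ => ?_
  rw [fourier_coe_apply, derivSymbol]
  simp

theorem norm_planeWave (k : Fin d → ℤ) (x : Fin d → ℝ) : ‖planeWave k x‖ = 1 := by
  simp only [planeWave, UnitAddTorus.mFourier, ContinuousMap.coe_mk, norm_prod, fourier_apply,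
    Circle.norm_coe, Finset.prod_const_one]

theorem norm_derivSymbol (i : Fin d) (k : Fin d → ℤ) : ‖derivSymbol i k‖ = 2 * π * |(k i : ℝ)| := by
  simp [derivSymbol, abs_of_pos pi_pos]

theorem norm_derivSymbol_le (i : Fin d) (k : Fin d → ℤ) :
    ‖derivSymbol i k‖ ≤ 2 * π * freqWeight k ^ 1 := by
  rw [norm_derivSymbol, pow_one]
  gcongr
  exact abs_coord_le_freqWeight k i

theorem hasFDerivAt_planeWave (k : Fin d → ℤ) (x : Fin d → ℝ) :
    HasFDerivAt (planeWave k)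
      (∑ i, (ContinuousLinearMap.proj (R := ℝ) (φ := fun _ : Fin d => ℝ) i).smulRight
        (derivSymbol i k * planeWave k x)) x := by
  have phase : HasFDerivAt (fun y : Fin d → ℝ => ∑ i, derivSymbol i k * y i)
      (∑ i, (ContinuousLinearMap.proj (R := ℝ) (φ := fun _ : Fin d => ℝ) i).smulRight
        (derivSymbol i k)) x := by
    refine HasFDerivAt.fun_sum fun i _ => ?_
    refine ((Complex.ofRealCLM.comp (ContinuousLinearMap.proj (φ := fun _ : Fin d => ℝ)
      i)).hasFDerivAt.const_mul (derivSymbol i k)).congr_fderiv ?_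
    ext v
    simp [mul_comm]
  rw [funext (planeWave_eq_exp k)]
  refine phase.cexp.congr_fderiv ?_
  rw [Finset.smul_sum]
  refine Finset.sum_congr rfl fun i _ => ?_
  ext v
  simp only [smul_apply, ContinuousLinearMap.smulRight_apply, smul_eq_mul, Complex.real_smul]
  ring

theorem contDiff_planeWave (k : Fin d → ℤ) : ContDiff ℝ ∞ (planeWave k) := by
  rw [funext (planeWave_eq_exp k)]
  exact (ContDiff.sum fun i _ =>
    contDiff_const.mul (Complex.ofRealCLM.contDiff.comp (contDiff_apply ℝ ℝ i))).cexp

theorem fderiv_planeWave_single (k : Fin d → ℤ) (x : Fin d → ℝ) (i : Fin d) :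
    fderiv ℝ (planeWave k) x (Pi.single i 1) = derivSymbol i k * planeWave k x := by
  rw [(hasFDerivAt_planeWave k x).fderiv]
  simp [sum_apply, Pi.single_apply]

end PlaneWave

section Synthesis
open scoped ContDiff

/-- The periodic function with the prescribed Fourier coefficients; junk unless they are
summable. -/
noncomputable def fourierSynthesis {d : ℕ} (c : (Fin d → ℤ) → ℂ) (x : Fin d → ℝ) : ℂ :=
  ∑' k, c k * planeWave k x

/-- The differential on space-time with time derivative `z` and spatial partial derivatives `w`. -/
noncomputable def spaceTimeForm {d : ℕ} (z : ℂ) (w : Fin d → ℂ) : (ℝ × (Fin d → ℝ)) →L[ℝ] ℂ :=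
  (ContinuousLinearMap.fst ℝ ℝ (Fin d → ℝ)).smulRight z + ∑ i,
    ((ContinuousLinearMap.proj (R := ℝ) (φ := fun _ : Fin d => ℝ) i).comp
      (ContinuousLinearMap.snd ℝ ℝ (Fin d → ℝ))).smulRight (w i)

variable {d : ℕ}

theorem spaceTimeForm_apply (z : ℂ) (w : Fin d → ℂ) (v : ℝ × (Fin d → ℝ)) :
    spaceTimeForm z w v = v.1 * z + ∑ i, v.2 i * w i := by
  simp [spaceTimeForm, sum_apply]

theorem norm_spaceTimeForm_le (z : ℂ) (w : Fin d → ℂ) : ‖spaceTimeForm z w‖ ≤ ‖z‖ + ∑ i, ‖w i‖ := by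
  refine ContinuousLinearMap.opNorm_le_bound _ (by positivity) fun v => ?_
  rw [spaceTimeForm_apply, add_mul, Finset.sum_mul]
  refine (norm_add_le _ _).trans (add_le_add ?_
    ((norm_sum_le _ _).trans (Finset.sum_le_sum fun i _ => ?_)))
  · rw [norm_mul, Complex.norm_real, mul_comm]
    gcongr
    exact norm_fst_le v
  · rw [norm_mul, Complex.norm_real, mul_comm]
    gcongr
    exact (norm_le_pi_norm v.2 i).trans (norm_snd_le v)

theorem hasSum_spaceTimeForm {ι : Type*} {f : ι → ℂ} {g : Fin d → ι → ℂ} {z : ℂ} {w : Fin d → ℂ}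
    (hf : HasSum f z) (hg : ∀ i, HasSum (g i) (w i)) :
    HasSum (fun k => spaceTimeForm (f k) fun i => g i k) (spaceTimeForm z w) :=
  (hf.mapL (ContinuousLinearMap.smulRightL ℝ (ℝ × (Fin d → ℝ)) ℂ _)).add
    (hasSum_sum fun i _ =>
      (hg i).mapL (ContinuousLinearMap.smulRightL ℝ (ℝ × (Fin d → ℝ)) ℂ _))

theorem contDiffOn_spaceTimeForm {E : Type*} [NormedAddCommGroup E] [NormedSpace ℝ E] {s : Set E}
    {n : WithTop ℕ∞} {f : E → ℂ} {g : Fin d → E → ℂ} (hf : ContDiffOn ℝ n f s)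
    (hg : ∀ i, ContDiffOn ℝ n (g i) s) :
    ContDiffOn ℝ n (fun p => spaceTimeForm (f p) fun i => g i p) s :=
  ((ContinuousLinearMap.smulRightL ℝ (ℝ × (Fin d → ℝ)) ℂ _).contDiff.comp_contDiffOn hf).add
    (ContDiffOn.sum fun i _ =>
      (ContinuousLinearMap.smulRightL ℝ (ℝ × (Fin d → ℝ)) ℂ _).contDiff.comp_contDiffOn (hg i))

theorem fourierSynthesis_add_int (c : (Fin d → ℤ) → ℂ) (x : Fin d → ℝ) (l : Fin d → ℤ) :
    fourierSynthesis c (x + fun i => (l i : ℝ)) = fourierSynthesis c x := by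
  simp only [fourierSynthesis, planeWave_add_int]

section Summable

variable {a b c : (Fin d → ℤ) → ℂ}

theorem summable_norm_mul_planeWave (hc : Summable fun k => ‖c k‖) (x : Fin d → ℝ) :
    Summable fun k => ‖c k * planeWave k x‖ := by
  simpa only [norm_mul, norm_planeWave, mul_one] using hc

theorem hasSum_fourierSynthesis (hc : Summable fun k => ‖c k‖) (x : Fin d → ℝ) :
    HasSum (fun k => c k * planeWave k x) (fourierSynthesis c x) :=
  (summable_norm_mul_planeWave hc x).of_norm.hasSum

theorem fourierSynthesis_add (ha : Summable fun k => ‖a k‖) (hb : Summable fun k => ‖b k‖)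
    (x : Fin d → ℝ) :
    fourierSynthesis (fun k => a k + b k) x = fourierSynthesis a x + fourierSynthesis b x := by
  simpa only [fourierSynthesis, add_mul] using
    ((hasSum_fourierSynthesis ha x).add (hasSum_fourierSynthesis hb x)).tsum_eq

theorem fourierSynthesis_const_mul (z : ℂ) (c : (Fin d → ℤ) → ℂ) (x : Fin d → ℝ) :
    fourierSynthesis (fun k => z * c k) x = z * fourierSynthesis c x := by
  simp only [fourierSynthesis, mul_assoc, tsum_mul_left]

theorem fourierSynthesis_sum {ι : Type*} {s : Finset ι} {f : ι → (Fin d → ℤ) → ℂ}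
    (hf : ∀ i ∈ s, Summable fun k => ‖f i k‖) (x : Fin d → ℝ) :
    fourierSynthesis (fun k => ∑ i ∈ s, f i k) x = ∑ i ∈ s, fourierSynthesis (f i) x := by
  simpa only [fourierSynthesis, Finset.sum_mul] using
    (hasSum_sum fun i hi => hasSum_fourierSynthesis (hf i hi) x).tsum_eq

theorem fourierSynthesis_coeffConv (ha : Summable fun k => ‖a k‖) (hb : Summable fun k => ‖b k‖)
    (x : Fin d → ℝ) :
    fourierSynthesis (coeffConv a b) x = fourierSynthesis a x * fourierSynthesis b x := by
  have ha_wave := summable_norm_mul_planeWave ha x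
  have hb_wave := summable_norm_mul_planeWave hb x
  have product_summable := summable_mul_of_summable_norm ha_wave hb_wave
  let shear : (Fin d → ℤ) × (Fin d → ℤ) ≃ (Fin d → ℤ) × (Fin d → ℤ) :=
    { toFun := fun p => (p.1 - p.2, p.2)
      invFun := fun p => (p.1 + p.2, p.2)
      left_inv := fun p => by simp
      right_inv := fun p => by simp }
  unfold fourierSynthesis
  rw [tsum_mul_tsum_of_summable_norm ha_wave hb_wave, ← shear.tsum_eq]
  refine Eq.trans (tsum_congr fun k => ?_) (shear.summable_iff.2 product_summable).tsum_prod.symm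
  rw [coeffConv, ← tsum_mul_right]
  refine tsum_congr fun j => ?_
  simp only [shear, Function.comp_apply, Equiv.coe_fn_mk]
  rw [show planeWave k x = planeWave (k - j) x * planeWave j x by
    rw [← planeWave_add, sub_add_cancel]]
  ring

end Summable

section Smoothness

variable {I : Set ℝ} {c c' : ℝ → (Fin d → ℤ) → ℂ} {t : ℝ}

theorem RapidlyDecayingOn.continuousOn_fourierSynthesis (h : RapidlyDecayingOn I c) :
    ContinuousOn (fun p : ℝ × (Fin d → ℝ) => fourierSynthesis (c p.1) p.2)
      (I ×ˢ Set.univ) := by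
  obtain ⟨C, hC⟩ := h.exists_norm_le_mul_inv
  refine continuousOn_tsum (fun k => ?_) (summable_inv_freqWeight_pow.mul_left C)
    fun k p hp => ?_
  · exact ((h.continuousOn k).comp continuousOn_fst fun p hp => hp.1).mul
      ((contDiff_planeWave k).continuous.comp continuous_snd).continuousOn
  · rw [norm_mul, norm_planeWave, mul_one]
    exact hC p.1 hp.1 k

theorem hasFDerivAt_mul_planeWave {a : ℝ → ℂ} {a' : ℂ} (ha : HasDerivAt a a' t)
    (k : Fin d → ℤ) (x : Fin d → ℝ) :
    HasFDerivAt (fun p : ℝ × (Fin d → ℝ) => a p.1 * planeWave k p.2)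
      (spaceTimeForm (a' * planeWave k x) fun i => derivSymbol i k * a t * planeWave k x)
      (t, x) := by
  have time_factor : HasFDerivAt (fun p : ℝ × (Fin d → ℝ) => a p.1) _ (t, x) :=
    ha.hasFDerivAt.comp (t, x) hasFDerivAt_fst
  have space_factor : HasFDerivAt (fun p : ℝ × (Fin d → ℝ) => planeWave k p.2) _ (t, x) :=
    HasFDerivAt.comp (g := planeWave k) (t, x) (hasFDerivAt_planeWave k x) hasFDerivAt_snd
  refine (time_factor.mul space_factor).congr_fderiv (ContinuousLinearMap.ext fun v => ?_)
  rw [spaceTimeForm_apply]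
  simp only [add_apply, smul_apply, sum_apply, ContinuousLinearMap.comp_apply,
    ContinuousLinearMap.smulRight_apply, ContinuousLinearMap.proj_apply,
    ContinuousLinearMap.coe_fst', ContinuousLinearMap.coe_snd',
    ContinuousLinearMap.toSpanSingleton_apply, smul_eq_mul, Complex.real_smul, Finset.mul_sum]
  rw [add_comm]
  congr 1
  · ring
  · exact Finset.sum_congr rfl fun i _ => by ring

theorem RapidlyDecayingOn.hasFDerivAt_fourierSynthesis (hc : RapidlyDecayingOn I c)
    (hc' : RapidlyDecayingOn I c') (hI : IsOpen I) (hI' : IsPreconnected I)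
    (hderiv : ∀ t ∈ I, ∀ k, HasDerivAt (fun r => c r k) (c' t k) t) (ht : t ∈ I)
    (x : Fin d → ℝ) :
    HasFDerivAt (fun p : ℝ × (Fin d → ℝ) => fourierSynthesis (c p.1) p.2)
      (spaceTimeForm (fourierSynthesis (c' t) x)
        fun i => fourierSynthesis (fun k => derivSymbol i k * c t k) x) (t, x) := by
  have hc_space (i : Fin d) : RapidlyDecayingOn I fun t k => derivSymbol i k * c t k :=
    hc.mul_symbol (norm_derivSymbol_le i)
  obtain ⟨C', hC'⟩ := hc'.exists_norm_le_mul_inv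
  choose C hC using fun i => (hc_space i).exists_norm_le_mul_inv
  have weights := summable_inv_freqWeight_pow (d := d)
  have termwise := hasFDerivAt_tsum_of_isPreconnected (𝕜 := ℝ)
    (f := fun k (p : ℝ × (Fin d → ℝ)) => c p.1 k * planeWave k p.2)
    (f' := fun k p => spaceTimeForm (c' p.1 k * planeWave k p.2)
      fun i => derivSymbol i k * c p.1 k * planeWave k p.2)
    ((weights.mul_left C').add (summable_sum fun i _ => weights.mul_left (C i)))
    (hI.prod isOpen_univ) (hI'.prod isPreconnected_univ)
    (fun k p hp => hasFDerivAt_mul_planeWave (hderiv p.1 hp.1 k) k p.2)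
    (fun k p hp => (norm_spaceTimeForm_le _ _).trans <| by
      simp only [norm_mul _ (planeWave _ _), norm_planeWave, mul_one]
      exact add_le_add (hC' p.1 hp.1 k) (Finset.sum_le_sum fun i _ => hC i p.1 hp.1 k))
    (x₀ := (t, x)) (x := (t, x)) ⟨ht, trivial⟩
    (hasSum_fourierSynthesis (hc.summable_norm ht) x).summable ⟨ht, trivial⟩
  exact termwise.congr_fderiv (hasSum_spaceTimeForm
    (hasSum_fourierSynthesis (hc'.summable_norm ht) x)
    fun i => hasSum_fourierSynthesis ((hc_space i).summable_norm ht) x).tsum_eq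

theorem RapidlyDecayingOfOrder.contDiffOn_fourierSynthesis {n : ℕ}
    (hc : RapidlyDecayingOfOrder n I c) (hI : IsOpen I) (hI' : IsPreconnected I) :
    ContDiffOn ℝ n (fun p : ℝ × (Fin d → ℝ) => fourierSynthesis (c p.1) p.2)
      (I ×ˢ Set.univ) := by
  induction n generalizing c with
  | zero =>
    rw [Nat.cast_zero, contDiffOn_zero]
    exact hc.rapidlyDecayingOn.continuousOn_fourierSynthesis
  | succ n ih =>
    have hc_n := hc.of_succ
    obtain ⟨hc, c', hderiv, hc'⟩ := hc
    have hasFDerivAt : ∀ p ∈ I ×ˢ (Set.univ : Set (Fin d → ℝ)), HasFDerivAt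
        (fun p : ℝ × (Fin d → ℝ) => fourierSynthesis (c p.1) p.2) _ p := fun p hp =>
      hc.hasFDerivAt_fourierSynthesis hc'.rapidlyDecayingOn hI hI' hderiv hp.1 p.2
    rw [Nat.cast_add_one, contDiffOn_succ_iff_fderiv_of_isOpen (hI.prod isOpen_univ)]
    refine ⟨fun p hp => (hasFDerivAt p hp).differentiableAt.differentiableWithinAt, by simp, ?_⟩
    exact (contDiffOn_spaceTimeForm (ih hc') fun i =>
      ih (hc_n.mul_symbol (norm_derivSymbol_le i))).congr fun p hp => (hasFDerivAt p hp).fderiv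

end Smoothness

end Synthesis

section CellFourierCoeff
open Set
open scoped ContDiff

/-- The Fourier coefficient of frequency `k` of a real periodic function. -/
noncomputable def cellFourierCoeff {d : ℕ} (f : (Fin d → ℝ) → ℝ) (k : Fin d → ℤ) : ℂ :=
  ∫ x in unitCell d, planeWave (-k) x * f x

/-- Decay of Fourier coefficients faster than every power of the frequency. -/
def RapidlyDecaying {d : ℕ} (c : (Fin d → ℤ) → ℂ) : Prop :=
  ∀ m : ℕ, ∃ C : ℝ, ∀ k, ‖c k‖ * freqWeight k ^ m ≤ C

variable {d : ℕ} {f : (Fin d → ℝ) → ℝ} {I K : Set ℝ} {v : ℝ → (Fin d → ℝ) → ℝ} {t : ℝ}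

theorem fderiv_planeWave_neg_mul_single (hf : ContDiff ℝ ∞ f) (i : Fin d) (k : Fin d → ℤ)
    (x : Fin d → ℝ) :
    fderiv ℝ (fun y => planeWave (-k) y * (f y : ℂ)) x (Pi.single i 1) =
      planeWave (-k) x * (pd d i f x : ℂ) - derivSymbol i k * (planeWave (-k) x * f x) := by
  have hf_complex : HasFDerivAt (fun y => (f y : ℂ)) (Complex.ofRealCLM.comp (fderiv ℝ f x)) x :=
    Complex.ofRealCLM.hasFDerivAt.comp x (hf.differentiable (by simp) x).hasFDerivAt
  have hwave := ((contDiff_planeWave (-k)).differentiable (by simp) x).hasFDerivAt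
  have symbol_neg : derivSymbol i (-k) = -derivSymbol i k := by simp [derivSymbol]
  rw [(hwave.fun_mul hf_complex).fderiv]
  simp only [add_apply, smul_apply, ContinuousLinearMap.comp_apply, smul_eq_mul,
    fderiv_planeWave_single, symbol_neg, Complex.ofRealCLM_apply, pd]
  ring

theorem cellFourierCoeff_pd (hf : ContDiff ℝ ∞ f) (pf : PeriodicIn d f) (i : Fin d)
    (k : Fin d → ℤ) : cellFourierCoeff (pd d i f) k = derivSymbol i k * cellFourierCoeff f k := by
  have hwave := contDiff_planeWave (-k)
  have smooth : ContDiff ℝ ∞ fun x => planeWave (-k) x * (f x : ℂ) :=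
    hwave.mul (Complex.ofRealCLM.contDiff.comp hf)
  have integral_eq_zero := integral_fderiv_single_eq_zero
    (smooth.of_le (by exact_mod_cast le_top))
    (fun x l => by simp only [planeWave_add_int, pf x l]) i
  simp only [fderiv_planeWave_neg_mul_single hf] at integral_eq_zero
  rw [integral_sub, integral_const_mul, sub_eq_zero] at integral_eq_zero
  · exact integral_eq_zero
  · exact (hwave.continuous.mul (Complex.continuous_ofReal.comp
      (contDiff_pd hf i).continuous)).integrableOn_Icc
  · exact (continuous_const.mul smooth.continuous).integrableOn_Icc

theorem norm_cellFourierCoeff_le {C : ℝ} (hf : ∀ x ∈ unitCell d, ‖f x‖ ≤ C) (k : Fin d → ℤ) :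
    ‖cellFourierCoeff f k‖ ≤ C := by
  have volume_real : volume.real (unitCell d) = 1 := by simp [Measure.real, Real.volume_Icc_pi]
  have bound := norm_setIntegral_le_of_norm_le_const (μ := volume) (s := unitCell d)
    (f := fun x => planeWave (-k) x * (f x : ℂ)) (C := C) (by simp [Real.volume_Icc_pi])
    fun x hx => by
      rw [norm_mul, norm_planeWave, one_mul, Complex.norm_real]
      exact hf x hx
  rwa [volume_real, mul_one] at bound

theorem freqWeight_le_one_add_sum (k : Fin d → ℤ) : freqWeight k ≤ 1 + ∑ i, |(k i : ℝ)| := by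
  refine add_le_add_right ((pi_norm_le_iff_of_nonneg (by positivity)).2 fun i => ?_) 1
  rw [Int.norm_eq_abs]
  exact Finset.single_le_sum (f := fun i => |(k i : ℝ)|) (fun _ _ => abs_nonneg _)
    (Finset.mem_univ i)

theorem SmoothOnStrip.pd (h : SmoothOnStrip I v) (hI : IsOpen I) (i : Fin d) :
    SmoothOnStrip I fun t => pd d i (v t) :=
  (h.fderiv_apply hI (0, Pi.single i 1)).congr fun _ ht x => h.fderiv_slice_apply hI ht x _

theorem SmoothOnStrip.exists_norm_le (h : SmoothOnStrip I v) (hK : IsCompact K) (hKI : K ⊆ I) :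
    ∃ C, ∀ t ∈ K, ∀ x ∈ unitCell d, ‖v t x‖ ≤ C := by
  obtain ⟨C, hC⟩ := (hK.prod isCompact_Icc).exists_bound_of_continuousOn
    (h.continuousOn.mono (prod_mono hKI (subset_univ (unitCell d))))
  exact ⟨C, fun t ht x hx => hC (t, x) ⟨ht, hx⟩⟩

theorem norm_cellFourierCoeff_mul_abs_le (hf : ContDiff ℝ ∞ f) (pf : PeriodicIn d f) (i : Fin d)
    (k : Fin d → ℤ) :
    ‖cellFourierCoeff f k‖ * |(k i : ℝ)| ≤ ‖cellFourierCoeff (pd d i f) k‖ := by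
  rw [cellFourierCoeff_pd hf pf, norm_mul, norm_derivSymbol, mul_comm]
  gcongr
  exact le_mul_of_one_le_left (abs_nonneg _) (by linarith [two_le_pi])

theorem SmoothOnStrip.exists_norm_cellFourierCoeff_mul_le (h : SmoothOnStrip I v) (hI : IsOpen I)
    (pv : ∀ t ∈ I, PeriodicIn d (v t)) (hK : IsCompact K) (hKI : K ⊆ I) (m : ℕ) :
    ∃ C : ℝ, ∀ t ∈ K, ∀ k : Fin d → ℤ, ‖cellFourierCoeff (v t) k‖ * freqWeight k ^ m ≤ C := by
  induction m generalizing v with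
  | zero =>
    obtain ⟨C, hC⟩ := h.exists_norm_le hK hKI
    exact ⟨C, fun t ht k => by simpa using norm_cellFourierCoeff_le (hC t ht) k⟩
  | succ m ih =>
    obtain ⟨C, hC⟩ := ih h pv
    choose Cp hCp using fun i => ih (h.pd hI i) fun t ht => periodicIn_pd (pv t ht) i
    refine ⟨C + ∑ i, Cp i, fun t ht k => ?_⟩
    have weight_pos := freqWeight_pos k
    calc ‖cellFourierCoeff (v t) k‖ * freqWeight k ^ (m + 1)
        ≤ ‖cellFourierCoeff (v t) k‖ * (freqWeight k ^ m * (1 + ∑ i, |(k i : ℝ)|)) := by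
          rw [pow_succ]
          gcongr
          exact freqWeight_le_one_add_sum k
      _ = ‖cellFourierCoeff (v t) k‖ * freqWeight k ^ m +
          ∑ i, ‖cellFourierCoeff (v t) k‖ * |(k i : ℝ)| * freqWeight k ^ m := by
          rw [← Finset.sum_mul, ← Finset.mul_sum]
          ring
      _ ≤ C + ∑ i, Cp i := by
          refine add_le_add (hC t ht k) (Finset.sum_le_sum fun i _ => le_trans ?_ (hCp i t ht k))
          gcongr
          exact norm_cellFourierCoeff_mul_abs_le (h.contDiff_slice (hKI ht)) (pv t (hKI ht)) i k

theorem SmoothOnStrip.hasDerivAt_cellFourierCoeff (h : SmoothOnStrip I v) (hI : IsOpen I)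
    (ht : t ∈ I) (k : Fin d → ℤ) :
    HasDerivAt (fun r => cellFourierCoeff (v r) k)
      (cellFourierCoeff (fun x => _root_.deriv (fun r => v r x) t) k) t := by
  have smooth : SmoothOnStrip I fun t x => planeWave (-k) x * (v t x : ℂ) :=
    ContDiffOn.mul ((contDiff_planeWave (-k)).comp contDiff_snd).contDiffOn
      (Complex.ofRealCLM.contDiff.comp_contDiffOn h)
  simpa only [cellFourierCoeff, ((h.hasDerivAt hI ht _).ofReal_comp.const_mul _).deriv] using
    smooth.hasDerivAt_integral hI ht

theorem periodicIn_deriv (hI : IsOpen I) (pv : ∀ t ∈ I, PeriodicIn d (v t)) (ht : t ∈ I) :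
    PeriodicIn d fun x => deriv (fun r => v r x) t := by
  intro x k
  refine EventuallyEq.deriv_eq ?_
  filter_upwards [hI.mem_nhds ht] with r hr using pv r hr x k

theorem SmoothOnStrip.rapidlyDecayingOn_cellFourierCoeff (h : SmoothOnStrip I v) (hI : IsOpen I)
    (pv : ∀ t ∈ I, PeriodicIn d (v t)) (hK : IsCompact K) (hKI : K ⊆ I) :
    RapidlyDecayingOn K fun t => cellFourierCoeff (v t) where
  continuousOn k t ht :=
    (h.hasDerivAt_cellFourierCoeff hI (hKI ht) k).continuousAt.continuousWithinAt
  decay m := by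
    obtain ⟨C, hC⟩ := h.exists_norm_cellFourierCoeff_mul_le hI pv hK hKI m
    exact ⟨max C 0, le_max_right _ _, fun t ht k => (hC t ht k).trans (le_max_left _ _)⟩

theorem SmoothOnStrip.rapidlyDecayingOfOrder_cellFourierCoeff (h : SmoothOnStrip I v)
    (hI : IsOpen I) (pv : ∀ t ∈ I, PeriodicIn d (v t)) (hK : IsCompact K) (hKI : K ⊆ I) (n : ℕ) :
    RapidlyDecayingOfOrder n K fun t => cellFourierCoeff (v t) := by
  induction n generalizing v with
  | zero => exact h.rapidlyDecayingOn_cellFourierCoeff hI pv hK hKI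
  | succ n ih =>
    exact ⟨h.rapidlyDecayingOn_cellFourierCoeff hI pv hK hKI, _,
      fun t ht k => h.hasDerivAt_cellFourierCoeff hI (hKI ht) k,
      ih (h.deriv hI) fun t ht => periodicIn_deriv hI pv ht⟩

theorem rapidlyDecaying_cellFourierCoeff (hf : ContDiff ℝ ∞ f) (pf : PeriodicIn d f) :
    RapidlyDecaying (cellFourierCoeff f) := by
  have smooth : SmoothOnStrip univ fun _ : ℝ => f := (hf.comp contDiff_snd).contDiffOn
  intro m
  obtain ⟨C, hC⟩ := smooth.exists_norm_cellFourierCoeff_mul_le isOpen_univ (fun _ _ => pf)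
    isCompact_singleton (subset_univ {0}) m
  exact ⟨C, hC 0 rfl⟩

theorem isOpenQuotientMap_toTorus : IsOpenQuotientMap (toTorus (d := d)) :=
  IsOpenQuotientMap.piMap fun _ => QuotientAddGroup.isOpenQuotientMap_mk

theorem PeriodicIn.eq_of_toTorus_eq (pf : PeriodicIn d f) {x y : Fin d → ℝ}
    (hxy : toTorus x = toTorus y) : f x = f y := by
  have differ_by_int (i : Fin d) : ∃ n : ℤ, y i = x i + n := by
    have sub_eq_zero : ((y i - x i : ℝ) : UnitAddCircle) = 0 := by
      rw [AddCircle.coe_sub, sub_eq_zero]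
      exact (congrFun hxy i).symm
    obtain ⟨n, hn⟩ := (AddCircle.coe_eq_zero_iff (1 : ℝ)).1 sub_eq_zero
    rw [zsmul_eq_mul, mul_one] at hn
    exact ⟨n, by linarith⟩
  choose n hn using differ_by_int
  rw [show y = x + fun i => (n i : ℝ) from funext hn, pf x n]

theorem PeriodicIn.exists_torusLift (pf : PeriodicIn d f) (hf : Continuous f) :
    ∃ F : C(UnitAddTorus (Fin d), ℂ), ∀ x, F (toTorus x) = f x := by
  let lift (y : UnitAddTorus (Fin d)) : ℂ :=
    f (Function.surjInv isOpenQuotientMap_toTorus.surjective y)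
  have lift_toTorus (x : Fin d → ℝ) : lift (toTorus x) = f x :=
    congrArg ((↑) : ℝ → ℂ) (pf.eq_of_toTorus_eq (Function.surjInv_eq _ (toTorus x)))
  have continuous_lift : Continuous lift := by
    rw [← isOpenQuotientMap_toTorus.continuous_comp_iff]
    exact (Complex.continuous_ofReal.comp hf).congr fun x => (lift_toTorus x).symm
  exact ⟨⟨lift, continuous_lift⟩, lift_toTorus⟩

theorem mFourierCoeff_eq_cellFourierCoeff {F : C(UnitAddTorus (Fin d), ℂ)}
    (hF : ∀ x, F (toTorus x) = f x) (k : Fin d → ℤ) :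
    UnitAddTorus.mFourierCoeff F k = cellFourierCoeff f k := by
  have halfOpenCell_ae_eq :
      {x : Fin d → ℝ | ∀ i, x i ∈ Ioc ((0 : Fin d → ℝ) i) ((0 : Fin d → ℝ) i + 1)} =ᵐ[volume]
        unitCell d := by
    have pi_form : {x : Fin d → ℝ | ∀ i, x i ∈ Ioc ((0 : Fin d → ℝ) i) ((0 : Fin d → ℝ) i + 1)} =
        univ.pi fun i => Ioc ((0 : Fin d → ℝ) i) ((1 : Fin d → ℝ) i) := by
      ext x
      simp
    rw [pi_form]
    exact Measure.univ_pi_Ioc_ae_eq_Icc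
  rw [UnitAddTorus.mFourierCoeff_eq_integral F k 0, setIntegral_congr_set halfOpenCell_ae_eq]
  simp only [smul_eq_mul]
  exact integral_congr_ae (ae_of_all _ fun x => congrArg (planeWave (-k) x * ·) (hF x))

theorem RapidlyDecaying.summable {c : (Fin d → ℤ) → ℂ} (hc : RapidlyDecaying c) : Summable c := by
  obtain ⟨C, hC⟩ := hc (d + 1)
  refine .of_norm_bounded (summable_inv_freqWeight_pow.mul_left C) fun k => ?_
  rw [← div_eq_mul_inv, le_div_iff₀ (pow_pos (freqWeight_pos k) _)]
  exact hC k

theorem fourierSynthesis_cellFourierCoeff (hf : ContDiff ℝ ∞ f) (pf : PeriodicIn d f)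
    (x : Fin d → ℝ) : fourierSynthesis (cellFourierCoeff f) x = f x := by
  obtain ⟨F, hF⟩ := pf.exists_torusLift hf.continuous
  have coeff_eq : UnitAddTorus.mFourierCoeff F = cellFourierCoeff f :=
    funext (mFourierCoeff_eq_cellFourierCoeff hF)
  have summable_coeff : Summable (UnitAddTorus.mFourierCoeff F) := by
    rw [coeff_eq]
    exact (rapidlyDecaying_cellFourierCoeff hf pf).summable
  have series := UnitAddTorus.hasSum_mFourier_series_apply_of_summable summable_coeff (toTorus x)
  rw [hF, coeff_eq] at series
  exact series.tsum_eq

end CellFourierCoeff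

/-! ### Duhamel iteration for the advection-diffusion equation -/

section Duhamel
open Set

/-- The solution `c` of `c' = -l c + b` with `c a = 0`, given by Duhamel's formula. -/
noncomputable def duhamel (l a : ℝ) (b : ℝ → ℂ) (t : ℝ) : ℂ :=
  (exp (-(l * t)) : ℂ) * ∫ s in a..t, (exp (l * s) : ℂ) * b s

variable {l a T t : ℝ} {b : ℝ → ℂ}

theorem duhamel_self : duhamel l a b a = 0 := by simp [duhamel]

theorem continuousOn_exp_mul (hb : ContinuousOn b (Icc a T)) :
    ContinuousOn (fun s => (exp (l * s) : ℂ) * b s) (Icc a T) :=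
  ContinuousOn.mul (by fun_prop) hb

theorem continuousOn_duhamel (haT : a ≤ T) (hb : ContinuousOn b (Icc a T)) :
    ContinuousOn (duhamel l a b) (Icc a T) := by
  have primitive := intervalIntegral.continuousOn_primitive_interval (μ := volume)
    (f := fun s => (exp (l * s) : ℂ) * b s) (a := a) (b := T)
    (by rw [uIcc_of_le haT]; exact (continuousOn_exp_mul hb).integrableOn_compact isCompact_Icc)
  rw [uIcc_of_le haT] at primitive
  exact ContinuousOn.mul (by fun_prop) primitive

theorem hasDerivAt_exp_neg_mul (l t : ℝ) :
    HasDerivAt (fun r : ℝ => (exp (-(l * r)) : ℂ)) (-l * exp (-(l * t)) : ℂ) t := by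
  have exponent : HasDerivAt (fun r : ℝ => -(l * r)) (-l) t := by
    simpa using ((hasDerivAt_id t).const_mul l).fun_neg
  refine exponent.exp.ofReal_comp.congr_deriv ?_
  push_cast
  ring

theorem hasDerivAt_duhamel (hb : ContinuousOn b (Icc a T)) (ht : t ∈ Ioo a T) :
    HasDerivAt (duhamel l a b) (-l * duhamel l a b t + b t) t := by
  have integrand := continuousOn_exp_mul (l := l) hb
  have primitive : HasDerivAt (fun r => ∫ s in a..r, (exp (l * s) : ℂ) * b s)
      ((exp (l * t) : ℂ) * b t) t := by
    refine intervalIntegral.integral_hasDerivAt_right (ContinuousOn.intervalIntegrable ?_)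
      ((integrand.mono Ioo_subset_Icc_self).stronglyMeasurableAtFilter isOpen_Ioo t ht)
      (integrand.continuousAt (Icc_mem_nhds ht.1 ht.2))
    rw [uIcc_of_le ht.1.le]
    exact integrand.mono (Icc_subset_Icc_right ht.2.le)
  have exp_cancel : (exp (-(l * t)) : ℂ) * (exp (l * t) : ℂ) = 1 := by
    rw [← Complex.ofReal_mul, ← exp_add, neg_add_cancel, exp_zero, Complex.ofReal_one]
  refine ((hasDerivAt_exp_neg_mul l t).mul primitive).congr_deriv ?_
  rw [duhamel, ← mul_assoc _ _ (b t), exp_cancel]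
  ring

theorem norm_duhamel_le {D Λ : ℝ} (hD : 0 ≤ D) (hlΛ : 0 < l + Λ) (hat : a ≤ t)
    (hb : ∀ s ∈ Icc a t, ‖b s‖ ≤ D * exp (Λ * (s - a))) :
    ‖duhamel l a b t‖ ≤ D * exp (Λ * (t - a)) / (l + Λ) := by
  let majorant (s : ℝ) : ℝ := D * exp (l * s + Λ * (s - a))
  let primitive (s : ℝ) : ℝ := majorant s / (l + Λ)
  have majorant_integrable : IntervalIntegrable majorant volume a t :=
    (by fun_prop : Continuous majorant).intervalIntegrable a t
  have primitive_deriv (s : ℝ) : HasDerivAt primitive (majorant s) s := by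
    have exponent : HasDerivAt (fun s => l * s + Λ * (s - a)) (l + Λ) s := by
      simpa using ((hasDerivAt_id s).const_mul l).fun_add
        (((hasDerivAt_id s).sub_const a).const_mul Λ)
    refine ((exponent.exp.const_mul D).div_const (l + Λ)).congr_deriv ?_
    field_simp
    rfl
  have primitive_nonneg : 0 ≤ primitive a := by positivity
  have integral_le : ‖∫ s in a..t, (exp (l * s) : ℂ) * b s‖ ≤ primitive t := by
    calc ‖∫ s in a..t, (exp (l * s) : ℂ) * b s‖ ≤ ∫ s in a..t, majorant s := by
          refine intervalIntegral.norm_integral_le_of_norm_le hat (ae_of_all _ fun s hs => ?_)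
            majorant_integrable
          rw [norm_mul, Complex.norm_of_nonneg (exp_pos _).le]
          calc exp (l * s) * ‖b s‖ ≤ exp (l * s) * (D * exp (Λ * (s - a))) := by
                gcongr
                exact hb s ⟨hs.1.le, hs.2⟩
            _ = majorant s := by simp only [majorant, exp_add]; ring
      _ = primitive t - primitive a := intervalIntegral.integral_eq_sub_of_hasDerivAt
          (fun s _ => primitive_deriv s) majorant_integrable
      _ ≤ primitive t := sub_le_self _ primitive_nonneg
  rw [duhamel, norm_mul, Complex.norm_of_nonneg (exp_pos _).le]
  calc exp (-(l * t)) * ‖∫ s in a..t, (exp (l * s) : ℂ) * b s‖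
      ≤ exp (-(l * t)) * primitive t := by gcongr
    _ = D * (exp (-(l * t)) * exp (l * t + Λ * (t - a))) / (l + Λ) := by
        simp only [primitive, majorant]
        ring
    _ = D * exp (Λ * (t - a)) / (l + Λ) := by
        rw [← exp_add, neg_add_cancel_left]

end Duhamel

section Picard
open Set

/-- The advection term `U · ∇` acting on Fourier coefficients. -/
noncomputable def advectionCoeff {d : ℕ} (U : Fin d → (Fin d → ℤ) → ℂ) (c : (Fin d → ℤ) → ℂ)
    (k : Fin d → ℤ) : ℂ :=
  ∑ i, coeffConv (U i) (fun j => derivSymbol i j * c j) k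

/-- The Fourier symbol of `-κ Δ / (4π²)`. -/
noncomputable def diffusionSymbol {d : ℕ} (κ : ℝ) (k : Fin d → ℤ) : ℝ := κ * ∑ i, (k i : ℝ) ^ 2

/-- The Picard series for the coefficient equation
`c' = -diffusionSymbol κ · c - advectionCoeff U c` with `c a = g`: the heat flow, followed by the
Duhamel terms obtained by treating the advection of each term as a forcing of the next. -/
noncomputable def picardTerm {d : ℕ} (κ a : ℝ) (U : ℝ → Fin d → (Fin d → ℤ) → ℂ)
    (g : (Fin d → ℤ) → ℂ) : ℕ → ℝ → (Fin d → ℤ) → ℂ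
  | 0 => fun t k => (exp (-(diffusionSymbol κ k * (t - a))) : ℂ) * g k
  | n + 1 => fun t k =>
    -duhamel (diffusionSymbol κ k) a (fun s => advectionCoeff (U s) (picardTerm κ a U g n s) k) t

variable {d : ℕ} {κ a T t : ℝ} {U : ℝ → Fin d → (Fin d → ℤ) → ℂ} {g : (Fin d → ℤ) → ℂ}
  {I : Set ℝ}

theorem diffusionSymbol_nonneg (hκ : 0 ≤ κ) (k : Fin d → ℤ) : 0 ≤ diffusionSymbol κ k :=
  mul_nonneg hκ (Finset.sum_nonneg fun _ _ => sq_nonneg _)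

theorem mul_norm_sq_le_diffusionSymbol (hκ : 0 ≤ κ) (k : Fin d → ℤ) :
    κ * ‖k‖ ^ 2 ≤ diffusionSymbol κ k := by
  refine mul_le_mul_of_nonneg_left ?_ hκ
  have sum_nonneg : 0 ≤ ∑ i, (k i : ℝ) ^ 2 := Finset.sum_nonneg fun _ _ => sq_nonneg _
  refine (Real.le_sqrt (norm_nonneg k) sum_nonneg).1
    ((pi_norm_le_iff_of_nonneg (Real.sqrt_nonneg _)).2 fun i => ?_)
  rw [Int.norm_eq_abs]
  exact Real.abs_le_sqrt (Finset.single_le_sum (f := fun i => (k i : ℝ) ^ 2)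
    (fun _ _ => sq_nonneg _) (Finset.mem_univ i))

theorem norm_neg_diffusionSymbol_le (hκ : 0 ≤ κ) (k : Fin d → ℤ) :
    ‖(-diffusionSymbol κ k : ℂ)‖ ≤ κ * d * freqWeight k ^ 2 := by
  rw [norm_neg, Complex.norm_of_nonneg (diffusionSymbol_nonneg hκ k), diffusionSymbol, mul_assoc]
  refine mul_le_mul_of_nonneg_left ?_ hκ
  calc ∑ i, (k i : ℝ) ^ 2 ≤ ∑ _i : Fin d, freqWeight k ^ 2 :=
        Finset.sum_le_sum fun i _ => by
          rw [← sq_abs]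
          gcongr
          exact abs_coord_le_freqWeight k i
    _ = d * freqWeight k ^ 2 := by simp

theorem RapidlyDecayingOn.advectionCoeff (hU : ∀ i, RapidlyDecayingOn I fun t => U t i)
    {c : ℝ → (Fin d → ℤ) → ℂ} (hc : RapidlyDecayingOn I c) :
    RapidlyDecayingOn I fun t => advectionCoeff (U t) (c t) :=
  RapidlyDecayingOn.sum fun i _ => (hU i).coeffConv (hc.mul_symbol (norm_derivSymbol_le i))

theorem RapidlyDecayingOfOrder.advectionCoeff {n : ℕ} (hI : IsOpen I) (hI' : IsPreconnected I)
    (hU : ∀ i, RapidlyDecayingOfOrder n I fun t => U t i) {c : ℝ → (Fin d → ℤ) → ℂ}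
    (hc : RapidlyDecayingOfOrder n I c) :
    RapidlyDecayingOfOrder n I fun t => advectionCoeff (U t) (c t) :=
  RapidlyDecayingOfOrder.sum fun i _ =>
    (hU i).coeffConv hI hI' (hc.mul_symbol (norm_derivSymbol_le i))

theorem norm_derivSymbol_mul_mul_le {c : (Fin d → ℤ) → ℂ} {X : ℝ} {m : ℕ} (i : Fin d)
    {k : Fin d → ℤ} (hc : ‖c k‖ * freqWeight k ^ (m + 1) ≤ X) :
    ‖derivSymbol i k * c k‖ * freqWeight k ^ m ≤ 2 * π * X := by
  have weight_pos := freqWeight_pos k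
  calc ‖derivSymbol i k * c k‖ * freqWeight k ^ m
      ≤ 2 * π * freqWeight k ^ 1 * ‖c k‖ * freqWeight k ^ m := by
        rw [norm_mul]
        gcongr
        exact norm_derivSymbol_le i k
    _ = 2 * π * (‖c k‖ * freqWeight k ^ (m + 1)) := by ring
    _ ≤ 2 * π * X := by gcongr

theorem RapidlyDecayingOn.exists_norm_advectionCoeff_mul_le
    (hU : ∀ i, RapidlyDecayingOn I fun t => U t i) (m : ℕ) :
    ∃ A : ℝ, 0 ≤ A ∧ ∀ t ∈ I, ∀ (c : (Fin d → ℤ) → ℂ) (X : ℝ),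
      (∀ k, ‖c k‖ * freqWeight k ^ (m + 1) ≤ X) →
        ∀ k, ‖_root_.advectionCoeff (U t) c k‖ * freqWeight k ^ m ≤ A * X := by
  choose A hA0 hA using fun i => (hU i).decay (m + (d + 1))
  refine ⟨∑ i, A i * (2 * π) * freqWeightSum d, Finset.sum_nonneg fun i _ =>
    mul_nonneg (mul_nonneg (hA0 i) two_pi_pos.le) freqWeightSum_nonneg, fun t ht c X hc k => ?_⟩
  calc ‖_root_.advectionCoeff (U t) c k‖ * freqWeight k ^ m
      ≤ ∑ i, ‖_root_.coeffConv (U t i) (fun j => derivSymbol i j * c j) k‖ * freqWeight k ^ m := by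
        rw [← Finset.sum_mul]
        exact mul_le_mul_of_nonneg_right (norm_sum_le _ _) (pow_pos (freqWeight_pos k) m).le
    _ ≤ ∑ i, A i * (2 * π * X) * freqWeightSum d :=
        Finset.sum_le_sum fun i _ => norm_coeffConv_mul_le (hA i t ht)
          (fun j => norm_derivSymbol_mul_mul_le i (hc j)) k
    _ = (∑ i, A i * (2 * π) * freqWeightSum d) * X := by
        rw [Finset.sum_mul]
        exact Finset.sum_congr rfl fun i _ => by ring

theorem norm_picardTerm_zero_le (hκ : 0 ≤ κ) (hat : a ≤ t) (k : Fin d → ℤ) :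
    ‖picardTerm κ a U g 0 t k‖ ≤ ‖g k‖ := by
  rw [picardTerm, norm_mul, Complex.norm_of_nonneg (exp_pos _).le]
  exact mul_le_of_le_one_left (norm_nonneg _) (exp_le_one_iff.2
    (neg_nonpos.2 (mul_nonneg (diffusionSymbol_nonneg hκ k) (sub_nonneg.2 hat))))

-- The exponential weight in time makes each Duhamel step contract by `1/2`.
theorem norm_picardTerm_succ_mul_le {A X Λ : ℝ} {m n : ℕ} (hκ : 0 ≤ κ) (hA : 0 ≤ A) (hX : 0 ≤ X)
    (hΛ : 0 < Λ)
    (hU : ∀ s ∈ Icc a t, ∀ (c : (Fin d → ℤ) → ℂ) (Y : ℝ),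
      (∀ k, ‖c k‖ * freqWeight k ^ (m + 1) ≤ Y) →
        ∀ k, ‖advectionCoeff (U s) c k‖ * freqWeight k ^ m ≤ A * Y)
    (habsorb : ∀ k : Fin d → ℤ, 2 * A * freqWeight k ≤ diffusionSymbol κ k + Λ) (hat : a ≤ t)
    (hn : ∀ s ∈ Icc a t, ∀ k,
      ‖picardTerm κ a U g n s k‖ * freqWeight k ^ (m + 1) ≤ X * exp (Λ * (s - a)))
    (k : Fin d → ℤ) :
    ‖picardTerm κ a U g (n + 1) t k‖ * freqWeight k ^ (m + 1) ≤ X / 2 * exp (Λ * (t - a)) := by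
  have weight_pos := freqWeight_pos k
  have symbol_pos : 0 < diffusionSymbol κ k + Λ :=
    add_pos_of_nonneg_of_pos (diffusionSymbol_nonneg hκ k) hΛ
  have forcing_le (s : ℝ) (hs : s ∈ Icc a t) :
      ‖advectionCoeff (U s) (picardTerm κ a U g n s) k‖ ≤
        A * X / freqWeight k ^ m * exp (Λ * (s - a)) := by
    rw [div_mul_eq_mul_div, le_div_iff₀ (by positivity), mul_assoc A]
    exact hU s hs _ _ (hn s hs) k
  have duhamel_le := norm_duhamel_le (by positivity) symbol_pos hat forcing_le
  rw [le_div_iff₀ symbol_pos] at duhamel_le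
  rw [picardTerm, norm_neg]
  refine le_of_mul_le_mul_right ?_ symbol_pos
  calc ‖duhamel (diffusionSymbol κ k) a _ t‖ * freqWeight k ^ (m + 1) * (diffusionSymbol κ k + Λ)
      ≤ A * X / freqWeight k ^ m * exp (Λ * (t - a)) * freqWeight k ^ (m + 1) := by
        rw [mul_right_comm]
        gcongr
    _ = X / 2 * exp (Λ * (t - a)) * (2 * A * freqWeight k) := by
        rw [pow_succ (freqWeight k)]
        field_simp
    _ ≤ X / 2 * exp (Λ * (t - a)) * (diffusionSymbol κ k + Λ) := by
        gcongr
        exact habsorb k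

theorem norm_picardTerm_mul_le {A G Λ : ℝ} {m : ℕ} (hκ : 0 ≤ κ) (hA : 0 ≤ A) (hΛ : 0 < Λ)
    (hU : ∀ t ∈ Icc a T, ∀ (c : (Fin d → ℤ) → ℂ) (Y : ℝ),
      (∀ k, ‖c k‖ * freqWeight k ^ (m + 1) ≤ Y) →
        ∀ k, ‖advectionCoeff (U t) c k‖ * freqWeight k ^ m ≤ A * Y)
    (hg : ∀ k, ‖g k‖ * freqWeight k ^ (m + 1) ≤ G)
    (habsorb : ∀ k : Fin d → ℤ, 2 * A * freqWeight k ≤ diffusionSymbol κ k + Λ) (n : ℕ)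
    (ht : t ∈ Icc a T) (k : Fin d → ℤ) :
    ‖picardTerm κ a U g n t k‖ * freqWeight k ^ (m + 1) ≤
      G * (1 / 2) ^ n * exp (Λ * (t - a)) := by
  have weight_pos := freqWeight_pos k
  have hG : 0 ≤ G := (by positivity : 0 ≤ ‖g k‖ * freqWeight k ^ (m + 1)).trans (hg k)
  induction n generalizing t k with
  | zero =>
    rw [pow_zero, mul_one]
    calc ‖picardTerm κ a U g 0 t k‖ * freqWeight k ^ (m + 1)
        ≤ ‖g k‖ * freqWeight k ^ (m + 1) := by
          gcongr
          exact norm_picardTerm_zero_le hκ ht.1 k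
      _ ≤ G := hg k
      _ ≤ G * exp (Λ * (t - a)) :=
          le_mul_of_one_le_right hG (one_le_exp (mul_nonneg hΛ.le (sub_nonneg.2 ht.1)))
  | succ n ih =>
    have hsub : Icc a t ⊆ Icc a T := Icc_subset_Icc_right ht.2
    rw [pow_succ (1 / 2 : ℝ), ← mul_assoc, mul_one_div]
    exact norm_picardTerm_succ_mul_le hκ hA (by positivity) hΛ (fun s hs => hU s (hsub hs)) habsorb
      ht.1 (fun s hs j => ih (hsub hs) j (freqWeight_pos j)) k

theorem exists_mul_freqWeight_le_diffusionSymbol_add (hκ : 0 < κ) {A : ℝ} (hA : 0 ≤ A) :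
    ∃ Λ > 0, ∀ k : Fin d → ℤ, 2 * A * freqWeight k ≤ diffusionSymbol κ k + Λ := by
  refine ⟨2 * A + A ^ 2 / κ + 1, by positivity, fun k => ?_⟩
  have completed_square : κ * ‖k‖ ^ 2 + A ^ 2 / κ - 2 * A * ‖k‖ = (κ * ‖k‖ - A) ^ 2 / κ := by
    field_simp
    ring
  have square_nonneg : 0 ≤ (κ * ‖k‖ - A) ^ 2 / κ := by positivity
  have symbol_ge := mul_norm_sq_le_diffusionSymbol hκ.le k
  unfold freqWeight
  linarith

theorem exists_norm_picardTerm_mul_le (hκ : 0 < κ)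
    (hU : ∀ i, RapidlyDecayingOn (Icc a T) fun t => U t i) (hg : RapidlyDecaying g) (m : ℕ) :
    ∃ C : ℝ, 0 ≤ C ∧ ∀ n, ∀ t ∈ Icc a T, ∀ k,
      ‖picardTerm κ a U g n t k‖ * freqWeight k ^ m ≤ C * (1 / 2) ^ n := by
  obtain ⟨A, hA0, hA⟩ := RapidlyDecayingOn.exists_norm_advectionCoeff_mul_le hU m
  obtain ⟨G, hG⟩ := hg (m + 1)
  obtain ⟨Λ, hΛ, habsorb⟩ := exists_mul_freqWeight_le_diffusionSymbol_add (d := d) hκ hA0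
  have hG0 : 0 ≤ G :=
    (mul_nonneg (norm_nonneg _) (pow_pos (freqWeight_pos 0) _).le).trans (hG 0)
  refine ⟨G * exp (Λ * (T - a)), by positivity, fun n t ht k => ?_⟩
  calc ‖picardTerm κ a U g n t k‖ * freqWeight k ^ m
      ≤ ‖picardTerm κ a U g n t k‖ * freqWeight k ^ (m + 1) := by
        gcongr
        · exact one_le_freqWeight k
        · exact Nat.le_succ m
    _ ≤ G * (1 / 2) ^ n * exp (Λ * (t - a)) :=
        norm_picardTerm_mul_le hκ.le hA0 hΛ hA hG habsorb n ht k
    _ ≤ G * (1 / 2) ^ n * exp (Λ * (T - a)) := by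
        gcongr
        exact ht.2
    _ = G * exp (Λ * (T - a)) * (1 / 2) ^ n := by ring

theorem rapidlyDecayingOn_picardTerm (hκ : 0 < κ) (haT : a ≤ T)
    (hU : ∀ i, RapidlyDecayingOn (Icc a T) fun t => U t i) (hg : RapidlyDecaying g) (n : ℕ) :
    RapidlyDecayingOn (Icc a T) (picardTerm κ a U g n) where
  continuousOn k := by
    induction n generalizing k with
    | zero => exact ContinuousOn.mul (by fun_prop) continuousOn_const
    | succ n ih =>
      have decay : RapidlyDecayingOn (Icc a T) (picardTerm κ a U g n) := ⟨ih, fun m => by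
        obtain ⟨C, hC0, hC⟩ := exists_norm_picardTerm_mul_le hκ hU hg m
        exact ⟨C * (1 / 2) ^ n, by positivity, hC n⟩⟩
      exact (continuousOn_duhamel haT
        ((RapidlyDecayingOn.advectionCoeff hU decay).continuousOn k)).neg
  decay m := by
    obtain ⟨C, hC0, hC⟩ := exists_norm_picardTerm_mul_le hκ hU hg m
    exact ⟨C * (1 / 2) ^ n, by positivity, hC n⟩

end Picard

section PicardSeries
open Set

/-- The sum of the Picard series. -/
noncomputable def picardSum {d : ℕ} (κ a : ℝ) (U : ℝ → Fin d → (Fin d → ℤ) → ℂ)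
    (g : (Fin d → ℤ) → ℂ) (t : ℝ) (k : Fin d → ℤ) : ℂ := ∑' n, picardTerm κ a U g n t k

/-- The forcing in the coefficient equation satisfied by the `n`-th term of the Picard series. -/
noncomputable def picardForcing {d : ℕ} (κ a : ℝ) (U : ℝ → Fin d → (Fin d → ℤ) → ℂ)
    (g : (Fin d → ℤ) → ℂ) : ℕ → ℝ → (Fin d → ℤ) → ℂ
  | 0 => 0
  | n + 1 => fun t => advectionCoeff (U t) (picardTerm κ a U g n t)

variable {d : ℕ} {κ a T t : ℝ} {U : ℝ → Fin d → (Fin d → ℤ) → ℂ} {g : (Fin d → ℤ) → ℂ}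
  {I : Set ℝ}

theorem RapidlyDecayingOn.rapidlyDecaying {c : ℝ → (Fin d → ℤ) → ℂ} (hc : RapidlyDecayingOn I c)
    (ht : t ∈ I) : RapidlyDecaying (c t) := fun m =>
  (hc.decay m).imp fun _ h => h.2 t ht

theorem hasSum_advectionCoeff {V : Fin d → (Fin d → ℤ) → ℂ} {ι : Type*}
    {f : ι → (Fin d → ℤ) → ℂ} {c : (Fin d → ℤ) → ℂ} {F : ι → ℝ} (hV : ∀ i, RapidlyDecaying (V i))
    (hF : Summable F) (hf : ∀ n k, ‖f n k‖ * freqWeight k ≤ F n)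
    (hc : ∀ k, HasSum (fun n => f n k) (c k)) (k : Fin d → ℤ) :
    HasSum (fun n => advectionCoeff V (f n) k) (advectionCoeff V c k) := by
  refine hasSum_sum fun i _ => ?_
  obtain ⟨A, hA⟩ := hV i (d + 1)
  refine hasSum_coeffConv hA (hF.mul_left (2 * π)) (fun n j => ?_)
    (fun j => (hc j).mul_left (derivSymbol i j)) k
  simpa using norm_derivSymbol_mul_mul_le (m := 0) i (by simpa using hf n j)

theorem picardSum_self : picardSum κ a U g a = g := by
  funext k
  rw [picardSum, tsum_eq_single 0]
  · simp [picardTerm]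
  · intro n hn
    obtain ⟨m, rfl⟩ := Nat.exists_eq_succ_of_ne_zero hn
    simp [picardTerm, duhamel_self]

theorem hasSum_picardTerm (hκ : 0 < κ) (hU : ∀ i, RapidlyDecayingOn (Icc a T) fun t => U t i)
    (hg : RapidlyDecaying g) (ht : t ∈ Icc a T) (k : Fin d → ℤ) :
    HasSum (fun n => picardTerm κ a U g n t k) (picardSum κ a U g t k) := by
  obtain ⟨C, -, hC⟩ := exists_norm_picardTerm_mul_le hκ hU hg 0
  refine (Summable.of_norm_bounded (summable_geometric_two.mul_left C) fun n => ?_).hasSum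
  simpa using hC n t ht k

theorem rapidlyDecayingOn_picardSum (hκ : 0 < κ) (haT : a ≤ T)
    (hU : ∀ i, RapidlyDecayingOn (Icc a T) fun t => U t i) (hg : RapidlyDecaying g) :
    RapidlyDecayingOn (Icc a T) (picardSum κ a U g) where
  continuousOn k := by
    obtain ⟨C, -, hC⟩ := exists_norm_picardTerm_mul_le hκ hU hg 0
    refine continuousOn_tsum (fun n => (rapidlyDecayingOn_picardTerm hκ haT hU hg n).continuousOn k)
      (summable_geometric_two.mul_left C) fun n t ht => ?_
    simpa using hC n t ht k
  decay m := by
    obtain ⟨C, hC0, hC⟩ := exists_norm_picardTerm_mul_le hκ hU hg m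
    refine ⟨C * 2, by positivity, fun t ht k => ?_⟩
    have weight_pos := pow_pos (freqWeight_pos k) m
    rw [← le_div_iff₀ weight_pos, mul_div_right_comm]
    refine tsum_of_norm_bounded (hasSum_geometric_two.mul_left (C / freqWeight k ^ m)) fun n => ?_
    rw [div_mul_eq_mul_div, le_div_iff₀ weight_pos]
    exact hC n t ht k

theorem hasSum_picardForcing (hκ : 0 < κ) (hU : ∀ i, RapidlyDecayingOn (Icc a T) fun t => U t i)
    (hg : RapidlyDecaying g) (ht : t ∈ Icc a T) (k : Fin d → ℤ) :
    HasSum (fun n => picardForcing κ a U g n t k)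
      (advectionCoeff (U t) (picardSum κ a U g t) k) := by
  obtain ⟨C, -, hC⟩ := exists_norm_picardTerm_mul_le hκ hU hg 1
  rw [← hasSum_nat_add_iff' 1]
  simpa [picardForcing] using hasSum_advectionCoeff (fun i => (hU i).rapidlyDecaying ht)
    (summable_geometric_two.mul_left C) (fun n j => by simpa using hC n t ht j)
    (hasSum_picardTerm hκ hU hg ht) k

theorem exists_norm_picardForcing_le (hκ : 0 < κ)
    (hU : ∀ i, RapidlyDecayingOn (Icc a T) fun t => U t i) (hg : RapidlyDecaying g) :
    ∃ C : ℝ, ∀ n, ∀ t ∈ Icc a T, ∀ k, ‖picardForcing κ a U g n t k‖ ≤ C * (1 / 2) ^ n := by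
  obtain ⟨C, hC0, hC⟩ := exists_norm_picardTerm_mul_le hκ hU hg 1
  obtain ⟨A, hA0, hA⟩ := RapidlyDecayingOn.exists_norm_advectionCoeff_mul_le hU 0
  refine ⟨2 * (A * C), fun n t ht k => ?_⟩
  cases n with
  | zero => simpa [picardForcing] using mul_nonneg hA0 hC0
  | succ n =>
    have term_le : ‖picardForcing κ a U g (n + 1) t k‖ ≤ A * (C * (1 / 2) ^ n) := by
      simpa [picardForcing] using hA t ht _ _ (hC n t ht) k
    exact term_le.trans_eq (by ring)

theorem hasDerivAt_picardTerm (hκ : 0 < κ) (hU : ∀ i, RapidlyDecayingOn (Icc a T) fun t => U t i)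
    (hg : RapidlyDecaying g) (ht : t ∈ Ioo a T) (n : ℕ) (k : Fin d → ℤ) :
    HasDerivAt (fun r => picardTerm κ a U g n r k)
      (-diffusionSymbol κ k * picardTerm κ a U g n t k - picardForcing κ a U g n t k) t := by
  cases n with
  | zero =>
    have exponent : HasDerivAt (fun s => -(diffusionSymbol κ k * (s - a)))
        (-diffusionSymbol κ k) t := by
      simpa using (((hasDerivAt_id t).sub_const a).const_mul (diffusionSymbol κ k)).fun_neg
    refine (exponent.exp.ofReal_comp.mul_const (g k)).congr_deriv ?_
    simp only [picardTerm, picardForcing, Pi.zero_apply]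
    push_cast
    ring
  | succ n =>
    have forcing_continuous := (RapidlyDecayingOn.advectionCoeff hU
      (rapidlyDecayingOn_picardTerm hκ (ht.1.trans ht.2).le hU hg n)).continuousOn k
    refine (hasDerivAt_duhamel forcing_continuous ht).fun_neg.congr_deriv ?_
    simp only [picardTerm, picardForcing]
    ring

theorem hasDerivAt_picardSum (hκ : 0 < κ) (hU : ∀ i, RapidlyDecayingOn (Icc a T) fun t => U t i)
    (hg : RapidlyDecaying g) (ht : t ∈ Ioo a T) (k : Fin d → ℤ) :
    HasDerivAt (fun r => picardSum κ a U g r k) (-diffusionSymbol κ k * picardSum κ a U g t k -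
      advectionCoeff (U t) (picardSum κ a U g t) k) t := by
  obtain ⟨C, -, hC⟩ := exists_norm_picardTerm_mul_le hκ hU hg 0
  obtain ⟨B, hB⟩ := exists_norm_picardForcing_le hκ hU hg
  have ht' := Ioo_subset_Icc_self ht
  have deriv_le (n : ℕ) (r : ℝ) (hr : r ∈ Ioo a T) :
      ‖-diffusionSymbol κ k * picardTerm κ a U g n r k - picardForcing κ a U g n r k‖ ≤
        (‖(-diffusionSymbol κ k : ℂ)‖ * C + B) * (1 / 2) ^ n := by
    have hr' := Ioo_subset_Icc_self hr
    calc _ ≤ ‖(-diffusionSymbol κ k : ℂ)‖ * ‖picardTerm κ a U g n r k‖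
          + ‖picardForcing κ a U g n r k‖ := (norm_sub_le _ _).trans_eq (by rw [norm_mul])
      _ ≤ ‖(-diffusionSymbol κ k : ℂ)‖ * (C * (1 / 2) ^ n) + B * (1 / 2) ^ n := by
          gcongr
          · simpa using hC n r hr' k
          · exact hB n r hr' k
      _ = _ := by ring
  have termwise := hasDerivAt_tsum_of_isPreconnected
    (summable_geometric_two.mul_left (‖(-diffusionSymbol κ k : ℂ)‖ * C + B))
    isOpen_Ioo isPreconnected_Ioo (fun n r hr => hasDerivAt_picardTerm hκ hU hg hr n k) deriv_le ht
    (hasSum_picardTerm hκ hU hg ht' k).summable ht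
  exact termwise.congr_deriv (((hasSum_picardTerm hκ hU hg ht' k).mul_left _).sub
    (hasSum_picardForcing hκ hU hg ht' k)).tsum_eq

theorem rapidlyDecayingOfOrder_picardSum (hκ : 0 < κ) (haT : a ≤ T)
    (hU : ∀ i n, RapidlyDecayingOfOrder n (Icc a T) fun t => U t i) (hg : RapidlyDecaying g)
    (n : ℕ) : RapidlyDecayingOfOrder n (Ioo a T) (picardSum κ a U g) := by
  have hU_zero (i : Fin d) : RapidlyDecayingOn (Icc a T) fun t => U t i := hU i 0
  induction n with
  | zero => exact (rapidlyDecayingOn_picardSum hκ haT hU_zero hg).mono Ioo_subset_Icc_self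
  | succ n ih =>
    refine ⟨ih.rapidlyDecayingOn, _, fun t ht k => hasDerivAt_picardSum hκ hU_zero hg ht k, ?_⟩
    simp only [sub_eq_add_neg, ← neg_one_mul (advectionCoeff _ _ _)]
    refine (ih.mul_symbol (norm_neg_diffusionSymbol_le hκ.le)).add ?_
    refine RapidlyDecayingOfOrder.mul_symbol (C := 1) (q := 0) (p := fun _ => -1) ?_ (by simp)
    exact .advectionCoeff isOpen_Ioo isPreconnected_Ioo
      (fun i => (hU i n).mono Ioo_subset_Icc_self) ih

end PicardSeries

section Existence
open Set
open scoped ContDiff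

variable {d : ℕ} {I : Set ℝ} {ν t : ℝ}

theorem RapidlyDecaying.const {c : (Fin d → ℤ) → ℂ} (hc : RapidlyDecaying c) :
    RapidlyDecayingOn I fun _ => c where
  continuousOn _ := continuousOn_const
  decay m := by
    obtain ⟨C, hC⟩ := hc m
    exact ⟨C, (mul_nonneg (norm_nonneg _) (pow_pos (freqWeight_pos 0) _).le).trans (hC 0),
      fun _ _ => hC⟩

theorem RapidlyDecaying.mul_symbol {c p : (Fin d → ℤ) → ℂ} (hc : RapidlyDecaying c) {C : ℝ}
    {q : ℕ} (hp : ∀ k, ‖p k‖ ≤ C * freqWeight k ^ q) : RapidlyDecaying fun k => p k * c k :=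
  (hc.const (I := {0}).mul_symbol hp).rapidlyDecaying rfl

theorem RapidlyDecaying.coeffConv {a b : (Fin d → ℤ) → ℂ} (ha : RapidlyDecaying a)
    (hb : RapidlyDecaying b) : RapidlyDecaying (coeffConv a b) :=
  (ha.const (I := {0}).coeffConv hb.const).rapidlyDecaying rfl

theorem RapidlyDecaying.summable_norm {c : (Fin d → ℤ) → ℂ} (hc : RapidlyDecaying c) :
    Summable fun k => ‖c k‖ :=
  hc.const.summable_norm (mem_singleton (0 : ℝ))

theorem pd_re_fourierSynthesis {c : (Fin d → ℤ) → ℂ} (hc : RapidlyDecaying c) (i : Fin d)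
    (x : Fin d → ℝ) :
    pd d i (fun y => (fourierSynthesis c y).re) x =
      (fourierSynthesis (fun k => derivSymbol i k * c k) x).re := by
  have space_time := hc.const.hasFDerivAt_fourierSynthesis .zero isOpen_univ isPreconnected_univ
    (fun t _ k => hasDerivAt_const t (c k)) (mem_univ 0) x
  have slice := HasFDerivAt.comp (g := fun p : ℝ × (Fin d → ℝ) => fourierSynthesis c p.2) x
    space_time (hasFDerivAt_prodMk_right 0 x)
  have slice_re := Complex.reCLM.hasFDerivAt.comp x slice
  rw [pd, HasFDerivAt.fderiv (f := fun y => (fourierSynthesis c y).re) slice_re]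
  simp [spaceTimeForm_apply, Pi.single_apply]

theorem mul_lap_re_fourierSynthesis {c : (Fin d → ℤ) → ℂ} (hc : RapidlyDecaying c) (ν : ℝ)
    (x : Fin d → ℝ) :
    ν * lap d (fun y => (fourierSynthesis c y).re) x =
      (fourierSynthesis (fun k => -diffusionSymbol (4 * π ^ 2 * ν) k * c k) x).re := by
  have hc_deriv (i : Fin d) := hc.mul_symbol (norm_derivSymbol_le i)
  have hc_deriv₂ (i : Fin d) := (hc_deriv i).mul_symbol (norm_derivSymbol_le i)
  have symbol_eq (k : Fin d → ℤ) : -diffusionSymbol (4 * π ^ 2 * ν) k * c k =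
      ν * ∑ i, derivSymbol i k * (derivSymbol i k * c k) := by
    simp only [diffusionSymbol, derivSymbol, Finset.mul_sum]
    push_cast
    rw [← Finset.sum_neg_distrib, Finset.sum_mul]
    refine Finset.sum_congr rfl fun i _ => ?_
    linear_combination (-4 * π ^ 2 * ν * (k i) ^ 2 * c k : ℂ) * Complex.I_sq
  simp only [symbol_eq, fourierSynthesis_const_mul, Complex.re_ofReal_mul, lap,
    pd_re_fourierSynthesis hc, pd_re_fourierSynthesis (hc_deriv _)]
  rw [fourierSynthesis_sum (fun i _ => (hc_deriv₂ i).summable_norm), Complex.re_sum]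

theorem RapidlyDecaying.advectionCoeff {V : Fin d → (Fin d → ℤ) → ℂ} {c : (Fin d → ℤ) → ℂ}
    (hV : ∀ i, RapidlyDecaying (V i)) (hc : RapidlyDecaying c) :
    RapidlyDecaying (advectionCoeff V c) :=
  (RapidlyDecayingOn.advectionCoeff (fun i => (hV i).const (I := {0})) hc.const).rapidlyDecaying
    rfl

theorem fourierSynthesis_advectionCoeff {V : Fin d → (Fin d → ℤ) → ℂ} {c : (Fin d → ℤ) → ℂ}
    (hV : ∀ i, RapidlyDecaying (V i)) (hc : RapidlyDecaying c) (x : Fin d → ℝ) :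
    fourierSynthesis (advectionCoeff V c) x =
      ∑ i, fourierSynthesis (V i) x * fourierSynthesis (fun k => derivSymbol i k * c k) x := by
  have hc_deriv (i : Fin d) := hc.mul_symbol (norm_derivSymbol_le i)
  unfold advectionCoeff
  rw [fourierSynthesis_sum fun i _ => ((hV i).coeffConv (hc_deriv i)).summable_norm]
  exact Finset.sum_congr rfl fun i _ =>
    fourierSynthesis_coeffConv (hV i).summable_norm (hc_deriv i).summable_norm x

theorem advectionDiffusion_re_fourierSynthesis (hν : 0 ≤ ν) {w : (Fin d → ℝ) → Fin d → ℝ}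
    (hw : ∀ i, ContDiff ℝ ∞ fun x => w x i) (pw : ∀ i, PeriodicIn d fun x => w x i)
    {c : (Fin d → ℤ) → ℂ} (hc : RapidlyDecaying c) (x : Fin d → ℝ) :
    advectionDiffusion ν w (fun y => (fourierSynthesis c y).re) x =
      (fourierSynthesis (fun k => -diffusionSymbol (4 * π ^ 2 * ν) k * c k -
        advectionCoeff (fun i => cellFourierCoeff fun x => w x i) c k) x).re := by
  have hw_decay (i : Fin d) := rapidlyDecaying_cellFourierCoeff (hw i) (pw i)
  have advection_re : (fourierSynthesis
      (advectionCoeff (fun i => cellFourierCoeff fun x => w x i) c) x).re =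
      ∑ i, w x i * pd d i (fun y => (fourierSynthesis c y).re) x := by
    simp only [fourierSynthesis_advectionCoeff hw_decay hc,
      fourierSynthesis_cellFourierCoeff (hw _) (pw _), Complex.re_sum, Complex.re_ofReal_mul,
      pd_re_fourierSynthesis hc]
  simp only [sub_eq_add_neg, ← neg_one_mul (advectionCoeff _ _ _)]
  rw [fourierSynthesis_add, fourierSynthesis_const_mul, neg_one_mul, Complex.add_re,
    Complex.neg_re, advection_re, ← mul_lap_re_fourierSynthesis hc, advectionDiffusion,
    sub_eq_add_neg]
  · exact (hc.mul_symbol (norm_neg_diffusionSymbol_le (by positivity))).summable_norm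
  · simpa only [norm_mul, norm_neg, norm_one, one_mul] using
      (RapidlyDecaying.advectionCoeff hw_decay hc).summable_norm

theorem deriv_re_fourierSynthesis {c c' : ℝ → (Fin d → ℤ) → ℂ} (hc : RapidlyDecayingOn I c)
    (hc' : RapidlyDecayingOn I c') (hI : IsOpen I) (hI' : IsPreconnected I)
    (hderiv : ∀ t ∈ I, ∀ k, HasDerivAt (fun r => c r k) (c' t k) t) (ht : t ∈ I)
    (x : Fin d → ℝ) :
    deriv (fun r => (fourierSynthesis (c r) x).re) t = (fourierSynthesis (c' t) x).re := by
  have slice := HasFDerivAt.comp_hasDerivAt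
    (l := fun p : ℝ × (Fin d → ℝ) => fourierSynthesis (c p.1) p.2) t
    (hc.hasFDerivAt_fourierSynthesis hc' hI hI' hderiv ht x)
    ((hasDerivAt_id t).prodMk (hasDerivAt_const t x))
  have slice_re := Complex.reCLM.hasFDerivAt.comp_hasDerivAt t slice
  rw [HasDerivAt.deriv (f := fun r => (fourierSynthesis (c r) x).re) slice_re]
  simp [spaceTimeForm_apply]

theorem isSolution_re_fourierSynthesis (hν : 0 ≤ ν) {v : ℝ → (Fin d → ℝ) → Fin d → ℝ}
    {c : ℝ → (Fin d → ℤ) → ℂ} (hI : IsOpen I) (hI' : IsPreconnected I)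
    (hv : ∀ t ∈ I, ∀ i, ContDiff ℝ ∞ fun x => v t x i)
    (pv : ∀ t ∈ I, ∀ i, PeriodicIn d fun x => v t x i)
    (hc : ∀ n, RapidlyDecayingOfOrder n I c)
    (hderiv : ∀ t ∈ I, ∀ k, HasDerivAt (fun r => c r k)
      (-diffusionSymbol (4 * π ^ 2 * ν) k * c t k -
        advectionCoeff (fun i => cellFourierCoeff fun x => v t x i) (c t) k) t) :
    IsSolution d ν v I fun t x => (fourierSynthesis (c t) x).re where
  smoothOnStrip := Complex.reCLM.contDiff.comp_contDiffOn
    (contDiffOn_infty.2 fun n => (hc n).contDiffOn_fourierSynthesis hI hI')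
  periodicIn t _ x l := congrArg Complex.re (fourierSynthesis_add_int (c t) x l)
  deriv_eq t ht x := by
    obtain ⟨hc₀, c', hderiv', hc'⟩ := hc 1
    rw [deriv_re_fourierSynthesis hc₀ hc' hI hI' hderiv' ht x,
      funext fun k => (hderiv' t ht k).unique (hderiv t ht k)]
    exact (advectionDiffusion_re_fourierSynthesis hν (hv t ht) (pv t ht)
      (hc₀.rapidlyDecaying ht) x).symm

theorem isSolution_Ioi {a : ℝ} {v : ℝ → (Fin d → ℝ) → Fin d → ℝ} {φ : ℝ → (Fin d → ℝ) → ℝ}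
    (h : ∀ T, a < T → IsSolution d ν v (Ioo a T) φ) : IsSolution d ν v (Ioi a) φ where
  smoothOnStrip p hp := by
    have hp_fst : a < p.1 := hp.1
    exact (((h (p.1 + 1) (by linarith)).smoothOnStrip.contDiffAt isOpen_Ioo
      ⟨hp_fst, by linarith⟩ p.2).contDiffWithinAt)
  periodicIn t (ht : a < t) := (h (t + 1) (by linarith)).periodicIn t ⟨ht, by linarith⟩
  deriv_eq t (ht : a < t) := (h (t + 1) (by linarith)).deriv_eq t ⟨ht, by linarith⟩

theorem continuousOn_Ici_prod_univ {a : ℝ} {E F : Type*} [TopologicalSpace E] [TopologicalSpace F]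
    {G : ℝ × E → F} (h : ∀ T, a ≤ T → ContinuousOn G (Icc a T ×ˢ univ)) :
    ContinuousOn G (Ici a ×ˢ univ) := by
  rintro ⟨t, x⟩ ⟨ht : a ≤ t, -⟩
  refine (h (t + 1) (by linarith) (t, x) ⟨⟨ht, by linarith⟩, trivial⟩).mono_of_mem_nhdsWithin ?_
  have near : Iio (t + 1) ×ˢ (univ : Set E) ∈ nhds (t, x) :=
    (isOpen_Iio.prod isOpen_univ).mem_nhds ⟨lt_add_one t, trivial⟩
  filter_upwards [mem_nhdsWithin_of_mem_nhds near, self_mem_nhdsWithin] with p hp hp'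
  exact ⟨⟨hp'.1, le_of_lt hp.1⟩, trivial⟩

theorem exists_isSolution_Ioi (hν : 0 < ν) {v : ℝ → (Fin d → ℝ) → Fin d → ℝ} {a : ℝ}
    (hI : IsOpen I) (haI : Ici a ⊆ I) (hv : ∀ i, SmoothOnStrip I fun t x => v t x i)
    (pv : ∀ t ∈ I, ∀ i, PeriodicIn d fun x => v t x i) {g : (Fin d → ℝ) → ℝ}
    (hg : ContDiff ℝ ∞ g) (pg : PeriodicIn d g) :
    ∃ φ : ℝ → (Fin d → ℝ) → ℝ, IsSolution d ν v (Ioi a) φ ∧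
      ContinuousOn (fun p : ℝ × (Fin d → ℝ) => φ p.1 p.2) (Ici a ×ˢ univ) ∧ φ a = g := by
  let U (t : ℝ) (i : Fin d) : (Fin d → ℤ) → ℂ := cellFourierCoeff fun x => v t x i
  let c := picardSum (4 * π ^ 2 * ν) a U (cellFourierCoeff g)
  have hκ : 0 < 4 * π ^ 2 * ν := by positivity
  have hU (T : ℝ) (i : Fin d) (n : ℕ) : RapidlyDecayingOfOrder n (Icc a T) fun t => U t i :=
    (hv i).rapidlyDecayingOfOrder_cellFourierCoeff hI (fun t ht => pv t ht i) isCompact_Icc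
      (Icc_subset_Ici_self.trans haI) n
  have hU_zero (T : ℝ) (i : Fin d) : RapidlyDecayingOn (Icc a T) fun t => U t i := hU T i 0
  have hg_decay := rapidlyDecaying_cellFourierCoeff hg pg
  refine ⟨fun t x => (fourierSynthesis (c t) x).re, isSolution_Ioi fun T haT => ?_,
    continuousOn_Ici_prod_univ fun T haT => ?_, ?_⟩
  · have hIoo : Ioo a T ⊆ I := fun t ht => haI ht.1.le
    exact isSolution_re_fourierSynthesis hν.le isOpen_Ioo isPreconnected_Ioo
      (fun t ht i => (hv i).contDiff_slice (hIoo ht)) (fun t ht => pv t (hIoo ht))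
      (rapidlyDecayingOfOrder_picardSum hκ haT.le (hU T) hg_decay)
      fun t ht k => hasDerivAt_picardSum hκ (hU_zero T) hg_decay ht k
  · exact Complex.continuous_re.comp_continuousOn
      (rapidlyDecayingOn_picardSum hκ haT (hU_zero T) hg_decay).continuousOn_fourierSynthesis
  · funext x
    simp only [c, picardSum_self, fourierSynthesis_cellFourierCoeff hg pg, Complex.ofReal_re]

end Existence

section Relaxation
open Set
open scoped ContDiff

/-- Mean-zero solutions with drift `u` and viscosity `ν` halve their `L²` norm, i.e. quarter their
energy, within time `τ ν`. Only solutions on an open half-line are tested. -/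
def RelaxationEnhancing (d : ℕ) (u : ℝ → (Fin d → ℝ) → Fin d → ℝ) (τ : ℝ → ℝ) : Prop :=
  ∀ ν > 0, ∀ a ≥ 0, ∀ φ : ℝ → (Fin d → ℝ) → ℝ, IsSolution d ν u (Ioi a) φ →
    (∀ t > a, ∫ x in unitCell d, φ t x = 0) →
      ∀ s > a, energy d (φ (s + τ ν)) ≤ 1 / 4 * energy d (φ s)

variable {d : ℕ} {ν a b s : ℝ} {u : ℝ → (Fin d → ℝ) → Fin d → ℝ} {τ : ℝ → ℝ}

theorem relaxationEnhancing_of_L2norm_le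
    (hRE : ∀ ν > (0 : ℝ), ∀ s ≥ (0 : ℝ), ∀ θ : ℝ → (Fin d → ℝ) → ℝ, SmoothOnStrip (Ici s) θ →
      (∀ t ∈ Ici s, PeriodicIn d (θ t)) → (∀ t ∈ Ici s, ∫ x in unitCell d, θ t x = 0) →
      (∀ t ∈ Ici s, ∀ x, derivWithin (fun r => θ r x) (Ici s) t - ν * lap d (θ t) x
        + ∑ i, u t x i * pd d i (θ t) x = 0) →
      L2norm d (θ (s + τ ν)) ≤ (1 / 2) * L2norm d (θ s)) :
    RelaxationEnhancing d u τ := by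
  intro ν hν a ha φ hφ hmean s hs
  have hsub : Ici s ⊆ Ioi a := Ici_subset_Ioi.2 hs
  have norm_le := hRE ν hν s (ha.trans hs.le) φ (hφ.smoothOnStrip.mono hsub)
    (fun t ht => hφ.periodicIn t (hsub ht)) (fun t ht => hmean t (hsub ht)) fun t ht x => by
      rw [(hφ.hasDerivAt isOpen_Ioi (hsub ht) x).hasDerivWithinAt.derivWithin
        (uniqueDiffOn_Ici s t ht), advectionDiffusion]
      ring
  rw [L2norm_eq_sqrt_energy, L2norm_eq_sqrt_energy] at norm_le
  calc energy d (φ (s + τ ν)) = √(energy d (φ (s + τ ν))) ^ 2 :=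
        (Real.sq_sqrt (energy_nonneg _)).symm
    _ ≤ ((1 / 2) * √(energy d (φ s))) ^ 2 := by gcongr
    _ = 1 / 4 * energy d (φ s) := by
        rw [mul_pow, Real.sq_sqrt (energy_nonneg _)]
        norm_num

theorem IsSolution.continuousOn {I : Set ℝ} {θ : ℝ → (Fin d → ℝ) → ℝ}
    (h : IsSolution d ν u I θ) : ContinuousOn (fun p : ℝ × (Fin d → ℝ) => θ p.1 p.2) (I ×ˢ univ) :=
  h.smoothOnStrip.continuousOn

theorem exists_isSolution_meanZero (hν : 0 < ν) (ha : 0 < a)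
    (hu : ∀ i, SmoothOnStrip (Ioi 0) fun t x => u t x i) (hu' : ∀ t > 0, IsSolenoidal (u t))
    {g : (Fin d → ℝ) → ℝ} (hg : ContDiff ℝ ∞ g) (pg : PeriodicIn d g)
    (hmean : ∫ x in unitCell d, g x = 0) :
    ∃ φ : ℝ → (Fin d → ℝ) → ℝ, IsSolution d ν u (Ioi a) φ ∧
      ContinuousOn (fun p : ℝ × (Fin d → ℝ) => φ p.1 p.2) (Ici a ×ˢ univ) ∧ φ a = g ∧
      ∀ t > a, ∫ x in unitCell d, φ t x = 0 := by
  obtain ⟨φ, hφ, continuous_φ, rfl⟩ := exists_isSolution_Ioi hν isOpen_Ioi (Ici_subset_Ioi.2 ha) hu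
    (fun t ht => (hu' t ht).periodicIn) hg pg
  refine ⟨φ, hφ, continuous_φ, rfl, fun t ht => ?_⟩
  rw [(hφ.mono Ioo_subset_Ioi_self).integral_eq
    (continuous_φ.mono (prod_mono Icc_subset_Ici_self subset_rfl)) ht.le
    fun r hr => hu' r (ha.trans hr.1), hmean]

-- A solution on a bounded interval has the energy of a global solution with the same data.
theorem RelaxationEnhancing.energy_add_le (hRE : RelaxationEnhancing d u τ) (hν : 0 < ν)
    (hτ : 0 < τ ν) (ha : 0 ≤ a) (hu : ∀ i, SmoothOnStrip (Ioi 0) fun t x => u t x i)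
    (hu' : ∀ t > 0, IsSolenoidal (u t)) {θ : ℝ → (Fin d → ℝ) → ℝ}
    (hθ : IsSolution d ν u (Ioo a b) θ) (hmean : ∀ t ∈ Ioo a b, ∫ x in unitCell d, θ t x = 0)
    (has : a < s) (hsb : s + τ ν < b) :
    energy d (θ (s + τ ν)) ≤ 1 / 4 * energy d (θ s) := by
  obtain ⟨r, har, hrs⟩ := exists_between has
  have hr0 : 0 < r := ha.trans_lt har
  have hr : r ∈ Ioo a b := ⟨har, by linarith⟩
  obtain ⟨φ, hφ, continuous_φ, hφr, hφ_mean⟩ := exists_isSolution_meanZero hν hr0 hu hu'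
    (hθ.contDiff hr) (hθ.periodicIn r hr) (hmean r hr)
  have energy_eq (t : ℝ) (ht : t ∈ Ico r b) : energy d (θ t) = energy d (φ t) := by
    have hIcc : Icc r t ⊆ Ioo a b := Icc_subset_Ioo har ht.2
    exact (hθ.mono (Ioo_subset_Icc_self.trans hIcc)).energy_eq_of_eq_left
      (hφ.mono Ioo_subset_Ioi_self) (hθ.continuousOn.mono (prod_mono hIcc subset_rfl))
      (continuous_φ.mono (prod_mono Icc_subset_Ici_self subset_rfl)) ht.1 hν.le
      (fun q hq => hu' q (hr0.trans hq.1)) hφr.symm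
  rw [energy_eq s ⟨hrs.le, by linarith⟩, energy_eq (s + τ ν) ⟨by linarith, hsb⟩]
  exact hRE ν hν r hr0.le φ hφ hφ_mean s hrs

theorem abs_integral_mul_le_mul_one_add_energy {f g : (Fin d → ℝ) → ℝ} {Q : ℝ} (hf : Continuous f)
    (hg : ∀ x ∈ unitCell d, |g x| ≤ Q) :
    |∫ x in unitCell d, f x * g x| ≤ Q * (1 + energy d f) := by
  have hQ : 0 ≤ Q := (abs_nonneg _).trans (hg 0 ⟨le_rfl, zero_le_one⟩)
  have pointwise (x : Fin d → ℝ) (hx : x ∈ unitCell d) : ‖f x * g x‖ ≤ Q * (1 + f x ^ 2) := by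
    rw [norm_mul, mul_comm]
    refine mul_le_mul (hg x hx) ?_ (norm_nonneg _) hQ
    rw [Real.norm_eq_abs, ← sq_abs]
    nlinarith [sq_nonneg (|f x| - 1), abs_nonneg (f x)]
  calc |∫ x in unitCell d, f x * g x| ≤ ∫ x in unitCell d, Q * (1 + f x ^ 2) :=
        norm_integral_le_of_norm_le (by fun_prop : Continuous _).integrableOn_Icc
          ((ae_restrict_mem measurableSet_Icc).mono pointwise)
    _ = Q * (1 + energy d f) := by
        rw [integral_const_mul, integral_add continuous_const.integrableOn_Icc
          (by fun_prop : Continuous _).integrableOn_Icc]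
        simp [unitCell, energy, Measure.real, Real.volume_Icc_pi]

theorem integral_mul_le_quarter_energy_add_energy {f g : (Fin d → ℝ) → ℝ} (hf : Continuous f)
    (hg : Continuous g) :
    ∫ x in unitCell d, f x * g x ≤ 1 / 4 * energy d f + energy d g := by
  unfold energy
  rw [← integral_const_mul, ← integral_add (by fun_prop : Continuous _).integrableOn_Icc
    (by fun_prop : Continuous _).integrableOn_Icc]
  refine integral_mono (by fun_prop : Continuous _).integrableOn_Icc
    (by fun_prop : Continuous _).integrableOn_Icc fun x => ?_
  linarith [sq_nonneg (f x / 2 - g x)]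

theorem exists_abs_advectionDiffusion_le {f : (Fin d → ℝ) → ℝ} (hf : ContDiff ℝ ∞ f) {K : Set ℝ}
    (hK : IsCompact K) (hu : ∀ i, ContinuousOn (fun p : ℝ × (Fin d → ℝ) => u p.1 p.2 i)
      (K ×ˢ univ)) :
    ∃ Q, ∀ ν ∈ Icc (0 : ℝ) 1, ∀ t ∈ K, ∀ x ∈ unitCell d,
      |advectionDiffusion ν (-u t) f x| ≤ Q := by
  have generator_continuous : ContinuousOn
      (fun p : ℝ × ℝ × (Fin d → ℝ) => advectionDiffusion p.1 (-u p.2.1) f p.2.2)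
      (Icc 0 1 ×ˢ K ×ˢ unitCell d) := by
    refine ((continuous_fst.mul ((contDiff_lap hf).continuous.comp
      (continuous_snd.comp continuous_snd))).continuousOn).sub
      (continuousOn_finsetSum _ fun i _ => ContinuousOn.mul ?_
        ((contDiff_pd hf i).continuous.comp (continuous_snd.comp continuous_snd)).continuousOn)
    exact ((hu i).comp continuousOn_snd fun p hp => ⟨hp.2.1, trivial⟩).neg
  obtain ⟨Q, hQ⟩ := (isCompact_Icc.prod (hK.prod isCompact_Icc)).exists_bound_of_continuousOn
    generator_continuous
  exact ⟨Q, fun ν hν t ht x hx => hQ (ν, t, x) ⟨hν, ht, hx⟩⟩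

end Relaxation

section RelaxationTime
open Set
open scoped ContDiff

variable {d : ℕ} {ν a s Q : ℝ} {u : ℝ → (Fin d → ℝ) → Fin d → ℝ} {τ : ℝ → ℝ}
  {ψ : (Fin d → ℝ) → ℝ}

-- Testing the weak form of the equation against the initial datum bounds from below the time the
-- solution needs to lose three quarters of its energy.
theorem RelaxationEnhancing.half_energy_le (hRE : RelaxationEnhancing d u τ) (hν : 0 < ν)
    (hτ : 0 < τ ν) (ha : 0 < a) (hu : ∀ i, SmoothOnStrip (Ioi 0) fun t x => u t x i)
    (hu' : ∀ t > 0, IsSolenoidal (u t)) (hψ : ContDiff ℝ ∞ ψ) (pψ : PeriodicIn d ψ)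
    (hmean : ∫ x in unitCell d, ψ x = 0) (has : a < s)
    (hQ : ∀ t ∈ Ioo a (s + τ ν), ∀ x ∈ unitCell d, |advectionDiffusion ν (-u t) ψ x| ≤ Q) :
    energy d ψ / 2 ≤ Q * (1 + energy d ψ) * (s + τ ν - a) := by
  obtain ⟨φ, hφ, continuous_φ, rfl, hφ_mean⟩ :=
    exists_isSolution_meanZero hν ha hu hu' hψ pψ hmean
  have hab : a < s + τ ν := by linarith
  have hφ_Ioo (t : ℝ) : IsSolution d ν u (Ioo a t) φ := hφ.mono Ioo_subset_Ioi_self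
  have continuous_Icc (t : ℝ) :
      ContinuousOn (fun p : ℝ × (Fin d → ℝ) => φ p.1 p.2) (Icc a t ×ˢ univ) :=
    continuous_φ.mono (prod_mono Icc_subset_Ici_self subset_rfl)
  have solenoidal (t r : ℝ) (hr : r ∈ Ioo a t) : IsSolenoidal (u r) := hu' r (ha.trans hr.1)
  have energy_le (t : ℝ) (ht : a ≤ t) : energy d (φ t) ≤ energy d (φ a) :=
    (hφ_Ioo t).antitoneOn_energy (continuous_Icc t) hν.le (solenoidal t) (left_mem_Icc.2 ht)
      (right_mem_Icc.2 ht) ht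
  have hQ0 : 0 ≤ Q := by
    obtain ⟨t, ht⟩ := exists_between hab
    exact (abs_nonneg _).trans (hQ t ht 0 ⟨le_rfl, zero_le_one⟩)
  have weak_form := (hφ_Ioo (s + τ ν)).mul_sub_le_integral_mul_sub (continuous_Icc _) hab.le
    (solenoidal _) hψ pψ (C := -(Q * (1 + energy d (φ a)))) fun t ht => by
      have := (abs_le.1 (abs_integral_mul_le_mul_one_add_energy
        (hφ.contDiff (mem_Ioi.2 ht.1)).continuous (hQ t ht))).1
      nlinarith [energy_le t ht.1.le]
  have relaxed : energy d (φ (s + τ ν)) ≤ 1 / 4 * energy d (φ a) := by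
    linarith [hRE ν hν a ha.le φ hφ hφ_mean s has, energy_le s has.le]
  have young := integral_mul_le_quarter_energy_add_energy hψ.continuous
    (hφ.contDiff (mem_Ioi.2 hab)).continuous
  have self : ∫ x in unitCell d, φ a x * φ a x = energy d (φ a) := by
    simp only [energy, sq]
  linarith

theorem integral_cos_coord_eq_zero (i : Fin d) {n : ℕ} (hn : n ≠ 0) :
    ∫ x in unitCell d, Real.cos (n * (2 * π) * x i) = 0 := by
  have fderiv_sin (x : Fin d → ℝ) : fderiv ℝ (fun y : Fin d → ℝ => Real.sin (n * (2 * π) * y i)) x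
      (Pi.single i 1) = n * (2 * π) * Real.cos (n * (2 * π) * x i) := by
    rw [((hasFDerivAt_apply i x).const_mul (n * (2 * π))).sin.fderiv]
    simp [mul_comm]
  have integral_eq := integral_fderiv_single_eq_zero
    (F := fun x : Fin d → ℝ => Real.sin (n * (2 * π) * x i)) (by fun_prop) (fun x k => by
      have shift : n * (2 * π) * (x i + k i) = n * (2 * π) * x i + (n * k i : ℤ) * (2 * π) := by
        push_cast
        ring
      simp only [Pi.add_apply, shift, Real.sin_add_int_mul_two_pi]) i
  simp only [fderiv_sin, integral_const_mul] at integral_eq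
  exact (mul_eq_zero.1 integral_eq).resolve_left (by positivity)

theorem energy_cos_coord (i : Fin d) : energy d (fun x => Real.cos (2 * π * x i)) = 1 / 2 := by
  have cos_sq (x : Fin d → ℝ) : Real.cos (2 * π * x i) ^ 2
      = 1 / 2 + 1 / 2 * Real.cos ((2 : ℕ) * (2 * π) * x i) := by
    rw [Real.cos_sq, Nat.cast_ofNat, ← mul_assoc, ← mul_assoc]
    ring
  simp only [energy, cos_sq]
  rw [integral_add continuous_const.integrableOn_Icc (by fun_prop : Continuous _).integrableOn_Icc,
    integral_const_mul, integral_cos_coord_eq_zero i two_ne_zero]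
  simp [Measure.real, Real.volume_Icc_pi]

theorem exists_smooth_periodic_meanZero_energy_pos (hd : 0 < d) :
    ∃ ψ : (Fin d → ℝ) → ℝ, ContDiff ℝ ∞ ψ ∧ PeriodicIn d ψ ∧ ∫ x in unitCell d, ψ x = 0 ∧
      0 < energy d ψ := by
  obtain ⟨i⟩ : Nonempty (Fin d) := ⟨⟨0, hd⟩⟩
  refine ⟨fun x => Real.cos (2 * π * x i), by fun_prop, fun x k => ?_, ?_, ?_⟩
  · simp only [Pi.add_apply, mul_add, mul_comm (2 * π) (k i : ℝ), Real.cos_add_int_mul_two_pi]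
  · simpa only [Nat.cast_one, one_mul] using integral_cos_coord_eq_zero i one_ne_zero
  · rw [energy_cos_coord]
    exact one_half_pos

theorem RelaxationEnhancing.exists_pos_le (hRE : RelaxationEnhancing d u τ) (hd : 0 < d)
    (hτ : ∀ ν > 0, 0 < τ ν) (hu : ∀ i, SmoothOnStrip (Ioi 0) fun t x => u t x i)
    (hu' : ∀ t > 0, IsSolenoidal (u t)) :
    ∃ κ > 0, ∀ ν ∈ Ioc 0 1, κ ≤ τ ν := by
  obtain ⟨ψ, hψ, pψ, hmean, energy_pos⟩ := exists_smooth_periodic_meanZero_energy_pos hd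
  obtain ⟨Q, hQ⟩ := exists_abs_advectionDiffusion_le hψ (isCompact_Icc (a := (1 / 2 : ℝ)) (b := 2))
    fun i => (hu i).continuousOn.mono (prod_mono (fun t ht => by
      exact (by norm_num : (0 : ℝ) < 1 / 2).trans_le ht.1) subset_rfl)
  set E := energy d ψ
  have hden : 0 < 8 * (|Q| + 1) * (1 + E) := by positivity
  set κ := min (1 / 2) (E / (8 * (|Q| + 1) * (1 + E)))
  have κ_pos : 0 < κ := by positivity
  have κ_le_half : κ ≤ 1 / 2 := min_le_left _ _
  have mul_κ_le : (|Q| + 1) * (1 + E) * κ ≤ E / 8 := by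
    have := (le_div_iff₀ hden).1 (min_le_right (1 / 2) (E / (8 * (|Q| + 1) * (1 + E))))
    linarith
  refine ⟨κ, κ_pos, fun ν hν => ?_⟩
  by_contra! τ_lt
  have half_energy_le := hRE.half_energy_le hν.1 (hτ ν hν.1) (a := 1 - κ) (s := 1)
    (Q := |Q| + 1) (by linarith) hu hu' hψ pψ hmean (by linarith) fun t ht x hx =>
      (hQ ν ⟨hν.1.le, hν.2⟩ t ⟨by linarith [ht.1], by linarith [ht.2]⟩ x hx).trans
        ((le_abs_self Q).trans (by linarith))
  have : (|Q| + 1) * (1 + E) * τ ν < (|Q| + 1) * (1 + E) * κ := by gcongr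
  linarith

end RelaxationTime

section StaircaseClock
open Set Topology
open scoped ContDiff

/-- The dyadic times `1 - 2⁻ⁿ` accumulating at the final time `1`. -/
noncomputable def dyadicTime (n : ℕ) : ℝ := 1 - (1 / 2) ^ n

/-- The midpoint of the `n`-th dyadic interval `[dyadicTime n, dyadicTime (n + 1)]`: on its second
half the clock runs at constant speed. -/
noncomputable def plateauStart (n : ℕ) : ℝ := dyadicTime n + (1 / 2) ^ n / 4

theorem monotone_dyadicTime : Monotone dyadicTime := fun _ _ h =>
  sub_le_sub_left (pow_le_pow_of_le_one one_half_pos.le one_half_lt_one.le h) 1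

theorem dyadicTime_lt_one (n : ℕ) : dyadicTime n < 1 := sub_lt_self 1 (by positivity)

theorem dyadicTime_zero : dyadicTime 0 = 0 := by simp [dyadicTime]

theorem dyadicTime_nonneg (n : ℕ) : 0 ≤ dyadicTime n :=
  dyadicTime_zero.ge.trans (monotone_dyadicTime n.zero_le)

theorem dyadicTime_lt_plateauStart (n : ℕ) : dyadicTime n < plateauStart n :=
  lt_add_of_pos_right _ (by positivity)

theorem dyadicTime_succ (n : ℕ) : dyadicTime (n + 1) = plateauStart n + (1 / 2) ^ n / 4 := by
  rw [plateauStart, dyadicTime, dyadicTime, pow_succ]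
  ring

theorem plateauStart_lt_dyadicTime_succ (n : ℕ) : plateauStart n < dyadicTime (n + 1) := by
  rw [dyadicTime_succ]
  exact lt_add_of_pos_right _ (by positivity)

theorem plateauStart_lt_one (n : ℕ) : plateauStart n < 1 :=
  (plateauStart_lt_dyadicTime_succ n).trans (dyadicTime_lt_one _)

theorem monotone_plateauStart : Monotone plateauStart :=
  monotone_nat_of_le_succ fun n =>
    ((plateauStart_lt_dyadicTime_succ n).trans (dyadicTime_lt_plateauStart _)).le

theorem tendsto_dyadicTime : Tendsto dyadicTime atTop (𝓝 1) := by
  rw [← sub_zero 1]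
  exact (tendsto_pow_atTop_nhds_zero_of_lt_one one_half_pos.le one_half_lt_one).const_sub 1

theorem exists_lt_dyadicTime_succ {t : ℝ} (ht : t < 1) : ∃ n, t < dyadicTime (n + 1) :=
  ((tendsto_add_atTop_iff_nat 1).2 tendsto_dyadicTime |>.eventually (lt_mem_nhds ht)).exists

theorem exists_mem_Ico_dyadicTime {t : ℝ} (ht : t ∈ Ico 0 1) :
    ∃ n, t ∈ Ico (dyadicTime n) (dyadicTime (n + 1)) := by
  classical
  have hex := exists_lt_dyadicTime_succ ht.2
  refine ⟨Nat.find hex, ?_, Nat.find_spec hex⟩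
  cases h : Nat.find hex with
  | zero => exact dyadicTime_zero.trans_le ht.1
  | succ m => exact not_lt.1 (Nat.find_min hex (h ▸ m.lt_succ_self))

theorem natCast_le_abs_logb_one_sub {t : ℝ} (ht : t < 1) {n : ℕ} (hn : dyadicTime n ≤ t) :
    n ≤ |Real.logb 2 (1 - t)| := by
  refine le_trans ?_ (neg_le_abs _)
  rw [le_neg, Real.logb_le_iff_le_rpow one_lt_two (sub_pos.2 ht), Real.rpow_neg zero_le_two,
    Real.rpow_natCast, ← inv_pow, ← one_div]
  rw [dyadicTime] at hn
  linarith

/-- The smooth monotone staircase climbing from `c k` to `c (k + 1)` between `dyadicTime (k + 1)`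
and `plateauStart (k + 1)`. -/
noncomputable def smoothStaircase (c : ℕ → ℝ) (t : ℝ) : ℝ :=
  c 0 + ∑' k, (c (k + 1) - c k) * Real.smoothTransition
    ((t - dyadicTime (k + 1)) / (plateauStart (k + 1) - dyadicTime (k + 1)))

variable {c : ℕ → ℝ} {σ : ℝ → ℝ} {t : ℝ} {n : ℕ}

theorem smoothStaircase_eq_sum (c : ℕ → ℝ) (ht : t ≤ dyadicTime (n + 1)) :
    smoothStaircase c t = c 0 + ∑ k ∈ Finset.range n, (c (k + 1) - c k) * Real.smoothTransition
      ((t - dyadicTime (k + 1)) / (plateauStart (k + 1) - dyadicTime (k + 1))) := by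
  rw [smoothStaircase, tsum_eq_sum fun k hk => ?_]
  have hnk : n + 1 ≤ k + 1 := by simpa using hk
  rw [Real.smoothTransition.zero_of_nonpos, mul_zero]
  exact div_nonpos_of_nonpos_of_nonneg
    (sub_nonpos.2 (ht.trans (monotone_dyadicTime hnk)))
    (sub_nonneg.2 (dyadicTime_lt_plateauStart _).le)

theorem contDiffOn_smoothStaircase (c : ℕ → ℝ) : ContDiffOn ℝ ∞ (smoothStaircase c) (Iio 1) := by
  intro t ht
  obtain ⟨n, hn⟩ := exists_lt_dyadicTime_succ ht
  have contDiff_sum : ContDiff ℝ ∞ fun t : ℝ => c 0 + ∑ k ∈ Finset.range n,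
      (c (k + 1) - c k) * Real.smoothTransition
        ((t - dyadicTime (k + 1)) / (plateauStart (k + 1) - dyadicTime (k + 1))) :=
    contDiff_const.add (ContDiff.sum fun k _ => contDiff_const.mul
      (Real.smoothTransition.contDiff.comp ((contDiff_id.sub contDiff_const).div_const _)))
  refine (contDiff_sum.contDiffAt.congr_of_eventuallyEq ?_).contDiffWithinAt
  filter_upwards [gt_mem_nhds hn] with r hr using smoothStaircase_eq_sum c hr.le

theorem le_smoothStaircase (hc : Monotone c) (t : ℝ) : c 0 ≤ smoothStaircase c t :=
  le_add_of_nonneg_right (tsum_nonneg fun k =>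
    mul_nonneg (sub_nonneg.2 (hc k.le_succ)) (Real.smoothTransition.nonneg _))

theorem smoothStaircase_le (hc : Monotone c) (ht : t ≤ dyadicTime (n + 1)) :
    smoothStaircase c t ≤ c n := by
  rw [smoothStaircase_eq_sum c ht]
  calc _ ≤ c 0 + ∑ k ∈ Finset.range n, (c (k + 1) - c k) := by
        gcongr with k
        exact mul_le_of_le_one_right (sub_nonneg.2 (hc k.le_succ)) (Real.smoothTransition.le_one _)
    _ = c n := by rw [Finset.sum_range_sub, add_sub_cancel]

theorem smoothStaircase_eq (c : ℕ → ℝ) (ht : t ∈ Icc (plateauStart n) (dyadicTime (n + 1))) :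
    smoothStaircase c t = c n := by
  rw [smoothStaircase_eq_sum c ht.2]
  calc _ = c 0 + ∑ k ∈ Finset.range n, (c (k + 1) - c k) := by
        congr 1
        refine Finset.sum_congr rfl fun k hk => ?_
        have climbed : plateauStart (k + 1) ≤ t :=
          (monotone_plateauStart (Finset.mem_range.1 hk)).trans ht.1
        rw [Real.smoothTransition.one_of_one_le, mul_one]
        exact (one_le_div (sub_pos.2 (dyadicTime_lt_plateauStart _))).2 (by gcongr)
    _ = c n := by rw [Finset.sum_range_sub, add_sub_cancel]

/-- A smooth clock `σ` on `(-∞, 1)`, starting from `σ 0 = 0`, whose speed has reached the constant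
`c n` on the second half of the `n`-th dyadic interval and has not exceeded it before. -/
structure IsStaircaseClock (c : ℕ → ℝ) (σ : ℝ → ℝ) : Prop where
  map_zero : σ 0 = 0
  contDiffOn : ContDiffOn ℝ ∞ σ (Iio 1)
  le_deriv : ∀ t < 1, c 0 ≤ deriv σ t
  deriv_le : ∀ n, ∀ t ≤ dyadicTime (n + 1), deriv σ t ≤ c n
  deriv_eq : ∀ n, ∀ t ∈ Icc (plateauStart n) (dyadicTime (n + 1)), deriv σ t = c n

theorem exists_isStaircaseClock (hc : Monotone c) : ∃ σ, IsStaircaseClock c σ := by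
  have continuousOn := (contDiffOn_smoothStaircase c).continuousOn
  have hasDerivAt_clock (t : ℝ) (ht : t < 1) :
      HasDerivAt (fun t => ∫ r in (0 : ℝ)..t, smoothStaircase c r) (smoothStaircase c t) t :=
    intervalIntegral.integral_hasDerivAt_right
      (continuousOn.mono fun r hr => hr.2.trans_lt (max_lt one_pos ht)).intervalIntegrable
      (continuousOn.stronglyMeasurableAtFilter isOpen_Iio t ht)
      (continuousOn.continuousAt (Iio_mem_nhds ht))
  refine ⟨fun t => ∫ r in (0 : ℝ)..t, smoothStaircase c r, intervalIntegral.integral_same, ?_,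
    fun t ht => ?_, fun n t ht => ?_, fun n t ht => ?_⟩
  · rw [contDiffOn_infty_iff_deriv_of_isOpen isOpen_Iio]
    exact ⟨fun t ht => (hasDerivAt_clock t ht).differentiableAt.differentiableWithinAt,
      (contDiffOn_smoothStaircase c).congr fun t ht => (hasDerivAt_clock t ht).deriv⟩
  · exact (le_smoothStaircase hc t).trans_eq (hasDerivAt_clock t ht).deriv.symm
  · exact (hasDerivAt_clock t (ht.trans_lt (dyadicTime_lt_one _))).deriv.trans_le
      (smoothStaircase_le hc ht)
  · exact (hasDerivAt_clock t (ht.2.trans_lt (dyadicTime_lt_one _))).deriv.trans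
      (smoothStaircase_eq c ht)

theorem tendsto_atTop_of_eventually_add_le {f : ℕ → ℝ} {κ : ℝ} (hκ : 0 < κ)
    (h : ∀ᶠ n in atTop, f n + κ ≤ f (n + 1)) : Tendsto f atTop atTop := by
  obtain ⟨N, hN⟩ := eventually_atTop.1 h
  have linear_growth (k : ℕ) : f N + k * κ ≤ f (k + N) := by
    induction k with
    | zero => simp
    | succ k ih =>
      have := hN (k + N) (Nat.le_add_left N k)
      rw [add_right_comm]
      push_cast
      linarith
  exact (tendsto_add_atTop_iff_nat N).1 (tendsto_atTop_mono linear_growth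
    (tendsto_atTop_add_const_left _ _ (tendsto_natCast_atTop_atTop.atTop_mul_const hκ)))

namespace IsStaircaseClock

theorem speed_pos (h : IsStaircaseClock c σ) (hc : 0 < c 0) (n : ℕ) : 0 < c n :=
  (hc.trans_le (h.le_deriv _ (plateauStart_lt_one n))).trans_eq
    (h.deriv_eq n _ ⟨le_rfl, (plateauStart_lt_dyadicTime_succ n).le⟩)

theorem hasDerivAt (h : IsStaircaseClock c σ) (ht : t < 1) : HasDerivAt σ (deriv σ t) t :=
  ((h.contDiffOn.contDiffAt (Iio_mem_nhds ht)).differentiableAt (by simp)).hasDerivAt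

theorem strictMonoOn (h : IsStaircaseClock c σ) (hc : 0 < c 0) : StrictMonoOn σ (Iio 1) :=
  strictMonoOn_of_deriv_pos (convex_Iio 1) h.contDiffOn.continuousOn fun t ht =>
    hc.trans_le (h.le_deriv t (mem_Iio.1 (interior_subset ht)))

theorem pos (h : IsStaircaseClock c σ) (hc : 0 < c 0) (ht : t ∈ Ioo 0 1) : 0 < σ t :=
  h.map_zero.symm.trans_lt (h.strictMonoOn hc (mem_Iio.2 one_pos) ht.2 ht.1)

theorem eq_affine (h : IsStaircaseClock c σ)
    (ht : t ∈ Icc (plateauStart n) (dyadicTime (n + 1))) :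
    σ t = σ (plateauStart n) + c n * (t - plateauStart n) := by
  have hasDerivAt_sub (r : ℝ) (hr : r ∈ Icc (plateauStart n) (dyadicTime (n + 1))) :
      HasDerivAt (fun r => σ r - c n * (r - plateauStart n)) 0 r := by
    simpa [h.deriv_eq n r hr] using (h.hasDerivAt (hr.2.trans_lt (dyadicTime_lt_one _))).fun_sub
      (((hasDerivAt_id r).sub_const (plateauStart n)).const_mul (c n))
  have const := constant_of_has_deriv_right_zero
    (fun r hr => (hasDerivAt_sub r hr).continuousAt.continuousWithinAt)
    (fun r hr => (hasDerivAt_sub r (Ico_subset_Icc_self hr)).hasDerivWithinAt) t ht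
  simp only [sub_self, mul_zero, sub_zero] at const
  linarith

theorem add_le_dyadicTime_succ (h : IsStaircaseClock c σ) (hc : 0 < c 0) (n : ℕ) :
    σ (dyadicTime n) + c n * (1 / 2) ^ n / 4 ≤ σ (dyadicTime (n + 1)) := by
  have advance := h.eq_affine (right_mem_Icc.2 (plateauStart_lt_dyadicTime_succ n).le)
  rw [dyadicTime_succ n, add_sub_cancel_left, ← dyadicTime_succ] at advance
  have := h.strictMonoOn hc (dyadicTime_lt_one n) (plateauStart_lt_one n)
    (dyadicTime_lt_plateauStart n)
  linarith

theorem bijOn (h : IsStaircaseClock c σ) (hc : 0 < c 0) {κ : ℝ} (hκ : 0 < κ)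
    (hκc : ∀ᶠ n in atTop, κ ≤ c n * (1 / 2) ^ n / 4) : BijOn σ (Ico 0 1) (Ici 0) := by
  have zero_mem : (0 : ℝ) ∈ Iio 1 := mem_Iio.2 one_pos
  refine ⟨fun t ht => ?_, (h.strictMonoOn hc).injOn.mono fun t ht => ht.2, fun y hy => ?_⟩
  · exact h.map_zero.symm.trans_le ((h.strictMonoOn hc).monotoneOn zero_mem ht.2 ht.1)
  · have unbounded : Tendsto (fun n => σ (dyadicTime n)) atTop atTop :=
      tendsto_atTop_of_eventually_add_le hκ (hκc.mono fun n hn => by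
        linarith [h.add_le_dyadicTime_succ hc n])
    obtain ⟨n, hn⟩ := (unbounded.eventually_ge_atTop y).exists
    obtain ⟨t, ht, rfl⟩ := intermediate_value_Icc (dyadicTime_nonneg n)
      (h.contDiffOn.continuousOn.mono fun t ht => ht.2.trans_lt (dyadicTime_lt_one n))
      ⟨h.map_zero.trans_le hy, hn⟩
    exact ⟨t, ⟨ht.1, ht.2.trans_lt (dyadicTime_lt_one n)⟩, rfl⟩

end IsStaircaseClock

end StaircaseClock

section AcceleratedFlow
open Set Topology
open scoped ContDiff

/-- The drift `u_σ(t, x) = σ'(t) u(σ(t), x)` obtained from `u` by running the clock `σ`. -/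
noncomputable def acceleratedFlow {d : ℕ} (σ : ℝ → ℝ) (u : ℝ → (Fin d → ℝ) → Fin d → ℝ) :
    ℝ → (Fin d → ℝ) → Fin d → ℝ :=
  fun t x i => deriv σ t * u (σ t) x i

variable {d : ℕ} {ν s t : ℝ} {u v : ℝ → (Fin d → ℝ) → Fin d → ℝ} {τ σ : ℝ → ℝ} {c : ℕ → ℝ} {n : ℕ}
  {θ : ℝ → (Fin d → ℝ) → ℝ}

theorem IsSolenoidal.acceleratedFlow (hu : IsSolenoidal (u (σ t))) :
    IsSolenoidal (acceleratedFlow σ u t) where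
  contDiff i := contDiff_const.mul (hu.contDiff i)
  periodicIn i x k := congrArg (deriv σ t * ·) (hu.periodicIn i x k)
  div_eq_zero x := by
    have pd_eq (i : Fin d) : pd d i (fun y => deriv σ t * u (σ t) y i) x
        = deriv σ t * pd d i (fun y => u (σ t) y i) x := by
      rw [pd, fderiv_const_mul (((hu.contDiff i).differentiable (by simp)) x)]
      rfl
    simp only [_root_.acceleratedFlow, pd_eq, ← Finset.mul_sum, hu.div_eq_zero, mul_zero]

theorem IsSolution.comp_affine {I J : Set ℝ} (h : IsSolution d ν v I θ) (hI : IsOpen I) {a b c : ℝ}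
    (hc : c ≠ 0) (hJ : MapsTo (fun r => a + (r - b) / c) J I)
    (hv : ∀ r ∈ J, v (a + (r - b) / c) = fun x => c • u r x) :
    IsSolution d (ν / c) u J fun r => θ (a + (r - b) / c) where
  smoothOnStrip := ContDiffOn.comp (g := fun p : ℝ × (Fin d → ℝ) => θ p.1 p.2) h.smoothOnStrip
    (f := fun p : ℝ × (Fin d → ℝ) => (a + (p.1 - b) / c, p.2))
    (ContDiff.contDiffOn (by fun_prop)) fun p hp => ⟨hJ hp.1, trivial⟩
  periodicIn r hr := h.periodicIn _ (hJ hr)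
  deriv_eq r hr x := by
    have affine : HasDerivAt (fun r => a + (r - b) / c) (1 / c) r :=
      (((hasDerivAt_id r).sub_const b).div_const c).const_add a
    have chain : HasDerivAt (fun r => θ (a + (r - b) / c) x) _ r :=
      HasDerivAt.comp (h₂ := fun r => θ r x) r (h.hasDerivAt hI (hJ hr) x) affine
    rw [chain.deriv, hv r hr, ← mul_div_cancel₀ ν hc, advectionDiffusion_const_smul,
      mul_div_cancel₀ ν hc]
    field_simp

theorem isSolution_Ioo_of_derivWithin (hθ : SmoothOnStrip (Ico s t) θ)
    (hper : ∀ r ∈ Ico s t, PeriodicIn d (θ r))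
    (heq : ∀ r ∈ Ico s t, ∀ x, derivWithin (fun q => θ q x) (Ico s t) r - ν * lap d (θ r) x
      + ∑ i, v r x i * pd d i (θ r) x = 0) :
    IsSolution d ν v (Ioo s t) θ where
  smoothOnStrip := hθ.mono Ioo_subset_Ico_self
  periodicIn r hr := hper r (Ioo_subset_Ico_self hr)
  deriv_eq r hr x := by
    have := heq r (Ioo_subset_Ico_self hr) x
    rw [derivWithin_of_mem_nhds (Ico_mem_nhds hr.1 hr.2)] at this
    rw [advectionDiffusion]
    linarith

theorem tendsto_nhdsLT_zero_of_antitoneOn {F : ℝ → ℝ} {x : ℕ → ℝ} {a b r : ℝ} (hF0 : ∀ t, 0 ≤ F t)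
    (hF : AntitoneOn F (Ioo a b)) (hx : ∀ᶠ n in atTop, x n ∈ Ioo a b) (hr : r < 1)
    (hxr : ∀ᶠ n in atTop, F (x (n + 1)) ≤ r * F (x n)) : Tendsto F (𝓝[<] b) (𝓝 0) := by
  have summable : Summable fun n => F (x n) :=
    summable_of_ratio_norm_eventually_le hr (hxr.mono fun n hn => by
      rwa [Real.norm_of_nonneg (hF0 _), Real.norm_of_nonneg (hF0 _)])
  rw [tendsto_order]
  refine ⟨fun y hy => Eventually.of_forall fun t => hy.trans_le (hF0 t), fun y hy => ?_⟩
  obtain ⟨n, hn, hny⟩ :=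
    (hx.and (summable.tendsto_atTop_zero.eventually (gt_mem_nhds hy))).exists
  filter_upwards [Ioo_mem_nhdsLT hn.2] with t ht
  exact (hF hn ⟨hn.1.trans ht.1, ht.2⟩ ht.1.le).trans_lt hny

theorem IsSolution.antitoneOn_energy_of_isOpen {I : Set ℝ} (h : IsSolution d ν v I θ)
    (hI : IsOpen I) (hI' : Convex ℝ I) (hν : 0 ≤ ν) (hv : ∀ t ∈ I, IsSolenoidal (v t)) :
    AntitoneOn (fun t => energy d (θ t)) I := by
  refine antitoneOn_of_deriv_nonpos hI'
    (fun t ht => (h.hasDerivAt_energy hI ht).continuousAt.continuousWithinAt) ?_ ?_ <;>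
    rw [hI.interior_eq]
  · exact fun t ht => (h.hasDerivAt_energy hI ht).differentiableAt.differentiableWithinAt
  · exact fun t ht => h.deriv_energy_nonpos hI ht hν (hv t ht)

-- Where the clock runs at constant speed `c`, slowing time down by `c` turns the equation into the
-- one with drift `u` and viscosity `ν / c`.
theorem RelaxationEnhancing.energy_add_div_le (hRE : RelaxationEnhancing d u τ) (hν : 0 < ν)
    (hτ : ∀ ν > 0, 0 < τ ν) (hu : ∀ i, SmoothOnStrip (Ioi 0) fun t x => u t x i)
    (hu' : ∀ t > 0, IsSolenoidal (u t)) {a b c r q : ℝ} (hc : 0 < c) (hr : 0 ≤ r)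
    (hθ : IsSolution d ν v (Ioo a b) θ)
    (hv : ∀ t ∈ Ioo a b, v t = fun x => c • u (r + c * (t - a)) x)
    (hmean : ∀ t ∈ Ioo a b, ∫ x in unitCell d, θ t x = 0) (haq : a < q)
    (hqb : q + τ (ν / c) / c < b) :
    energy d (θ (q + τ (ν / c) / c)) ≤ 1 / 4 * energy d (θ q) := by
  have mapsTo : MapsTo (fun t => a + (t - r) / c) (Ioo r (r + c * (b - a))) (Ioo a b) := by
    refine fun t ht => ⟨lt_add_of_pos_right _ (div_pos (sub_pos.2 ht.1) hc), ?_⟩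
    rw [← lt_sub_iff_add_lt', div_lt_iff₀' hc]
    linarith [ht.2]
  have slowed := hθ.comp_affine (u := u) isOpen_Ioo hc.ne' mapsTo fun t ht => by
    rw [hv _ (mapsTo ht), add_sub_cancel_left, mul_div_cancel₀ _ hc.ne', add_sub_cancel]
  have relaxed := hRE.energy_add_le (s := r + c * (q - a)) (div_pos hν hc)
    (hτ _ (div_pos hν hc)) hr hu hu' slowed (fun t ht => hmean _ (mapsTo ht))
    (lt_add_of_pos_right _ (mul_pos hc (sub_pos.2 haq))) (by
      rw [← lt_sub_iff_add_lt', div_lt_iff₀' hc] at hqb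
      linarith)
  have start_eq : a + (r + c * (q - a) - r) / c = q := by
    field_simp
    ring
  have end_eq : a + (r + c * (q - a) + τ (ν / c) - r) / c = q + τ (ν / c) / c := by
    field_simp
    ring
  rwa [start_eq, end_eq] at relaxed

theorem RelaxationEnhancing.energy_dyadicTime_succ_le (hRE : RelaxationEnhancing d u τ)
    (hν : 0 < ν) (hτ : ∀ ν > 0, 0 < τ ν) (hu : ∀ i, SmoothOnStrip (Ioi 0) fun t x => u t x i)
    (hu' : ∀ t > 0, IsSolenoidal (u t)) (hσ : IsStaircaseClock c σ) (hc : 0 < c 0)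
    (hθ : IsSolution d ν (acceleratedFlow σ u) (Ioo s 1) θ)
    (hmean : ∀ t ∈ Ioo s 1, ∫ x in unitCell d, θ t x = 0)
    (hanti : AntitoneOn (fun t => energy d (θ t)) (Ioo s 1)) (hsn : s < dyadicTime n)
    (hτn : τ (ν / c n) < c n * (1 / 2) ^ n / 8) :
    energy d (θ (dyadicTime (n + 1))) ≤ 1 / 4 * energy d (θ (dyadicTime n)) := by
  have cn_pos := hσ.speed_pos hc n
  have hp := dyadicTime_lt_plateauStart n
  have hn1 := dyadicTime_lt_one (n + 1)
  have length_eq := dyadicTime_succ n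
  have plateau_subset : Ioo (plateauStart n) (dyadicTime (n + 1)) ⊆ Ioo s 1 :=
    Ioo_subset_Ioo (by linarith) hn1.le
  have delay_pos : 0 < τ (ν / c n) / c n := div_pos (hτ _ (div_pos hν cn_pos)) cn_pos
  have delay_lt : τ (ν / c n) / c n < (1 / 2) ^ n / 8 := by
    rw [div_lt_iff₀' cn_pos, ← mul_div_assoc]
    exact hτn
  obtain ⟨q, hq⟩ : ∃ q, q = plateauStart n + (1 / 2) ^ n / 16 := ⟨_, rfl⟩
  have relaxed := hRE.energy_add_div_le hν hτ hu hu' cn_pos (q := q)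
    (hσ.pos hc ⟨(dyadicTime_nonneg n).trans_lt hp, plateauStart_lt_one n⟩).le
    (hθ.mono plateau_subset) (fun t ht => by
      unfold acceleratedFlow
      rw [hσ.deriv_eq n t (Ioo_subset_Icc_self ht), hσ.eq_affine (Ioo_subset_Icc_self ht)]
      rfl)
    (fun t ht => hmean t (plateau_subset ht)) (by linarith) (by linarith)
  calc energy d (θ (dyadicTime (n + 1))) ≤ energy d (θ (q + τ (ν / c n) / c n)) :=
        hanti ⟨by linarith, by linarith⟩ ⟨by linarith, hn1⟩ (by linarith)
    _ ≤ 1 / 4 * energy d (θ q) := relaxed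
    _ ≤ 1 / 4 * energy d (θ (dyadicTime n)) := by
        gcongr
        exact hanti ⟨hsn, by linarith⟩ ⟨by linarith, by linarith⟩ (by linarith)

theorem RelaxationEnhancing.tendsto_L2norm (hRE : RelaxationEnhancing d u τ)
    (hτ : ∀ ν > 0, 0 < τ ν) (hu : ∀ i, SmoothOnStrip (Ioi 0) fun t x => u t x i)
    (hu' : ∀ t > 0, IsSolenoidal (u t)) (hσ : IsStaircaseClock c σ) (hc : 0 < c 0) (hν : 0 < ν)
    (hτc : ∀ᶠ n in atTop, τ (ν / c n) < c n * (1 / 2) ^ n / 8) (hs : s ∈ Ico 0 1)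
    (hθ : IsSolution d ν (acceleratedFlow σ u) (Ioo s 1) θ)
    (hmean : ∀ t ∈ Ioo s 1, ∫ x in unitCell d, θ t x = 0) :
    Tendsto (fun t => L2norm d (θ t)) (𝓝[<] 1) (𝓝 0) := by
  have hanti := hθ.antitoneOn_energy_of_isOpen isOpen_Ioo (convex_Ioo s 1) hν.le fun t ht =>
    (hu' _ (hσ.pos hc ⟨hs.1.trans_lt ht.1, ht.2⟩)).acceleratedFlow
  have late : ∀ᶠ n in atTop, s < dyadicTime n :=
    tendsto_dyadicTime.eventually (lt_mem_nhds hs.2)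
  have energy_tendsto : Tendsto (fun t => energy d (θ t)) (𝓝[<] 1) (𝓝 0) :=
    tendsto_nhdsLT_zero_of_antitoneOn (fun t => energy_nonneg (θ t)) hanti
      (late.mono fun n hn => ⟨hn, dyadicTime_lt_one n⟩) (by norm_num : (1 / 4 : ℝ) < 1)
      ((late.and hτc).mono fun n hn =>
        hRE.energy_dyadicTime_succ_le hν hτ hu hu' hσ hc hθ hmean hanti hn.1 hn.2)
  simpa only [L2norm_eq_sqrt_energy, Real.sqrt_zero] using energy_tendsto.sqrt

end AcceleratedFlow

section PlateauSpeed
open Set Topology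

/-- The properties used of an inverse `g` of `a ↦ sup_{0 < b ≤ a} b * τ b`: it is positive and
monotone, and `b * τ b ≤ y` for all `b` up to `g y`. -/
structure IsRelaxationInverse (τ g : ℝ → ℝ) : Prop where
  pos : ∀ y > 0, 0 < g y
  monotoneOn : MonotoneOn g (Ioi 0)
  mul_le : ∀ y > 0, ∀ b ∈ Ioc 0 (g y), b * τ b ≤ y
  exists_le_one : ∃ y > 0, g y ≤ 1

theorem isRelaxationInverse_of_sSup {τ g : ℝ → ℝ}
    (hmono : StrictMonoOn (fun a => sSup ((fun b => b * τ b) '' Ioc 0 a)) (Ioi 0))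
    (hmaps : MapsTo (fun a => sSup ((fun b => b * τ b) '' Ioc 0 a)) (Ioi 0) (Ioi 0))
    (hg : ∀ y > 0, 0 < g y) (hleft : ∀ a > 0, g (sSup ((fun b => b * τ b) '' Ioc 0 a)) = a)
    (hright : ∀ y > 0, sSup ((fun b => b * τ b) '' Ioc 0 (g y)) = y) :
    IsRelaxationInverse τ g where
  pos := hg
  monotoneOn x hx y hy hxy := by
    refine (hmono.le_iff_le (hg x hx) (hg y hy)).1 ?_
    rwa [hright x hx, hright y hy]
  mul_le y hy b hb := by
    -- The supremum of an unbounded set is `0` by convention, which positivity excludes.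
    have bddAbove : BddAbove ((fun b => b * τ b) '' Ioc 0 (g y)) := by
      by_contra h
      exact (hmaps (hg y hy)).ne' (Real.sSup_of_not_bddAbove h)
    exact (le_csSup bddAbove (mem_image_of_mem _ hb)).trans_eq (hright y hy)
  exists_le_one := ⟨_, hmaps (mem_Ioi.2 one_pos), (hleft 1 one_pos).le⟩

/-- The level `2⁻ⁿ / (4 (n + 1))` at which the inverse of the relaxation function is sampled on the
`n`-th dyadic interval. -/
noncomputable def dyadicLevel (n : ℕ) : ℝ := (1 / 2) ^ n / (4 * (n + 1))

theorem dyadicLevel_pos (n : ℕ) : 0 < dyadicLevel n := by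
  unfold dyadicLevel
  positivity

theorem one_half_pow_eq_mul_dyadicLevel (n : ℕ) : (1 / 2) ^ n = 4 * (n + 1) * dyadicLevel n := by
  unfold dyadicLevel
  field_simp

theorem antitone_dyadicLevel : Antitone dyadicLevel := fun m n h =>
  div_le_div₀ (by positivity)
    (pow_le_pow_of_le_one one_half_pos.le one_half_lt_one.le h) (by positivity) (by gcongr)

theorem tendsto_dyadicLevel : Tendsto dyadicLevel atTop (𝓝 0) :=
  squeeze_zero (fun n => (dyadicLevel_pos n).le)
    (fun n => div_le_self (by positivity) (by linarith [n.cast_nonneg (α := ℝ)]))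
    (tendsto_pow_atTop_nhds_zero_of_lt_one one_half_pos.le one_half_lt_one)

/-- The speed of the accelerating clock on the `n`-th plateau, where `g` inverts the relaxation
function. -/
noncomputable def plateauSpeed (g : ℝ → ℝ) (n : ℕ) : ℝ := 2 * (n + 1) / g (dyadicLevel n)

theorem plateauSpeed_mul_pow (g : ℝ → ℝ) (n : ℕ) :
    plateauSpeed g n * (1 / 2) ^ n = 8 * (n + 1) ^ 2 * (dyadicLevel n / g (dyadicLevel n)) := by
  rw [one_half_pow_eq_mul_dyadicLevel, plateauSpeed]
  ring

namespace IsRelaxationInverse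

variable {τ g : ℝ → ℝ}

theorem plateauSpeed_pos (h : IsRelaxationInverse τ g) (n : ℕ) : 0 < plateauSpeed g n :=
  div_pos (by positivity) (h.pos _ (dyadicLevel_pos n))

theorem monotone_plateauSpeed (h : IsRelaxationInverse τ g) : Monotone (plateauSpeed g) :=
  fun m n hmn => div_le_div₀ (by positivity) (by gcongr) (h.pos _ (dyadicLevel_pos n))
    (h.monotoneOn (dyadicLevel_pos n) (dyadicLevel_pos m) (antitone_dyadicLevel hmn))

theorem plateauSpeed_le (h : IsRelaxationInverse τ g) {n : ℕ} {L r : ℝ} (hL : n ≤ L) (hr : 0 < r)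
    (hrn : r ≤ (1 / 2) ^ n) : plateauSpeed g n ≤ 2 * (L + 1) / g (r / (4 * (L + 1))) := by
  have hL1 : 0 < L + 1 := by linarith [n.cast_nonneg (α := ℝ)]
  have hy : 0 < r / (4 * (L + 1)) := by positivity
  have level_le : r / (4 * (L + 1)) ≤ dyadicLevel n :=
    div_le_div₀ (by positivity) hrn (by positivity) (by gcongr)
  exact div_le_div₀ (by positivity) (by gcongr) (h.pos _ hy)
    (h.monotoneOn hy (dyadicLevel_pos n) level_le)

theorem eventually_le_plateauSpeed_mul (h : IsRelaxationInverse τ g) {κ : ℝ}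
    (hκ : ∀ ν ∈ Ioc 0 1, κ ≤ τ ν) : ∀ᶠ n in atTop, κ ≤ plateauSpeed g n * (1 / 2) ^ n / 4 := by
  obtain ⟨y, hy, hgy⟩ := h.exists_le_one
  filter_upwards [tendsto_dyadicLevel.eventually (ge_mem_nhds hy)] with n hn
  have level_pos := dyadicLevel_pos n
  have inv_pos := h.pos _ level_pos
  have inv_le_one : g (dyadicLevel n) ≤ 1 := (h.monotoneOn level_pos hy hn).trans hgy
  calc κ ≤ τ (g (dyadicLevel n)) := hκ _ ⟨inv_pos, inv_le_one⟩
    _ ≤ dyadicLevel n / g (dyadicLevel n) :=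
        (le_div_iff₀' inv_pos).2 (h.mul_le _ level_pos _ ⟨inv_pos, le_rfl⟩)
    _ ≤ 2 * (n + 1) ^ 2 * (dyadicLevel n / g (dyadicLevel n)) :=
        le_mul_of_one_le_left (by positivity) (by nlinarith [n.cast_nonneg (α := ℝ)])
    _ = plateauSpeed g n * (1 / 2) ^ n / 4 := by
        rw [plateauSpeed_mul_pow]
        ring

theorem eventually_relaxationTime_lt (h : IsRelaxationInverse τ g) {ν : ℝ} (hν : 0 < ν) :
    ∀ᶠ n in atTop, τ (ν / plateauSpeed g n) < plateauSpeed g n * (1 / 2) ^ n / 8 := by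
  filter_upwards [tendsto_natCast_atTop_atTop.eventually_ge_atTop ν,
    tendsto_natCast_atTop_atTop.eventually_ge_atTop (2 / ν)] with n hνn hνn'
  have level_pos := dyadicLevel_pos n
  have inv_pos := h.pos _ level_pos
  have speed_pos := h.plateauSpeed_pos n
  have viscosity_pos : 0 < ν / plateauSpeed g n := div_pos hν speed_pos
  have two_lt : 2 < ν * (n + 1) := by
    rw [div_le_iff₀' hν] at hνn'
    linarith
  have viscosity_le : ν / plateauSpeed g n ≤ g (dyadicLevel n) := by
    rw [plateauSpeed, div_div_eq_mul_div, div_le_iff₀ (by positivity), mul_comm]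
    gcongr
    linarith
  have mul_τ_le := h.mul_le _ level_pos _ ⟨viscosity_pos, viscosity_le⟩
  refine lt_of_mul_lt_mul_left (mul_τ_le.trans_lt ?_) viscosity_pos.le
  calc dyadicLevel n < ν * (n + 1) / 2 * dyadicLevel n :=
        lt_mul_of_one_lt_left level_pos (by linarith)
    _ = ν * (1 / 2) ^ n / 8 := by
        rw [one_half_pow_eq_mul_dyadicLevel]
        ring
    _ = ν / plateauSpeed g n * (plateauSpeed g n * (1 / 2) ^ n / 8) := by
        field_simp

end IsRelaxationInverse

end PlateauSpeed

/-- The accelerating diffeomorphism can be chosen with a quantitative derivative bound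
in terms of the inverse of `f a = sup_{0 < b ≤ a} b * τ b`. -/
theorem accelerated_total_dissipation_general_bound
    (d : ℕ) (hd : 1 ≤ d)
    (u : ℝ → (Fin d → ℝ) → (Fin d → ℝ))
    (hu_smooth : ContDiffOn ℝ (⊤ : ℕ∞) (fun p : ℝ × (Fin d → ℝ) => u p.1 p.2)
      (Set.Ici (0:ℝ) ×ˢ Set.univ))
    (hu_per : ∀ t ∈ Set.Ici (0:ℝ), ∀ i : Fin d, PeriodicIn d (fun x => u t x i))
    (hu_bdd : ∀ T > (0:ℝ), ∃ M : ℝ, ∀ t ∈ Set.Icc (0:ℝ) T, ∀ x, ‖u t x‖ ≤ M)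
    (hu_div : ∀ t ∈ Set.Ici (0:ℝ), ∀ x, ∑ i, pd d i (fun y => u t y i) x = 0)
    (τ : ℝ → ℝ) (hτ_pos : ∀ ν > (0:ℝ), 0 < τ ν)
    (hτ_lim : Tendsto (fun ν => ν * τ ν) (nhdsWithin 0 (Set.Ioi 0)) (nhds 0))
    (hRE : ∀ ν > (0:ℝ), ∀ s ≥ (0:ℝ), ∀ θ : ℝ → (Fin d → ℝ) → ℝ,
      ContDiffOn ℝ (⊤ : ℕ∞) (fun p : ℝ × (Fin d → ℝ) => θ p.1 p.2) (Set.Ici s ×ˢ Set.univ) →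
      (∀ t ∈ Set.Ici s, PeriodicIn d (θ t)) →
      (∀ t ∈ Set.Ici s, ∫ x in Set.Icc (0 : Fin d → ℝ) 1, θ t x = 0) →
      (∀ t ∈ Set.Ici s, ∀ x,
        derivWithin (fun r => θ r x) (Set.Ici s) t - ν * lap d (θ t) x
          + ∑ i, u t x i * pd d i (θ t) x = 0) →
      L2norm d (θ (s + τ ν)) ≤ (1/2) * L2norm d (θ s))
    (finv : ℝ → ℝ)
    (hf_mono : StrictMonoOn (fun a => sSup ((fun b => b * τ b) '' Set.Ioc 0 a)) (Set.Ioi 0))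
    (hf_cont : ContinuousOn (fun a => sSup ((fun b => b * τ b) '' Set.Ioc 0 a)) (Set.Ioi 0))
    (hf_bij : Set.BijOn (fun a => sSup ((fun b => b * τ b) '' Set.Ioc 0 a))
      (Set.Ioi 0) (Set.Ioi 0))
    (hfinv_pos : ∀ c > (0:ℝ), 0 < finv c)
    (hfinv_left : ∀ a > (0:ℝ), finv (sSup ((fun b => b * τ b) '' Set.Ioc 0 a)) = a)
    (hfinv_right : ∀ c > (0:ℝ), sSup ((fun b => b * τ b) '' Set.Ioc 0 (finv c)) = c) :
    ∃ σ : ℝ → ℝ,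
      ContDiffOn ℝ (⊤ : ℕ∞) σ (Set.Ico 0 1) ∧
      StrictMonoOn σ (Set.Ico 0 1) ∧
      Set.BijOn σ (Set.Ico 0 1) (Set.Ici 0) ∧
      (∀ t ∈ Set.Ico (0:ℝ) 1, deriv σ t ≤
        2 * (|Real.logb 2 (1 - t)| + 1) /
          finv ((1 - t) / (4 * (|Real.logb 2 (1 - t)| + 1)))) ∧
      ∀ ν > (0:ℝ), ∀ s ∈ Set.Ico (0:ℝ) 1, ∀ θ : ℝ → (Fin d → ℝ) → ℝ,
        ContDiffOn ℝ (⊤ : ℕ∞) (fun p : ℝ × (Fin d → ℝ) => θ p.1 p.2) (Set.Ico s 1 ×ˢ Set.univ) →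
        (∀ t ∈ Set.Ico s 1, PeriodicIn d (θ t)) →
        (∀ t ∈ Set.Ico s 1, ∫ x in Set.Icc (0 : Fin d → ℝ) 1, θ t x = 0) →
        (∀ t ∈ Set.Ico s 1, ∀ x,
          derivWithin (fun r => θ r x) (Set.Ico s 1) t - ν * lap d (θ t) x
            + ∑ i, (deriv σ t * u (σ t) x i) * pd d i (θ t) x = 0) →
        Tendsto (fun t => L2norm d (θ t)) (nhdsWithin 1 (Set.Iio 1)) (nhds 0) := by
  have hinv : IsRelaxationInverse τ finv :=
    isRelaxationInverse_of_sSup hf_mono hf_bij.mapsTo hfinv_pos hfinv_left hfinv_right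
  have hu (i : Fin d) : SmoothOnStrip (Set.Ioi 0) fun t x => u t x i :=
    (contDiffOn_pi.1 hu_smooth i).mono (Set.prod_mono Set.Ioi_subset_Ici_self subset_rfl)
  have hu' (t : ℝ) (ht : t > 0) : IsSolenoidal (u t) :=
    ⟨fun i => (hu i).contDiff_slice ht, hu_per t ht.le, hu_div t ht.le⟩
  have hRE' : RelaxationEnhancing d u τ := relaxationEnhancing_of_L2norm_le hRE
  obtain ⟨κ, hκ, hκτ⟩ := hRE'.exists_pos_le hd hτ_pos hu hu'
  obtain ⟨σ, hσ⟩ := exists_isStaircaseClock hinv.monotone_plateauSpeed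
  have hc : 0 < plateauSpeed finv 0 := hinv.plateauSpeed_pos 0
  have hIco : Set.Ico (0 : ℝ) 1 ⊆ Set.Iio 1 := fun t ht => ht.2
  refine ⟨σ, hσ.contDiffOn.mono hIco, (hσ.strictMonoOn hc).mono hIco,
    hσ.bijOn hc hκ (hinv.eventually_le_plateauSpeed_mul hκτ), fun t ht => ?_,
    fun ν hν s hs θ hθ hper hmean heq => ?_⟩
  · obtain ⟨n, hn⟩ := exists_mem_Ico_dyadicTime ht
    exact (hσ.deriv_le n t hn.2.le).trans
      (hinv.plateauSpeed_le (natCast_le_abs_logb_one_sub ht.2 hn.1) (sub_pos.2 ht.2)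
        (sub_le_comm.1 hn.1))
  · exact hRE'.tendsto_L2norm hτ_pos hu hu' hσ hc hν (hinv.eventually_relaxationTime_lt hν) hs
      (isSolution_Ioo_of_derivWithin hθ hper heq)
      fun t ht => hmean t (Set.Ioo_subset_Ico_self ht)
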